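/- There exist δ > 0, A₀ > 0 and C > 0 with the following property: let (n,u,φ) be a global classical solution of the 1D Euler–Poisson system (EPw) conserving the energy E, with sup_{t∈ℝ} ‖u(t)‖_{L²} < ∞ and sup_{t∈ℝ} (‖n(t)‖_{L²} + ‖n(t)‖_{L^∞}) ≤ δ, and let y ∈ C¹(ℝ,ℝ) satisfy sup_{t∈ℝ} |y'(t)| < k/√(1+k). Then for every A ≥ A₀, ∫_ℝ ∫_ℝ e^{−2|x−y(t)|/A} ( n(t,x)² + u(t,x)² ) dx dt ≤ C A (sup_t ‖u(t)‖_{L²})(sup_t ‖n(t)‖_{L²}). -/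

import Mathlib

open MeasureTheory Real
open scoped ENNReal

noncomputable section

def sech (x : ℝ) : ℝ := (Real.cosh x)⁻¹

def qfun (x : ℝ) : ℝ := Real.exp x - 1

structure IsPressure (p : ℝ → ℝ) : Prop where
  smooth : ContDiffOn ℝ (⊤ : ℕ∞) p (Set.Ioi (0 : ℝ))
  deriv_pos : ∀ s : ℝ, 0 < s → 0 < deriv p s
  deriv2_nonneg : ∀ s : ℝ, 0 < s → 0 ≤ deriv (deriv p) s

def IsWFor (p w : ℝ → ℝ) : Prop :=
  w 0 = 0 ∧ ∀ s : ℝ, -1 < s → HasDerivAt w (deriv p (1 + s) / (1 + s)) s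

def Wfun (w : ℝ → ℝ) (a : ℝ) : ℝ := ∫ s in (0:ℝ)..a, w s

def Rfun (x : ℝ) : ℝ := x * qfun x - ∫ s in (0:ℝ)..x, qfun s

def energyDensity (w : ℝ → ℝ) (n u φ : ℝ → ℝ) (x : ℝ) : ℝ :=
  (1/2) * (1 + n x) * u x ^ 2 + Wfun w (n x) + (1/2) * (deriv φ x) ^ 2 + Rfun (φ x)

def energy (w : ℝ → ℝ) (n u φ : ℝ → ℝ) : ℝ := ∫ x : ℝ, energyDensity w n u φ x

structure IsEPwSolution (w : ℝ → ℝ) (n u φ : ℝ → ℝ → ℝ) : Prop where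
  dens_pos : ∀ t x : ℝ, 0 < 1 + n t x
  reg_n : ContDiff ℝ 1 (Function.uncurry n)
  reg_u : ContDiff ℝ 1 (Function.uncurry u)
  reg_phi_space : ∀ t : ℝ, ContDiff ℝ 2 (φ t)
  reg_phi_time : ∀ x : ℝ, ContDiff ℝ 1 (fun t => φ t x)
  eq_n : ∀ t x : ℝ, deriv (fun s => n s x) t = - deriv (fun z => (1 + n t z) * u t z) x
  eq_u : ∀ t x : ℝ, deriv (fun s => u s x) t
      = - deriv (fun z => u t z ^ 2 / 2 + w (n t z) + φ t z) x
  eq_phi : ∀ t x : ℝ, - deriv (deriv (φ t)) x + qfun (φ t x) = n t x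

def ConservesEnergy (w : ℝ → ℝ) (n u φ : ℝ → ℝ → ℝ) : Prop :=
  ∀ t₁ t₂ : ℝ, energy w (n t₁) (u t₁) (φ t₁) = energy w (n t₂) (u t₂) (φ t₂)

def L2CompactWith (n u : ℝ → ℝ → ℝ) (y : ℝ → ℝ) : Prop :=
  ∀ ε : ℝ, 0 < ε → ∃ R : ℝ, 0 < R ∧
    ∀ t : ℝ, (∫ x in {x : ℝ | R < |x - y t|}, (n t x ^ 2 + u t x ^ 2)) < ε

namespace VB
open Set Filter Topology

lemma paramInt (a b : ℝ) (F F' : ℝ → ℝ → ℝ) (hFc : ∀ t, Continuous (F t))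
    (hd : ∀ t x, HasDerivAt (fun s => F s x) (F' t x) t)
    (hc : Continuous (Function.uncurry F')) (t : ℝ) :
    HasDerivAt (fun s => ∫ x in a..b, F s x) (∫ x in a..b, F' t x) t := by
  have hK : IsCompact (Metric.closedBall t 1 ×ˢ uIcc a b) :=
    (isCompact_closedBall t 1).prod isCompact_uIcc
  obtain ⟨B, hB⟩ := hK.exists_bound_of_continuousOn hc.continuousOn
  have hF'c : ∀ t, Continuous (F' t) := fun t => hc.comp (by fun_prop : Continuous (fun x : ℝ => (t, x)))
  refine (intervalIntegral.hasDerivAt_integral_of_dominated_loc_of_deriv_le (F := F) (F' := F')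
    (bound := fun _ => B) (Metric.ball_mem_nhds t one_pos) ?_ ?_ ?_ ?_ ?_ ?_).2
  · exact Eventually.of_forall fun s => (hFc s).aestronglyMeasurable
  · exact (hFc t).intervalIntegrable _ _
  · exact (hF'c t).aestronglyMeasurable
  · refine Eventually.of_forall fun x hx s hs => ?_
    exact hB (s, x) ⟨Metric.ball_subset_closedBall hs, uIoc_subset_uIcc hx⟩
  · exact intervalIntegrable_const
  · exact Eventually.of_forall fun x hx s hs => hd s x

structure CW (P P' : ℝ → ℝ) (r : ℝ) : Prop where
  d : ∀ x, HasDerivAt P (P' x) x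
  c : Continuous P'
  s : ∀ x, r ≤ |x| → P x = 0
  s' : ∀ x, r ≤ |x| → P' x = 0

lemma CW.cont {P P' : ℝ → ℝ} {r : ℝ} (h : CW P P' r) : Continuous P :=
  continuous_iff_continuousAt.2 fun x => (h.d x).continuousAt

lemma CW.compact {P P' : ℝ → ℝ} {r : ℝ} (h : CW P P' r) (y : ℝ) (f : ℝ → ℝ) (hf : Continuous f) :
    Integrable (fun x => P (x - y) * f x) := by
  have hc := h.cont
  refine Continuous.integrable_of_hasCompactSupport (by fun_prop) ?_
  refine HasCompactSupport.intro (isCompact_closedBall y r) ?_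
  intro x hx
  rw [h.s, zero_mul]
  simp only [Metric.mem_closedBall, Real.dist_eq, not_le] at hx
  exact hx.le

lemma CW.compact' {P P' : ℝ → ℝ} {r : ℝ} (h : CW P P' r) (y : ℝ) (f : ℝ → ℝ) (hf : Continuous f) :
    Integrable (fun x => P' (x - y) * f x) := by
  have hc := h.c
  refine Continuous.integrable_of_hasCompactSupport (by fun_prop) ?_
  refine HasCompactSupport.intro (isCompact_closedBall y r) ?_
  intro x hx
  rw [h.s', zero_mul]
  simp only [Metric.mem_closedBall, Real.dist_eq, not_le] at hx
  exact hx.le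

lemma CW.ibp {P P' : ℝ → ℝ} {r : ℝ} (h : CW P P' r) (y : ℝ) (f f' : ℝ → ℝ)
    (hf : ∀ x, HasDerivAt f (f' x) x) (hf' : Continuous f') :
    ∫ x, P (x - y) * f' x = - ∫ x, P' (x - y) * f x := by
  have hfc : Continuous f := continuous_iff_continuousAt.2 fun x => (hf x).continuousAt
  have := integral_mul_deriv_eq_deriv_mul_of_integrable (u := fun x => P (x - y))
    (u' := fun x => P' (x - y)) (v := f) (v' := f')
    (fun x _ => (h.d (x - y)).comp_sub_const x y) (fun x _ => hf x)
    (h.compact y _ hf') (h.compact' y _ hfc) (h.compact y _ hfc)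
  simpa using this

lemma law {P P' : ℝ → ℝ} {r : ℝ} (h : CW P P' r) (y : ℝ → ℝ) (hy : ContDiff ℝ 1 y)
    (ρ ρt F Fx S : ℝ → ℝ → ℝ)
    (hρ : ∀ t x, HasDerivAt (fun s => ρ s x) (ρt t x) t)
    (cρ : Continuous (Function.uncurry ρ)) (cρt : Continuous (Function.uncurry ρt))
    (t : ℝ) (hF : ∀ x, HasDerivAt (F t) (Fx t x) x) (cFx : Continuous (Fx t))
    (cS : Continuous (S t)) (hE : ∀ x, ρt t x = - Fx t x + S t x) :
    HasDerivAt (fun t => ∫ x, P (x - y t) * ρ t x)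
      (∫ x, (P' (x - y t) * (F t x - deriv y t * ρ t x) + P (x - y t) * S t x)) t := by
  have hyd : ∀ t, HasDerivAt y (deriv y t) t := fun t =>
    (hy.differentiable (by norm_num) t).hasDerivAt
  have hyc : Continuous y := hy.continuous
  have hyc' : Continuous (deriv y) := hy.continuous_deriv (by norm_num)
  have hPc := h.cont
  have hPc' := h.c
  have hρc : ∀ t, Continuous (ρ t) := fun t => cρ.comp (by fun_prop : Continuous (fun x : ℝ => (t, x)))
  have hρtc : ∀ t, Continuous (ρt t) := fun t => cρt.comp (by fun_prop : Continuous (fun x : ℝ => (t, x)))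
  have hFc : Continuous (F t) := continuous_iff_continuousAt.2 fun x => (hF x).continuousAt
  set a := y t - |r| - 1 with ha
  set b := y t + |r| + 1 with hb
  have hab : a ≤ b := by have := abs_nonneg r; rw [ha, hb]; linarith
  have key : ∀ (Q : ℝ → ℝ), (∀ x, r ≤ |x| → Q x = 0) → ∀ s, |y s - y t| < 1 → ∀ f : ℝ → ℝ,
      ∫ x, Q (x - y s) * f x = ∫ x in a..b, Q (x - y s) * f x := by
    intro Q hQ s hs f
    rw [intervalIntegral.integral_of_le hab]
    symm
    apply setIntegral_eq_integral_of_forall_compl_eq_zero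
    intro x hx
    rw [hQ, zero_mul]
    by_contra hlt
    push Not at hlt
    apply hx
    have h1 := abs_lt.1 hs
    have h2 := abs_lt.1 hlt
    have h3 := le_abs_self r
    constructor <;> [rw [ha]; rw [hb]] <;> linarith
  have hev : ∀ᶠ s in 𝓝 t, |y s - y t| < 1 := by
    have : Tendsto (fun s => |y s - y t|) (𝓝 t) (𝓝 |y t - y t|) := by
      apply Continuous.tendsto; fun_prop
    rw [sub_self, abs_zero] at this
    exact this.eventually (gt_mem_nhds one_pos)
  have h1 := paramInt a b (fun s x => P (x - y s) * ρ s x)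
    (fun s x => (P' (x - y s) * (-deriv y s)) * ρ s x + P (x - y s) * ρt s x)
    (fun s => by have := hρc s; fun_prop)
    (fun s x => by
      have e1 : HasDerivAt (fun s => P (x - y s)) (P' (x - y s) * (-deriv y s)) s :=
        (h.d (x - y s)).comp s ((hyd s).const_sub x)
      exact e1.mul (hρ s x))
    (by
      change Continuous fun p : ℝ × ℝ => (P' (p.2 - y p.1) * (-deriv y p.1)) * ρ p.1 p.2 + P (p.2 - y p.1) * ρt p.1 p.2
      have c1 : Continuous fun p : ℝ × ℝ => ρ p.1 p.2 := cρ
      have c2 : Continuous fun p : ℝ × ℝ => ρt p.1 p.2 := cρt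
      fun_prop) t
  have h2 : (∫ x in a..b, ((P' (x - y t) * (-deriv y t)) * ρ t x + P (x - y t) * ρt t x))
      = ∫ x, (P' (x - y t) * (F t x - deriv y t * ρ t x) + P (x - y t) * S t x) := by
    have i1 : ∀ f, Continuous f → Integrable (fun x => P (x - y t) * f x) := h.compact (y t)
    have i2 : ∀ f, Continuous f → Integrable (fun x => P' (x - y t) * f x) := h.compact' (y t)
    have c1 := hρc t
    have c2 := hρtc t
    have e1 : (∫ x in a..b, ((P' (x - y t) * (-deriv y t)) * ρ t x + P (x - y t) * ρt t x))
      = (∫ x, P' (x - y t) * (-deriv y t * ρ t x)) + ∫ x, P (x - y t) * ρt t x := by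
      rw [key P h.s t (by simp), key P' h.s' t (by simp), ← intervalIntegral.integral_add]
      · congr 1; ext x; ring
      · apply Continuous.intervalIntegrable; fun_prop
      · apply Continuous.intervalIntegrable; fun_prop
    rw [e1]
    have e2 : ∫ x, P (x - y t) * ρt t x = (∫ x, P' (x - y t) * F t x) + ∫ x, P (x - y t) * S t x := by
      have := h.ibp (y t) (F t) (Fx t) hF cFx
      have e3 : (∫ x, P' (x - y t) * F t x) = ∫ x, P (x - y t) * (- Fx t x) := by
        simp only [mul_neg, integral_neg]; linarith
      rw [e3, ← integral_add (i1 (fun x => - Fx t x) cFx.neg) (i1 _ cS)]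
      congr 1; ext x; rw [hE]; ring
    rw [e2, ← integral_add (i2 _ hFc) (i1 _ cS), ← integral_add]
    · congr 1; ext x; ring
    · exact i2 _ (by fun_prop)
    · exact (i2 _ hFc).add (i1 _ cS)
  rw [← h2]
  refine h1.congr_of_eventuallyEq ?_
  filter_upwards [hev] with s hs
  exact key P h.s s hs _

end VB

namespace VB
open Set Filter Topology

def Em (f : ℝ → ℝ) (x : ℝ) : ℝ := ∫ s in Iic (0:ℝ), exp s * f (x + s)

lemma expInt (f : ℝ → ℝ) (hf : Continuous f) (hi : Integrable (fun x => f x ^ 2)) :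
    IntegrableOn (fun s => exp s * f s) (Iic (0:ℝ)) := by
  have h0 : IntegrableOn (fun s => exp s + f s ^ 2) (Iic (0:ℝ)) :=
    (integrableOn_exp_Iic 0).add hi.integrableOn
  refine Integrable.mono' h0 (by fun_prop) ?_
  refine (ae_restrict_iff' measurableSet_Iic).2 (Eventually.of_forall fun s hs => ?_)
  have h1 : exp s ≤ 1 := by simpa using hs
  have h2 := exp_pos s
  rw [Real.norm_eq_abs, abs_mul, abs_of_pos h2]
  nlinarith [sq_nonneg (|f s| - 1), sq_abs (f s), mul_nonneg h2.le (sq_nonneg (|f s| - 1)),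
    mul_nonneg (sub_nonneg.2 h1) (sq_nonneg (f s)), sq_nonneg (f s)]

lemma expTail (f : ℝ → ℝ) (hf : Continuous f) (hi : Integrable (fun x => f x ^ 2)) (M : ℝ)
    (hM : ∫ x, f x ^ 2 ≤ M) (N : ℝ) (hN : 0 ≤ N) :
    |(∫ s in Iic (0:ℝ), exp s * f s) - ∫ s in (-N)..0, exp s * f s| ≤ exp (-N) * (1 + M) := by
  have h0 := expInt f hf hi
  have hsub : Iic (-N) ⊆ Iic (0:ℝ) := Iic_subset_Iic.2 (by linarith)
  have h1 := intervalIntegral.integral_Iic_sub_Iic (h0.mono_set hsub) h0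
  have h2 : (∫ s in Iic (0:ℝ), exp s * f s) - (∫ s in (-N)..0, exp s * f s)
    = ∫ s in Iic (-N), exp s * f s := by rw [← h1]; ring
  rw [h2]
  have h3 : IntegrableOn (fun s => exp s + exp (-N) * f s ^ 2) (Iic (-N)) :=
    (integrableOn_exp_Iic _).add (hi.const_mul _).integrableOn
  have h4 : ‖∫ s in Iic (-N), exp s * f s‖ ≤ ∫ s in Iic (-N), (exp s + exp (-N) * f s ^ 2) := by
    refine norm_integral_le_of_norm_le h3 ?_
    refine (ae_restrict_iff' measurableSet_Iic).2 (Eventually.of_forall fun s hs => ?_)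
    have h1 : exp s ≤ exp (-N) := exp_le_exp.2 hs
    have h2 := exp_pos s
    rw [Real.norm_eq_abs, abs_mul, abs_of_pos h2]
    nlinarith [sq_nonneg (|f s| - 1), sq_abs (f s), mul_nonneg h2.le (sq_nonneg (|f s| - 1)),
      mul_nonneg (sub_nonneg.2 h1) (sq_nonneg (f s)), sq_nonneg (f s), mul_nonneg h2.le (sq_nonneg (f s))]
  rw [integral_add (integrableOn_exp_Iic _) (hi.const_mul _).integrableOn, integral_exp_Iic,
    integral_const_mul] at h4
  have h5 : ∫ s in Iic (-N), f s ^ 2 ≤ ∫ s, f s ^ 2 :=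
    setIntegral_le_integral hi (Eventually.of_forall fun s => sq_nonneg _)
  have := exp_pos (-N)
  rw [Real.norm_eq_abs] at h4
  nlinarith

lemma tendsto_expN : Tendsto (fun N : ℕ => exp (-(N:ℝ))) atTop (𝓝 0) :=
  tendsto_exp_neg_atTop_nhds_zero.comp tendsto_natCast_atTop_atTop

lemma sq_shift {f : ℝ → ℝ} (hi : Integrable (fun x => f x ^ 2)) (x : ℝ) :
    Integrable (fun s => f (x + s) ^ 2) := hi.comp_add_left x

lemma sq_shift_int (f : ℝ → ℝ) (x : ℝ) : ∫ s, f (x + s) ^ 2 = ∫ s, f s ^ 2 :=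
  integral_add_left_eq_self (fun s => f s ^ 2) x

lemma Em_cont (f : ℝ → ℝ → ℝ) (hf : Continuous (Function.uncurry f))
    (hi : ∀ t, Integrable (fun x => f t x ^ 2)) (M : ℝ) (hM : ∀ t, ∫ x, f t x ^ 2 ≤ M) :
    Continuous (fun p : ℝ × ℝ => Em (f p.1) p.2) := by
  have hfc : ∀ t, Continuous (f t) := fun t => hf.comp (by fun_prop : Continuous (fun x : ℝ => (t, x)))
  have hu : TendstoUniformly (fun (N : ℕ) (p : ℝ × ℝ) => ∫ s in (-(N:ℝ))..0, exp s * f p.1 (p.2 + s))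
      (fun p : ℝ × ℝ => Em (f p.1) p.2) atTop := by
    rw [Metric.tendstoUniformly_iff]
    intro ε hε
    have h1 : Tendsto (fun N : ℕ => exp (-(N:ℝ)) * (1 + M)) atTop (𝓝 (0 * (1 + M))) :=
      tendsto_expN.mul_const _
    rw [zero_mul] at h1
    filter_upwards [h1.eventually (gt_mem_nhds hε)] with N hN p
    rw [Real.dist_eq]
    refine lt_of_le_of_lt ?_ hN
    have hc := hfc p.1
    exact expTail (fun s => f p.1 (p.2 + s)) (by fun_prop) (sq_shift (hi p.1) p.2) M
      (by rw [sq_shift_int]; exact hM _) N (Nat.cast_nonneg N)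
  refine hu.continuous (Frequently.of_forall fun N => ?_)
  apply intervalIntegral.continuous_parametric_intervalIntegral_of_continuous'
  change Continuous fun q : (ℝ × ℝ) × ℝ => exp q.2 * f q.1.1 (q.1.2 + q.2)
  have : Continuous fun q : (ℝ × ℝ) × ℝ => f q.1.1 (q.1.2 + q.2) :=
    hf.comp (by fun_prop : Continuous fun q : (ℝ × ℝ) × ℝ => (q.1.1, q.1.2 + q.2))
  fun_prop

lemma expDeriv (a at' b bs : ℝ → ℝ → ℝ) (ca : ∀ t, Continuous (a t))
    (hat : ∀ t s, HasDerivAt (fun t => a t s) (at' t s) t)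
    (cat : Continuous (Function.uncurry at'))
    (cb : Continuous (Function.uncurry b))
    (hbs : ∀ t s, HasDerivAt (b t) (bs t s) s)
    (heq : ∀ t s, at' t s = - bs t s)
    (ia : ∀ t, Integrable (fun x => a t x ^ 2)) (ib : ∀ t, Integrable (fun x => b t x ^ 2))
    (M : ℝ) (hMa : ∀ t, ∫ x, a t x ^ 2 ≤ M) (hMb : ∀ t, ∫ x, b t x ^ 2 ≤ M) (t₀ : ℝ) :
    HasDerivAt (fun t => ∫ s in Iic (0:ℝ), exp s * a t s)
      (- b t₀ 0 + ∫ s in Iic (0:ℝ), exp s * b t₀ s) t₀ := by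
  have catt : ∀ t, Continuous (at' t) := fun t => cat.comp (by fun_prop : Continuous (fun x : ℝ => (t, x)))
  have cbt : ∀ t, Continuous (b t) := fun t => cb.comp (by fun_prop : Continuous (fun x : ℝ => (t, x)))
  have cb0 : Continuous (fun t => b t 0) := cb.comp (by fun_prop : Continuous (fun t : ℝ => (t, (0:ℝ))))
  have hbs' : ∀ t s, bs t s = - at' t s := fun t s => by rw [heq]; ring
  obtain ⟨B, hB⟩ := (isCompact_closedBall t₀ 1).exists_bound_of_continuousOn cb0.continuousOn
  have hd : ∀ (N : ℕ) (t : ℝ), HasDerivAt (fun t => ∫ s in (-(N:ℝ))..0, (exp s - exp (-N)) * a t s)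
      (- (1 - exp (-N)) * b t 0 + ∫ s in (-(N:ℝ))..0, exp s * b t s) t := by
    intro N t
    have h1 := paramInt (-(N:ℝ)) 0 (fun t s => (exp s - exp (-N)) * a t s)
      (fun t s => (exp s - exp (-N)) * at' t s) (fun t => by have := ca t; fun_prop)
      (fun t s => (hat t s).const_mul _)
      (by
        have : Continuous fun q : ℝ × ℝ => at' q.1 q.2 := cat
        change Continuous fun q : ℝ × ℝ => (exp q.2 - exp (-N)) * at' q.1 q.2
        fun_prop) t
    have h2 := intervalIntegral.integral_mul_deriv_eq_deriv_mul (a := -(N:ℝ)) (b := 0)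
      (u := fun s => exp s - exp (-N)) (u' := fun s => exp s) (v := b t) (v' := bs t)
      (fun s _ => (hasDerivAt_exp s).sub_const _) (fun s _ => hbs t s)
      (by apply Continuous.intervalIntegrable; fun_prop)
      (by apply Continuous.intervalIntegrable; rw [show bs t = fun s => - at' t s from funext (hbs' t)]
          have := catt t; fun_prop)
    convert h1 using 1
    have h3 : (∫ s in (-(N:ℝ))..0, (exp s - exp (-N)) * at' t s)
        = - ∫ s in (-(N:ℝ))..0, (exp s - exp (-N)) * bs t s := by
      rw [← intervalIntegral.integral_neg]; congr 1; ext s; rw [heq]; ring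
    rw [h3, h2]; simp; ring
  have hE := tendsto_expN
  refine hasDerivAt_of_tendstoUniformlyOn (l := (atTop : Filter ℕ)) (s := Metric.ball t₀ 1) Metric.isOpen_ball
    (f := fun N t => ∫ s in (-(N:ℝ))..0, (exp s - exp (-N)) * a t s)
    (f' := fun N t => - (1 - exp (-N)) * b t 0 + ∫ s in (-(N:ℝ))..0, exp s * b t s)
    (g := fun t => ∫ s in Iic (0:ℝ), exp s * a t s)
    (g' := fun t => - b t 0 + ∫ s in Iic (0:ℝ), exp s * b t s)
    ?_ (Eventually.of_forall fun N t _ => hd N t) ?_ (Metric.mem_ball_self one_pos)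
  · rw [Metric.tendstoUniformlyOn_iff]
    intro ε hε
    have h1 : Tendsto (fun N : ℕ => exp (-(N:ℝ)) * (1 + M + B)) atTop (𝓝 (0 * (1 + M + B))) :=
      hE.mul_const _
    rw [zero_mul] at h1
    filter_upwards [h1.eventually (gt_mem_nhds hε)] with N hN t ht
    rw [Real.dist_eq]
    refine lt_of_le_of_lt ?_ hN
    have e1 := expTail (b t) (cbt t) (ib t) M (hMb t) N (Nat.cast_nonneg N)
    have e2 : |b t 0| ≤ B := hB t (Metric.ball_subset_closedBall ht)
    have e3 := exp_pos (-(N:ℝ))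
    rw [abs_le] at e1 e2 ⊢
    constructor <;> nlinarith
  · intro t ht
    have h1 : Tendsto (fun N : ℕ => exp (-(N:ℝ)) * (1 + M) + ((N:ℝ) * exp (-(N:ℝ)) + exp (-(N:ℝ)) * M))
        atTop (𝓝 (0 * (1 + M) + (0 + 0 * M))) := by
      have h2 : Tendsto (fun N : ℕ => (N:ℝ) * exp (-(N:ℝ))) atTop (𝓝 0) := by
        have := (tendsto_pow_mul_exp_neg_atTop_nhds_zero 1).comp (tendsto_natCast_atTop_atTop (R := ℝ))
        simpa [Function.comp_def] using this
      exact (hE.mul_const _).add (h2.add (hE.mul_const _))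
    simp only [zero_mul, add_zero] at h1
    rw [tendsto_iff_dist_tendsto_zero]
    refine squeeze_zero (fun _ => dist_nonneg) (fun N => ?_) h1
    rw [Real.dist_eq]
    have hc := ca t
    have e1 := expTail (a t) hc (ia t) M (hMa t) N (Nat.cast_nonneg N)
    have e2 : (∫ s in (-(N:ℝ))..0, (exp s - exp (-N)) * a t s)
        = (∫ s in (-(N:ℝ))..0, exp s * a t s) - exp (-N) * ∫ s in (-(N:ℝ))..0, a t s := by
      rw [← intervalIntegral.integral_const_mul, ← intervalIntegral.integral_sub]
      · congr 1; ext s; ring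
      · apply Continuous.intervalIntegrable; fun_prop
      · apply Continuous.intervalIntegrable; fun_prop
    have hN0 : (-(N:ℝ)) ≤ 0 := by simp
    have e3 : |∫ s in (-(N:ℝ))..0, a t s| ≤ N + M := by
      have f1 : |∫ s in (-(N:ℝ))..0, a t s| ≤ ∫ s in (-(N:ℝ))..0, (1 + a t s ^ 2) := by
        refine (intervalIntegral.abs_integral_le_integral_abs hN0).trans ?_
        apply intervalIntegral.integral_mono_on hN0
        · apply Continuous.intervalIntegrable; fun_prop
        · apply Continuous.intervalIntegrable; fun_prop
        · intro s _
          nlinarith [sq_nonneg (|a t s| - 1), sq_abs (a t s), sq_nonneg (a t s)]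
      rw [intervalIntegral.integral_add (by simp) (by apply Continuous.intervalIntegrable; fun_prop)] at f1
      have f2 : ∫ s in (-(N:ℝ))..0, a t s ^ 2 ≤ M := by
        rw [intervalIntegral.integral_of_le hN0]
        exact (setIntegral_le_integral (ia t) (Eventually.of_forall fun s => sq_nonneg _)).trans (hMa t)
      simp at f1
      linarith
    have e4 := exp_pos (-(N:ℝ))
    rw [e2]
    have e5 : |exp (-(N:ℝ)) * ∫ s in (-(N:ℝ))..0, a t s| ≤ exp (-(N:ℝ)) * (N + M) := by
      rw [abs_mul, abs_of_pos e4]; exact mul_le_mul_of_nonneg_left e3 e4.le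
    rw [abs_le] at e1 e5 ⊢
    constructor <;> linarith

end VB

namespace VB
open Set Filter Topology

def Ep (f : ℝ → ℝ) (x : ℝ) : ℝ := Em (fun z => f (-z)) (-x)
def Sop (f : ℝ → ℝ) (x : ℝ) : ℝ := (Em f x + Ep f x) / 2
def Dop (f : ℝ → ℝ) (x : ℝ) : ℝ := (Ep f x - Em f x) / 2

lemma sq_neg_i {f : ℝ → ℝ} (hi : Integrable (fun x => f x ^ 2)) :
    Integrable (fun s => f (-s) ^ 2) := hi.comp_neg

lemma sq_neg_int (f : ℝ → ℝ) : ∫ s, f (-s) ^ 2 = ∫ s, f s ^ 2 :=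
  integral_neg_eq_self (fun s => f s ^ 2) volume

lemma Em_x (f f' : ℝ → ℝ) (hf : ∀ x, HasDerivAt f (f' x) x) (cf' : Continuous f')
    (hi : Integrable (fun x => f x ^ 2)) (x : ℝ) : HasDerivAt (Em f) (f x - Em f x) x := by
  have hfc : Continuous f := continuous_iff_continuousAt.2 fun x => (hf x).continuousAt
  have h := expDeriv (fun t s => f (t + s)) (fun t s => f' (t + s)) (fun t s => - f (t + s))
    (fun t s => - f' (t + s)) (fun t => by fun_prop) (fun t s => (hf (t + s)).comp_add_const t s)
    (by change Continuous fun q : ℝ × ℝ => f' (q.1 + q.2); fun_prop)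
    (by change Continuous fun q : ℝ × ℝ => - f (q.1 + q.2); fun_prop)
    (fun t s => ((hf (t + s)).comp_const_add t s).neg) (fun t s => by simp)
    (fun t => sq_shift hi t) (fun t => by simpa using sq_shift hi t) (∫ x, f x ^ 2)
    (fun t => (sq_shift_int f t).le) (fun t => by simpa using (sq_shift_int f t).le) x
  refine h.congr_deriv ?_
  simp [Em, integral_neg]; ring

lemma hd_neg {f : ℝ → ℝ} {f' z : ℝ} (hf : HasDerivAt f f' (-z)) :
    HasDerivAt (fun z => f (-z)) (-f') z :=
  (hf.comp z (hasDerivAt_neg z)).congr_deriv (by ring)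

lemma Em_t (n nt m mx : ℝ → ℝ → ℝ) (cn : ∀ t, Continuous (n t))
    (hnt : ∀ t x, HasDerivAt (fun t => n t x) (nt t x) t)
    (cnt : Continuous (Function.uncurry nt)) (cm : Continuous (Function.uncurry m))
    (hmx : ∀ t x, HasDerivAt (m t) (mx t x) x) (heq : ∀ t x, nt t x = - mx t x)
    (ia : ∀ t, Integrable (fun x => n t x ^ 2)) (ib : ∀ t, Integrable (fun x => m t x ^ 2))
    (M : ℝ) (hMa : ∀ t, ∫ x, n t x ^ 2 ≤ M) (hMb : ∀ t, ∫ x, m t x ^ 2 ≤ M) (t x : ℝ) :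
    HasDerivAt (fun t => Em (n t) x) (- m t x + Em (m t) x) t := by
  have h := expDeriv (fun t s => n t (x + s)) (fun t s => nt t (x + s)) (fun t s => m t (x + s))
    (fun t s => mx t (x + s)) (fun t => by have := cn t; fun_prop) (fun t s => hnt t (x + s))
    (cnt.comp (by fun_prop : Continuous fun q : ℝ × ℝ => (q.1, x + q.2)))
    (cm.comp (by fun_prop : Continuous fun q : ℝ × ℝ => (q.1, x + q.2)))
    (fun t s => (hmx t (x + s)).comp_const_add x s) (fun t s => heq _ _)
    (fun t => sq_shift (ia t) x) (fun t => sq_shift (ib t) x) M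
    (fun t => (sq_shift_int (n t) x).le.trans (hMa t)) (fun t => (sq_shift_int (m t) x).le.trans (hMb t)) t
  simpa [Em] using h

lemma Ep_x (f f' : ℝ → ℝ) (hf : ∀ x, HasDerivAt f (f' x) x) (cf' : Continuous f')
    (hi : Integrable (fun x => f x ^ 2)) (x : ℝ) : HasDerivAt (Ep f) (- f x + Ep f x) x := by
  have h := Em_x (fun z => f (-z)) (fun z => - f' (-z))
    (fun z => hd_neg (hf (-z))) (by fun_prop) (sq_neg_i hi) (-x)
  have h2 := h.scomp x (hasDerivAt_neg x)
  simp only [neg_neg, smul_eq_mul] at h2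
  refine (h2.congr_deriv ?_)
  simp only [Ep]; ring

lemma Ep_t (n nt m mx : ℝ → ℝ → ℝ) (cn : ∀ t, Continuous (n t))
    (hnt : ∀ t x, HasDerivAt (fun t => n t x) (nt t x) t)
    (cnt : Continuous (Function.uncurry nt)) (cm : Continuous (Function.uncurry m))
    (hmx : ∀ t x, HasDerivAt (m t) (mx t x) x) (heq : ∀ t x, nt t x = - mx t x)
    (ia : ∀ t, Integrable (fun x => n t x ^ 2)) (ib : ∀ t, Integrable (fun x => m t x ^ 2))
    (M : ℝ) (hMa : ∀ t, ∫ x, n t x ^ 2 ≤ M) (hMb : ∀ t, ∫ x, m t x ^ 2 ≤ M) (t x : ℝ) :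
    HasDerivAt (fun t => Ep (n t) x) (m t x - Ep (m t) x) t := by
  have h := Em_t (fun t z => n t (-z)) (fun t z => nt t (-z)) (fun t z => - m t (-z)) (fun t z => mx t (-z))
    (fun t => by have := cn t; fun_prop) (fun t z => hnt t (-z))
    (cnt.comp (by fun_prop : Continuous fun q : ℝ × ℝ => (q.1, -q.2)))
    (cm.comp (by fun_prop : Continuous fun q : ℝ × ℝ => (q.1, -q.2))).neg
    (fun t z => (hd_neg (hmx t (-z))).neg.congr_deriv (by ring)) (fun t z => heq _ _)
    (fun t => sq_neg_i (ia t)) (fun t => by simpa using sq_neg_i (ib t)) M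
    (fun t => (sq_neg_int (n t)).le.trans (hMa t))
    (fun t => by simpa using (sq_neg_int (m t)).le.trans (hMb t)) t (-x)
  refine h.congr_deriv ?_
  simp [Ep, Em, integral_neg]; ring

structure Pot (h f f1 : ℝ → ℝ) : Prop where
  d0 : ∀ x, HasDerivAt f (f1 x) x
  d1 : ∀ x, HasDerivAt f1 (f x - h x) x
  bd : ∃ B, ∀ x, |f x| ≤ B ∧ |f1 x| ≤ B

lemma Pot.c0 {h f f1 : ℝ → ℝ} (H : Pot h f f1) : Continuous f :=
  continuous_iff_continuousAt.2 fun x => (H.d0 x).continuousAt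
lemma Pot.c1 {h f f1 : ℝ → ℝ} (H : Pot h f f1) : Continuous f1 :=
  continuous_iff_continuousAt.2 fun x => (H.d1 x).continuousAt

lemma Pot.sub {h f f1 h' f' f1' : ℝ → ℝ} (H : Pot h f f1) (H' : Pot h' f' f1') :
    Pot (fun x => h x - h' x) (fun x => f x - f' x) (fun x => f1 x - f1' x) where
  d0 x := (H.d0 x).sub (H'.d0 x)
  d1 x := ((H.d1 x).sub (H'.d1 x)).congr_deriv (by ring)
  bd := by
    obtain ⟨B, hB⟩ := H.bd
    obtain ⟨B', hB'⟩ := H'.bd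
    refine ⟨B + B', fun x => ⟨?_, ?_⟩⟩
    · exact (abs_sub _ _).trans (add_le_add (hB x).1 (hB' x).1)
    · exact (abs_sub _ _).trans (add_le_add (hB x).2 (hB' x).2)

lemma Em_bd2 (f : ℝ → ℝ) (hf : Continuous f) (hi : Integrable (fun x => f x ^ 2)) (x : ℝ) :
    |Em f x| ≤ 1 + ∫ x, f x ^ 2 := by
  have := expTail (fun s => f (x + s)) (by fun_prop) (sq_shift hi x) (∫ x, f x ^ 2)
    (sq_shift_int f x).le 0 le_rfl
  simpa [Em] using this

lemma Em_bd (f : ℝ → ℝ) (d : ℝ) (hd : ∀ x, |f x| ≤ d) (x : ℝ) : |Em f x| ≤ d := by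
  have h := norm_integral_le_of_norm_le (μ := volume.restrict (Iic (0:ℝ))) (f := fun s => exp s * f (x + s))
    (g := fun s => exp s * d) ((integrableOn_exp_Iic 0).mul_const d)
    (Eventually.of_forall fun s => by
      rw [Real.norm_eq_abs, abs_mul, abs_of_pos (exp_pos s)]
      exact mul_le_mul_of_nonneg_left (hd _) (exp_pos s).le)
  rw [integral_mul_const, integral_exp_Iic] at h
  simpa [Em] using h

lemma Sop_bd (f : ℝ → ℝ) (d : ℝ) (hd : ∀ x, |f x| ≤ d) (x : ℝ) : |Sop f x| ≤ d := by
  have h1 := abs_le.1 (Em_bd f d hd x)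
  have h2 := abs_le.1 (Em_bd (fun z => f (-z)) d (fun z => hd _) (-x))
  unfold Sop Ep
  rw [abs_le]; constructor <;> linarith

lemma Dop_bd (f : ℝ → ℝ) (d : ℝ) (hd : ∀ x, |f x| ≤ d) (x : ℝ) : |Dop f x| ≤ d := by
  have h1 := abs_le.1 (Em_bd f d hd x)
  have h2 := abs_le.1 (Em_bd (fun z => f (-z)) d (fun z => hd _) (-x))
  unfold Dop Ep
  rw [abs_le]; constructor <;> linarith

lemma Pot_Sop (f f' : ℝ → ℝ) (hf : ∀ x, HasDerivAt f (f' x) x) (cf' : Continuous f')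
    (hi : Integrable (fun x => f x ^ 2)) : Pot f (Sop f) (Dop f) where
  d0 x := (((Em_x f f' hf cf' hi x).add (Ep_x f f' hf cf' hi x)).div_const 2).congr_deriv (by
    unfold Dop; ring)
  d1 x := (((Ep_x f f' hf cf' hi x).sub (Em_x f f' hf cf' hi x)).div_const 2).congr_deriv (by
    unfold Sop; ring)
  bd := by
    have hfc : Continuous f := continuous_iff_continuousAt.2 fun x => (hf x).continuousAt
    refine ⟨1 + ∫ x, f x ^ 2, fun x => ?_⟩
    have h1 := abs_le.1 (Em_bd2 f hfc hi x)
    have h2 := abs_le.1 (Em_bd2 (fun z => f (-z)) (by fun_prop) (sq_neg_i hi) (-x))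
    rw [sq_neg_int] at h2
    unfold Sop Dop Ep
    constructor <;> rw [abs_le] <;> constructor <;> linarith

lemma Ep_cont (f : ℝ → ℝ → ℝ) (hf : Continuous (Function.uncurry f))
    (hi : ∀ t, Integrable (fun x => f t x ^ 2)) (M : ℝ) (hM : ∀ t, ∫ x, f t x ^ 2 ≤ M) :
    Continuous (fun p : ℝ × ℝ => Ep (f p.1) p.2) := by
  have h := Em_cont (fun t z => f t (-z)) (hf.comp (by fun_prop : Continuous fun q : ℝ × ℝ => (q.1, -q.2)))
    (fun t => sq_neg_i (hi t)) M (fun t => (sq_neg_int (f t)).le.trans (hM t))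
  exact h.comp (by fun_prop : Continuous fun q : ℝ × ℝ => (q.1, -q.2))

lemma Sop_cont (f : ℝ → ℝ → ℝ) (hf : Continuous (Function.uncurry f))
    (hi : ∀ t, Integrable (fun x => f t x ^ 2)) (M : ℝ) (hM : ∀ t, ∫ x, f t x ^ 2 ≤ M) :
    Continuous (fun p : ℝ × ℝ => Sop (f p.1) p.2) :=
  ((Em_cont f hf hi M hM).add (Ep_cont f hf hi M hM)).div_const 2

lemma Dop_cont (f : ℝ → ℝ → ℝ) (hf : Continuous (Function.uncurry f))
    (hi : ∀ t, Integrable (fun x => f t x ^ 2)) (M : ℝ) (hM : ∀ t, ∫ x, f t x ^ 2 ≤ M) :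
    Continuous (fun p : ℝ × ℝ => Dop (f p.1) p.2) :=
  ((Ep_cont f hf hi M hM).sub (Em_cont f hf hi M hM)).div_const 2

lemma Dop_t (n nt m mx : ℝ → ℝ → ℝ) (cn : ∀ t, Continuous (n t))
    (hnt : ∀ t x, HasDerivAt (fun t => n t x) (nt t x) t)
    (cnt : Continuous (Function.uncurry nt)) (cm : Continuous (Function.uncurry m))
    (hmx : ∀ t x, HasDerivAt (m t) (mx t x) x) (heq : ∀ t x, nt t x = - mx t x)
    (ia : ∀ t, Integrable (fun x => n t x ^ 2)) (ib : ∀ t, Integrable (fun x => m t x ^ 2))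
    (M : ℝ) (hMa : ∀ t, ∫ x, n t x ^ 2 ≤ M) (hMb : ∀ t, ∫ x, m t x ^ 2 ≤ M) (t x : ℝ) :
    HasDerivAt (fun t => Dop (n t) x) (m t x - Sop (m t) x) t :=
  (((Ep_t n nt m mx cn hnt cnt cm hmx heq ia ib M hMa hMb t x).sub
    (Em_t n nt m mx cn hnt cnt cm hmx heq ia ib M hMa hMb t x)).div_const 2).congr_deriv (by
      unfold Sop; ring)

end VB

namespace VB
open Set Filter Topology

def gw (A x : ℝ) : ℝ := 1 / cosh (x / A) ^ 2
def gw' (A x : ℝ) : ℝ := - (2 / A) * (sinh (x / A) / cosh (x / A)) * gw A x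
def Ph (A x : ℝ) : ℝ := A * (sinh (x / A) / cosh (x / A))

lemma gw_pos (A x : ℝ) : 0 < gw A x := by unfold gw; have := cosh_pos (x / A); positivity

lemma abs_sc (z : ℝ) : |sinh z / cosh z| ≤ 1 := by
  have h := cosh_pos z
  rw [abs_div, abs_of_pos h, div_le_one h]
  exact abs_le_of_sq_le_sq (by nlinarith [cosh_sq z]) h.le

lemma gw_le_one (A x : ℝ) : gw A x ≤ 1 := by
  unfold gw
  have := one_le_cosh (x / A)
  rw [div_le_one (by positivity)]
  nlinarith

lemma gw_cont (A : ℝ) : Continuous (gw A) := by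
  unfold gw
  have h : ∀ x : ℝ, cosh (x / A) ^ 2 ≠ 0 := fun x => by have := cosh_pos (x / A); positivity
  exact continuous_const.div (by fun_prop) h

lemma sc_cont (A : ℝ) : Continuous (fun x : ℝ => sinh (x / A) / cosh (x / A)) :=
  Continuous.div (by fun_prop) (by fun_prop) fun x => (cosh_pos (x / A)).ne'

lemma gw'_cont (A : ℝ) : Continuous (gw' A) := by
  unfold gw'
  have := gw_cont A
  have := sc_cont A
  fun_prop

lemma gw_deriv (A x : ℝ) : HasDerivAt (gw A) (gw' A x) x := by
  have h := cosh_pos (x / A)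
  have h1 : HasDerivAt (fun x => x / A) (1 / A) x := (hasDerivAt_id x).div_const A
  have h2 : HasDerivAt (fun x => cosh (x / A)) (sinh (x / A) * (1 / A)) x := h1.cosh
  have h3 := (h2.fun_pow 2).fun_inv (by positivity)
  have e : gw A = fun x => (cosh (x / A) ^ 2)⁻¹ := by ext x; simp [gw]
  rw [e]
  refine h3.congr_deriv ?_
  simp only [gw', gw]
  push_cast
  norm_num
  field_simp

lemma Ph_deriv (A x : ℝ) (hA : A ≠ 0) : HasDerivAt (Ph A) (gw A x) x := by
  have h := cosh_pos (x / A)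
  have h1 : HasDerivAt (fun x => x / A) (1 / A) x := (hasDerivAt_id x).div_const A
  have h2 : HasDerivAt (fun x => cosh (x / A)) (sinh (x / A) * (1 / A)) x := h1.cosh
  have h4 : HasDerivAt (fun x => sinh (x / A)) (cosh (x / A) * (1 / A)) x := h1.sinh
  refine ((h4.div h2 h.ne').const_mul A).congr_deriv ?_
  simp only [gw]
  field_simp
  nlinarith [cosh_sq (x / A)]

lemma Ph_cont (A : ℝ) : Continuous (Ph A) := by
  unfold Ph
  have := sc_cont A
  fun_prop

lemma Ph_bd (A x : ℝ) (hA : 0 ≤ A) : |Ph A x| ≤ A := by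
  unfold Ph
  rw [abs_mul, abs_of_nonneg hA]
  have := abs_sc (x / A)
  nlinarith

lemma gw'_bd (A x : ℝ) (hA : 0 < A) : |gw' A x| ≤ 2 / A * gw A x := by
  unfold gw'
  rw [abs_mul, abs_mul, abs_neg, abs_of_pos (gw_pos A x), abs_of_pos (by positivity : 0 < 2 / A)]
  have h1 := abs_sc (x / A)
  have h2 := gw_pos A x
  have h3 : 0 < 2 / A := by positivity
  apply mul_le_mul_of_nonneg_right _ h2.le
  nlinarith

lemma exp_le_gw (A x : ℝ) : exp (-2 * |x| / A) ≤ gw A x ∨ A ≤ 0 := by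
  by_cases hA : A ≤ 0
  · right; exact hA
  left
  push Not at hA
  have h1 : cosh (x / A) ≤ exp |x / A| := by
    rw [← cosh_abs, cosh_eq]
    have : exp (-|x / A|) ≤ exp |x / A| := exp_le_exp.2 (by have := abs_nonneg (x / A); linarith)
    linarith
  have h := cosh_pos (x / A)
  have h2 : exp (-2 * |x| / A) = (exp |x / A| ^ 2)⁻¹ := by
    rw [← exp_nat_mul, ← exp_neg, abs_div, abs_of_pos hA]
    congr 1; push_cast; ring
  rw [h2, gw, one_div]
  apply inv_anti₀ (by positivity)
  exact pow_le_pow_left₀ h.le h1 2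

lemma one_add_sq_le (z : ℝ) : 1 + z ^ 2 ≤ cosh z ^ 2 := by
  rw [cosh_sq]
  have : z ^ 2 ≤ sinh z ^ 2 := by
    rw [← sq_abs z, ← sq_abs (sinh z)]
    have : |z| ≤ |sinh z| := by
      rcases le_total 0 z with h | h
      · rw [abs_of_nonneg h, abs_of_nonneg (sinh_nonneg_iff.2 h)]; exact self_le_sinh_iff.2 h
      · rw [abs_of_nonpos h, abs_of_nonpos (sinh_nonpos_iff.2 h)]; exact neg_le_neg (sinh_le_self_iff.2 h)
    exact pow_le_pow_left₀ (abs_nonneg _) this 2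
  linarith

lemma gw_le (A x : ℝ) : gw A x ≤ (1 + (x / A) ^ 2)⁻¹ := by
  rw [gw, one_div]
  exact inv_anti₀ (by positivity) (one_add_sq_le _)

lemma gw_int (A : ℝ) (hA : 0 < A) : Integrable (gw A) := by
  have h := (integrable_inv_one_add_sq).comp_div hA.ne'
  refine Integrable.mono' h (gw_cont A).aestronglyMeasurable (Eventually.of_forall fun x => ?_)
  rw [Real.norm_eq_abs, abs_of_pos (gw_pos A x)]
  exact gw_le A x

lemma gw_far (A R x : ℝ) (hA : 0 < A) (hR : 0 < R) (hx : R ≤ |x|) : gw A x ≤ A / R := by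
  refine (gw_le A x).trans ?_
  have h1 : (R / A) ^ 2 ≤ (x / A) ^ 2 := by
    rw [div_pow, div_pow, ← sq_abs x]
    gcongr
  have h2 : 0 < R / A := by positivity
  rw [show A / R = (R / A)⁻¹ by rw [inv_div]]
  apply inv_anti₀ h2
  nlinarith [sq_nonneg (R / A - 1)]

lemma int_bdd_mul (A y : ℝ) (hA : 0 < A) (f : ℝ → ℝ) (hf : Continuous f) (B : ℝ) (hB : ∀ x, |f x| ≤ B) :
    Integrable (fun x => gw A (x - y) * f x) := by
  have hc := gw_cont A
  refine Integrable.mono' (((gw_int A hA).comp_sub_right y).mul_const B) (by fun_prop)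
    (Eventually.of_forall fun x => ?_)
  rw [Real.norm_eq_abs, abs_mul, abs_of_pos (gw_pos _ _)]
  exact mul_le_mul_of_nonneg_left (hB x) (gw_pos _ _).le

lemma Pot.i0 {h f f1 : ℝ → ℝ} (H : Pot h f f1) (A y : ℝ) (hA : 0 < A) :
    Integrable (fun x => gw A (x - y) * f x ^ 2) := by
  obtain ⟨B, hB⟩ := H.bd
  have := H.c0
  refine int_bdd_mul A y hA _ (by fun_prop) (B ^ 2) fun x => ?_
  rw [abs_of_nonneg (sq_nonneg _), ← sq_abs]
  exact pow_le_pow_left₀ (abs_nonneg _) (hB x).1 2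

lemma Pot.i1 {h f f1 : ℝ → ℝ} (H : Pot h f f1) (A y : ℝ) (hA : 0 < A) :
    Integrable (fun x => gw A (x - y) * f1 x ^ 2) := by
  obtain ⟨B, hB⟩ := H.bd
  have := H.c1
  refine int_bdd_mul A y hA _ (by fun_prop) (B ^ 2) fun x => ?_
  rw [abs_of_nonneg (sq_nonneg _), ← sq_abs]
  exact pow_le_pow_left₀ (abs_nonneg _) (hB x).2 2

lemma Pot.ell {h f f1 : ℝ → ℝ} (H : Pot h f f1) (ch : Continuous h) (A y : ℝ) (hA : 4 ≤ A)
    (hi : Integrable (fun x => gw A (x - y) * h x ^ 2)) :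
    (∫ x, gw A (x - y) * f x ^ 2) + (∫ x, gw A (x - y) * f1 x ^ 2)
      ≤ 2 * ∫ x, gw A (x - y) * h x ^ 2 := by
  have hA0 : 0 < A := by linarith
  have c0 := H.c0
  have c1 := H.c1
  have i0 := H.i0 A y hA0
  have i1 := H.i1 A y hA0
  have gc := gw_cont A
  have gc' := gw'_cont A
  have hg' : ∀ x, |gw' A (x - y)| ≤ gw A (x - y) / 2 := fun x => by
    refine (gw'_bd A (x - y) hA0).trans ?_
    have h1 := gw_pos A (x - y)
    have : 2 / A ≤ 1 / 2 := by rw [div_le_div_iff₀ hA0 (by norm_num)]; linarith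
    nlinarith
  have hyng : ∀ (a b w : ℝ), |w * (a * b)| ≤ |w| * a ^ 2 + |w| * b ^ 2 := fun a b w => by
    rw [abs_mul, ← mul_add]
    apply mul_le_mul_of_nonneg_left _ (abs_nonneg w)
    rw [abs_le]; constructor <;> nlinarith [sq_nonneg (a + b), sq_nonneg (a - b)]
  have iff1 : Integrable (fun x => gw A (x - y) * (f x * f1 x)) := by
    refine Integrable.mono' (i0.add i1) (by fun_prop) (Eventually.of_forall fun x => ?_)
    have := hyng (f x) (f1 x) (gw A (x - y))
    rw [abs_of_pos (gw_pos A (x - y))] at this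
    exact this
  have ifh : Integrable (fun x => gw A (x - y) * (f x * h x)) := by
    refine Integrable.mono' (i0.add hi) (by fun_prop) (Eventually.of_forall fun x => ?_)
    have := hyng (f x) (h x) (gw A (x - y))
    rw [abs_of_pos (gw_pos A (x - y))] at this
    exact this
  have igf : Integrable (fun x => gw' A (x - y) * (f x * f1 x)) := by
    refine Integrable.mono' (i0.add i1) (by fun_prop) (Eventually.of_forall fun x => ?_)
    have e1 := hyng (f x) (f1 x) (gw' A (x - y))
    have e2 := hg' x
    have e3 := gw_pos A (x - y)
    have e4 : |gw' A (x - y)| ≤ gw A (x - y) := by linarith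
    refine e1.trans (add_le_add ?_ ?_)
    · exact mul_le_mul_of_nonneg_right e4 (sq_nonneg _)
    · exact mul_le_mul_of_nonneg_right e4 (sq_nonneg _)
  have iF' : Integrable (fun x => gw' A (x - y) * (f x * f1 x) + (gw A (x - y) * f1 x ^ 2 +
      (gw A (x - y) * f x ^ 2 - gw A (x - y) * (f x * h x)))) := igf.add (i1.add (i0.sub ifh))
  have hz := integral_eq_zero_of_hasDerivAt_of_integrable (f := fun x => gw A (x - y) * (f x * f1 x))
    (f' := fun x => gw' A (x - y) * (f x * f1 x) + (gw A (x - y) * f1 x ^ 2 +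
      (gw A (x - y) * f x ^ 2 - gw A (x - y) * (f x * h x))))
    (fun x => (((gw_deriv A (x - y)).comp_sub_const x y).mul ((H.d0 x).mul (H.d1 x))).congr_deriv
      (by simp only [Pi.mul_apply]; ring)) iF' iff1
  have hm : ∫ x, (gw A (x - y) * f x ^ 2 + gw A (x - y) * f1 x ^ 2) ≤
      ∫ x, (4 * (gw' A (x - y) * (f x * f1 x) + (gw A (x - y) * f1 x ^ 2 +
      (gw A (x - y) * f x ^ 2 - gw A (x - y) * (f x * h x)))) + 2 * (gw A (x - y) * h x ^ 2)) := by
    apply integral_mono (i0.add i1) ((iF'.const_mul 4).add (hi.const_mul 2))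
    intro x
    have e1 := hg' x
    have e3 := gw_pos A (x - y)
    have e2 : |gw' A (x - y) * (f x * f1 x)| ≤ gw A (x - y) / 2 * ((f x ^ 2 + f1 x ^ 2) / 2) := by
      rw [abs_mul]
      apply mul_le_mul e1 _ (abs_nonneg _) (by positivity)
      rw [abs_le]; constructor <;> nlinarith [sq_nonneg (f x + f1 x), sq_nonneg (f x - f1 x)]
    have e4 := (abs_le.1 e2).1
    have e5 := mul_nonneg e3.le (sq_nonneg (f x - h x))
    have e6 := mul_nonneg e3.le (sq_nonneg (f1 x))
    simp only [Pi.add_apply]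
    nlinarith
  rw [integral_add i0 i1, integral_add (iF'.const_mul 4) (hi.const_mul 2), integral_const_mul,
    integral_const_mul, hz] at hm
  linarith

end VB

namespace VB
open Set Filter Topology

structure Cut (χ χ' : ℝ → ℝ) (C : ℝ) : Prop where
  d : ∀ x, HasDerivAt χ (χ' x) x
  c : Continuous χ'
  one : ∀ x, |x| ≤ 1 → χ x = 1
  s : ∀ x, 2 ≤ |x| → χ x = 0
  s' : ∀ x, 2 ≤ |x| → χ' x = 0
  nn : ∀ x, 0 ≤ χ x
  le : ∀ x, χ x ≤ 1
  Cpos : 0 < C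
  bd : ∀ x, |χ' x| ≤ C * gw 1 x

lemma exists_cut : ∃ χ χ' C, Cut χ χ' C := by
  let f : ContDiffBump (0:ℝ) := ⟨1, 2, one_pos, by norm_num⟩
  have hsm : ContDiff ℝ 1 f := f.contDiff
  have hc : Continuous (deriv f) := hsm.continuous_deriv (by norm_num)
  have hs : ∀ x, 2 ≤ |x| → f x = 0 := fun x hx => f.zero_of_le_dist (by simpa using hx)
  have hd : ∀ x, HasDerivAt f (deriv f x) x := fun x =>
    (hsm.differentiable (by norm_num) x).hasDerivAt
  have hs' : ∀ x, 2 ≤ |x| → deriv f x = 0 := fun x hx => by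
    have hmin : IsLocalMin f x := by
      refine Eventually.of_forall fun z => ?_
      change f x ≤ f z
      rw [hs x hx]; exact f.nonneg
    exact hmin.deriv_eq_zero
  obtain ⟨B, hB⟩ := (isCompact_closedBall (0:ℝ) 2).exists_bound_of_continuousOn
    (f := fun x => deriv f x / gw 1 x) ((hc.div (gw_cont 1) fun x => (gw_pos 1 x).ne').continuousOn)
  refine ⟨f, deriv f, |B| + 1, hd, hc, fun x hx => f.one_of_mem_closedBall (by simpa using hx), hs, hs',
    fun x => f.nonneg, fun x => f.le_one, by positivity, fun x => ?_⟩
  have hg := gw_pos 1 x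
  by_cases hx : 2 ≤ |x|
  · rw [hs' x hx, abs_zero]; positivity
  · push Not at hx
    have h := hB x (by simpa using hx.le)
    rw [Real.norm_eq_abs, abs_div, abs_of_pos hg, div_le_iff₀ hg] at h
    refine h.trans ?_
    have := le_abs_self B
    nlinarith

lemma Cut.cont {χ χ' : ℝ → ℝ} {C : ℝ} (h : Cut χ χ' C) : Continuous χ :=
  continuous_iff_continuousAt.2 fun x => (h.d x).continuousAt

lemma Cut.scale {χ χ' : ℝ → ℝ} {C : ℝ} (h : Cut χ χ' C) (R x : ℝ) :
    HasDerivAt (fun x => χ (x / R)) (χ' (x / R) / R) x := by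
  have h1 : HasDerivAt (fun x => x / R) (1 / R) x := (hasDerivAt_id x).div_const R
  exact ((h.d (x / R)).comp x h1).congr_deriv (by ring)

lemma gw_scale (R x : ℝ) : gw 1 (x / R) = gw R x := by simp [gw]

lemma Cut.bdR {χ χ' : ℝ → ℝ} {C : ℝ} (h : Cut χ χ' C) (R x : ℝ) (hR : 0 < R) :
    |χ' (x / R) / R| ≤ C / R * gw R x := by
  rw [abs_div, abs_of_pos hR, div_mul_eq_mul_div]
  have := h.bd (x / R)
  rw [gw_scale] at this
  gcongr

lemma absdiv {R x : ℝ} (hR : 0 < R) (hx : 2 * R ≤ |x|) : 2 ≤ |x / R| := by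
  rw [abs_div, abs_of_pos hR, le_div_iff₀ hR]; exact hx

lemma Cut.cwP {χ χ' : ℝ → ℝ} {C : ℝ} (h : Cut χ χ' C) (A R : ℝ) (hA : A ≠ 0) (hR : 0 < R) :
    CW (fun x => Ph A x * χ (x / R)) (fun x => gw A x * χ (x / R) + Ph A x * (χ' (x / R) / R)) (2 * R) where
  d x := (Ph_deriv A x hA).mul (h.scale R x)
  c := by
    have := gw_cont A; have := Ph_cont A; have := h.cont; have := h.c
    fun_prop
  s x hx := by rw [h.s _ (absdiv hR hx), mul_zero]
  s' x hx := by rw [h.s _ (absdiv hR hx), h.s' _ (absdiv hR hx)]; ring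

lemma Cut.cwG {χ χ' : ℝ → ℝ} {C : ℝ} (h : Cut χ χ' C) (A R : ℝ) (hR : 0 < R) :
    CW (fun x => gw A x * χ (x / R)) (fun x => gw' A x * χ (x / R) + gw A x * (χ' (x / R) / R)) (2 * R) where
  d x := (gw_deriv A x).mul (h.scale R x)
  c := by
    have := gw_cont A; have := gw'_cont A; have := h.cont; have := h.c
    fun_prop
  s x hx := by rw [h.s _ (absdiv hR hx), mul_zero]
  s' x hx := by rw [h.s _ (absdiv hR hx), h.s' _ (absdiv hR hx)]; ring

lemma exists_bump : ∃ b b' : ℝ → ℝ, CW b b' 2 ∧ (∀ x, 0 ≤ b x) ∧ (∀ x, b x ≤ 1) ∧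
    (∀ x, b x ≠ 0 → 1 ≤ x) ∧ 0 < ∫ x, b x := by
  obtain ⟨χ, χ', C, h⟩ := exists_cut
  have hd : ∀ x, HasDerivAt (fun x => χ (4 * (x - 3/2))) (χ' (4 * (x - 3/2)) * 4) x := fun x => by
    have h1 : HasDerivAt (fun x : ℝ => 4 * (x - 3/2)) 4 x := by
      simpa using ((hasDerivAt_id x).sub_const (3/2 : ℝ)).const_mul (4:ℝ)
    exact (h.d _).comp x h1
  have hout : ∀ x : ℝ, 2 ≤ |x| → 2 ≤ |4 * (x - 3/2)| := fun x hx => by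
    rcases le_abs.1 hx with h | h
    · exact le_abs.2 (Or.inl (by linarith))
    · exact le_abs.2 (Or.inr (by linarith))
  have hc := h.cont
  have hc' := h.c
  have cw : CW (fun x => χ (4 * (x - 3/2))) (fun x => χ' (4 * (x - 3/2)) * 4) 2 :=
    ⟨hd, by fun_prop, fun x hx => h.s _ (hout x hx), fun x hx => by
      simp only [h.s' _ (hout x hx), zero_mul]⟩
  refine ⟨_, _, cw, fun x => h.nn _, fun x => h.le _, ?_, ?_⟩
  · intro x hx
    by_contra hlt
    push Not at hlt
    exact hx (h.s _ (le_abs.2 (Or.inr (by linarith))))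
  · have hi : Integrable (fun x => χ (4 * (x - 3/2))) := by
      simpa using cw.compact 0 (fun _ => 1) continuous_const
    refine Continuous.integral_pos_of_hasCompactSupport_nonneg_nonzero (x := 3/2) (by fun_prop) ?_ (fun x => h.nn _) ?_
    · refine HasCompactSupport.intro (isCompact_closedBall 0 2) fun x hx => ?_
      simp only [Metric.mem_closedBall, dist_zero_right, Real.norm_eq_abs, not_le] at hx
      exact h.s _ (hout x hx.le)
    · simp [h.one 0 (by simp)]

end VB

namespace VB
open Set Filter Topology

lemma grow (f f1 f2 : ℝ → ℝ) (hf : ∀ x, HasDerivAt f (f1 x) x) (hf1 : ∀ x, HasDerivAt f1 (f2 x) x)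
    (h0 : 0 < f1 0) (c : ℝ) (hc : 0 < c) (h : ∀ x, f 0 ≤ f x → c ≤ f2 x) :
    ∀ x, 0 ≤ x → c * x ≤ f1 x := by
  have cf : Continuous f := continuous_iff_continuousAt.2 fun x => (hf x).continuousAt
  have cf1 : Continuous f1 := continuous_iff_continuousAt.2 fun x => (hf1 x).continuousAt
  have key : ∀ x, 0 < x → (∀ z, 0 < z → z < x → 0 < f1 z) → c * x ≤ f1 x - f1 0 := by
    intro x hx hz
    obtain ⟨z, ⟨hz1, hz2⟩, hz3⟩ := exists_hasDerivAt_eq_slope f1 f2 hx cf1.continuousOn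
      (fun z _ => hf1 z)
    obtain ⟨z', ⟨hz1', hz2'⟩, hz3'⟩ := exists_hasDerivAt_eq_slope f f1 hz1 cf.continuousOn
      (fun z _ => hf z)
    have p1 := hz z' hz1' (hz2'.trans hz2)
    rw [hz3', sub_zero] at p1
    have p2 : 0 < f z - f 0 := by
      by_contra hcon
      push Not at hcon
      exact absurd p1 (not_lt.2 (div_nonpos_of_nonpos_of_nonneg hcon hz1.le))
    have p3 := h z (by linarith)
    rw [hz3, sub_zero, le_div_iff₀ hx] at p3
    exact p3
  have pos : ∀ x, 0 ≤ x → 0 < f1 x := by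
    by_contra hcon
    push Not at hcon
    obtain ⟨x, hx, hx1⟩ := hcon
    let S := {z | 0 ≤ z ∧ f1 z ≤ 0}
    have hS : IsClosed S := (isClosed_le continuous_const continuous_id).inter
      (isClosed_le cf1 continuous_const)
    have hb : BddBelow S := ⟨0, fun z hz => hz.1⟩
    have hm : sInf S ∈ S := hS.csInf_mem ⟨x, hx, hx1⟩ hb
    have hp : 0 < sInf S := by
      rcases hm.1.lt_or_eq with h' | h'
      · exact h'
      · have := hm.2; rw [← h'] at this; linarith
    have := key (sInf S) hp (fun z hz1 hz2 => by
      by_contra hcc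
      push Not at hcc
      have := csInf_le hb (show z ∈ S from ⟨hz1.le, hcc⟩)
      linarith)
    have h2 := hm.2
    nlinarith
  intro x hx
  rcases hx.lt_or_eq with h' | h'
  · have := key x h' (fun z hz _ => pos z hz.le)
    linarith
  · rw [← h']; simpa using h0.le

lemma start (σ δ : ℝ) (n φ φx : ℝ → ℝ) (hφ : ∀ x, HasDerivAt φ (φx x) x)
    (hφx : ∀ x, HasDerivAt φx (exp (φ x) - 1 - n x) x) (hσ : σ = 1 ∨ σ = -1) (hn : ∀ x, |n x| ≤ δ)
    (x0 : ℝ) (h0 : δ < σ * (exp (φ x0) - 1)) :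
    ∃ x1 s, (s = 1 ∨ s = -1) ∧ δ < σ * (exp (φ x1) - 1) ∧ 0 < s * σ * φx x1 := by
  have cφ : Continuous φ := continuous_iff_continuousAt.2 fun x => (hφ x).continuousAt
  rcases lt_trichotomy (σ * φx x0) 0 with h | h | h
  · exact ⟨x0, -1, Or.inr rfl, h0, by linarith⟩
  · have hd : HasDerivAt (fun x => σ * φx x) (σ * (exp (φ x0) - 1 - n x0)) x0 := (hφx x0).const_mul σ
    have hpos : 0 < σ * (exp (φ x0) - 1 - n x0) := by
      have := hn x0
      have h1 := abs_le.1 this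
      rcases hσ with rfl | rfl <;> nlinarith
    have e1 := (eventually_nhdsWithin_sign_eq_of_deriv_pos (f := fun x => σ * φx x) (x₀ := x0)
      (by rw [hd.deriv]; exact hpos) h)
    have e2 : ∀ᶠ x in 𝓝 x0, δ < σ * (exp (φ x) - 1) :=
      (show Continuous fun x => σ * (exp (φ x) - 1) by fun_prop).continuousAt.eventually
        (lt_mem_nhds h0)
    have e3 := (e1.and e2).filter_mono (nhdsWithin_le_nhds (s := Ioi x0))
    obtain ⟨x1, ⟨hx1, hx2⟩, hx3⟩ := (e3.and self_mem_nhdsWithin).exists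
    refine ⟨x1, 1, Or.inl rfl, hx2, ?_⟩
    have : SignType.sign (x1 - x0) = 1 := sign_pos (sub_pos.2 hx3)
    rw [this] at hx1
    have := sign_eq_one_iff.1 hx1
    simpa using this
  · exact ⟨x0, 1, Or.inl rfl, h0, by linarith⟩

end VB

namespace VB
open Set Filter Topology

lemma growphi (σ s δ c : ℝ) (n φ φx : ℝ → ℝ) (hφ : ∀ x, HasDerivAt φ (φx x) x)
    (hφx : ∀ x, HasDerivAt φx (exp (φ x) - 1 - n x) x) (hσ : σ = 1 ∨ σ = -1) (hs : s = 1 ∨ s = -1)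
    (hn : ∀ x, |n x| ≤ δ) (hc : 0 < c)
    (x1 : ℝ) (h0 : δ + c ≤ σ * (exp (φ x1) - 1)) (h1 : 0 < s * σ * φx x1) (r : ℝ) (hr : 0 ≤ r) :
    c * r ≤ s * σ * φx (x1 + s * r) := by
  have hl : ∀ r : ℝ, HasDerivAt (fun r => x1 + s * r) s r := fun r => by
    simpa using ((hasDerivAt_id r).const_mul s).const_add x1
  have hss : s * s = 1 := by rcases hs with rfl | rfl <;> norm_num
  refine grow (fun r => σ * φ (x1 + s * r)) (fun r => s * σ * φx (x1 + s * r))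
    (fun r => σ * (exp (φ (x1 + s * r)) - 1 - n (x1 + s * r))) ?_ ?_ (by simpa using h1) c hc ?_ r hr
  · intro r
    exact (((hφ _).comp r (hl r)).const_mul σ).congr_deriv (by ring)
  · intro r
    refine (((hφx _).comp r (hl r)).const_mul (s * σ)).congr_deriv ?_
    linear_combination (σ * (exp (φ (x1 + s * r)) - 1 - n (x1 + s * r))) * hss
  · intro z hz
    simp only [mul_zero, add_zero] at hz
    have hb := abs_le.1 (hn (x1 + s * z))
    rcases hσ with rfl | rfl
    · have : exp (φ x1) ≤ exp (φ (x1 + s * z)) := exp_le_exp.2 (by linarith)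
      linarith
    · have : exp (φ (x1 + s * z)) ≤ exp (φ x1) := exp_le_exp.2 (by linarith)
      linarith

lemma CW.scale {b b' : ℝ → ℝ} (h : CW b b' 2) (s L : ℝ) (hs : s = 1 ∨ s = -1) (hL : 0 < L) :
    CW (fun x => b (s / L * x)) (fun x => b' (s / L * x) * (s / L)) (2 * L) := by
  have hab : ∀ x, 2 * L ≤ |x| → 2 ≤ |s / L * x| := fun x hx => by
    have h1 : |s| = 1 := by rcases hs with rfl | rfl <;> simp
    rw [abs_mul, abs_div, h1, abs_of_pos hL, one_div, inv_mul_eq_div, le_div_iff₀ hL]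
    exact hx
  have := h.c
  refine ⟨fun x => ?_, by fun_prop, fun x hx => h.s _ (hab x hx), fun x hx => ?_⟩
  · have h1 : HasDerivAt (fun x => s / L * x) (s / L) x := by
      simpa using (hasDerivAt_id x).const_mul (s / L)
    exact (h.d _).comp x h1
  · show b' _ * _ = 0
    rw [h.s' _ (hab x hx), zero_mul]

lemma CW.bound {b b' : ℝ → ℝ} {r : ℝ} (h : CW b b' r) : ∃ B, 0 ≤ B ∧ ∀ x, |b' x| ≤ B := by
  obtain ⟨B, hB⟩ := (isCompact_closedBall (0:ℝ) r).exists_bound_of_continuousOn h.c.continuousOn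
  refine ⟨max B 0, le_max_right _ _, fun x => ?_⟩
  by_cases hx : |x| ≤ r
  · exact (hB x (by simpa using hx)).trans (le_max_left _ _)
  · rw [h.s' x (not_le.1 hx).le]; simp

lemma phi_side (σ δ M M' : ℝ) (hσ : σ = 1 ∨ σ = -1)
    (n u ut f fx φ φx : ℝ → ℝ → ℝ)
    (hut : ∀ t x, HasDerivAt (fun s => u s x) (ut t x) t)
    (cu : Continuous (Function.uncurry u)) (cut : Continuous (Function.uncurry ut))
    (hf : ∀ t x, HasDerivAt (f t) (fx t x) x) (cfx : ∀ t, Continuous (fx t))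
    (hφ : ∀ t x, HasDerivAt (φ t) (φx t x) x)
    (hφx : ∀ t x, HasDerivAt (φx t) (exp (φ t x) - 1 - n t x) x)
    (ct : ∀ x, Continuous fun t => φ t x) (cx : ∀ x, Continuous fun t => φx t x)
    (eu : ∀ t x, ut t x = -(fx t x + φx t x))
    (hn : ∀ t x, |n t x| ≤ δ)
    (iu : ∀ t, Integrable fun x => u t x ^ 2) (hM : ∀ t, ∫ x, u t x ^ 2 ≤ M)
    (hM' : ∀ t x, |f t x| ≤ M' + u t x ^ 2) (hM'0 : 0 ≤ M') :
    ∀ t x, σ * (exp (φ t x) - 1) ≤ δ := by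
  by_contra hcon
  push Not at hcon
  obtain ⟨t0, x0, h0⟩ := hcon
  obtain ⟨x1, s, hs, h1, h2⟩ := start σ δ (n t0) (φ t0) (φx t0) (hφ t0) (hφx t0) hσ (hn t0) x0 h0
  obtain ⟨c, hc, hc1⟩ : ∃ c, 0 < c ∧ δ + c < σ * (exp (φ t0 x1) - 1) :=
    ⟨(σ * (exp (φ t0 x1) - 1) - δ) / 2, by linarith, by linarith⟩
  have e1 : ∀ᶠ t in 𝓝 t0, δ + c < σ * (exp (φ t x1) - 1) :=
    (show Continuous fun t => σ * (exp (φ t x1) - 1) by have := ct x1; fun_prop).continuousAt.eventually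
      (lt_mem_nhds hc1)
  have e2 : ∀ᶠ t in 𝓝 t0, 0 < s * σ * φx t x1 :=
    (show Continuous fun t => s * σ * φx t x1 by have := cx x1; fun_prop).continuousAt.eventually
      (lt_mem_nhds h2)
  obtain ⟨h, hh, hball⟩ := Metric.eventually_nhds_iff.1 (e1.and e2)
  obtain ⟨b, b', hb, hb0, hb1, hb2, hI⟩ := exists_bump
  obtain ⟨B, hB0, hB⟩ := hb.bound
  set I := ∫ x, b x with hIdef
  have cb := hb.cont
  have cb' := hb.c
  have ib : Integrable b := by simpa using hb.compact 0 (fun _ => 1) continuous_const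
  have ib' : Integrable b' := by simpa using hb.compact' 0 (fun _ => 1) continuous_const
  set N := ∫ x, |b' x| with hN
  have hN0 : 0 ≤ N := integral_nonneg fun x => abs_nonneg _
  have hM0 : 0 ≤ M := (integral_nonneg fun x => sq_nonneg _).trans (hM 0)
  have cu' : ∀ t, Continuous (u t) := fun t => cu.comp (by fun_prop : Continuous (fun x : ℝ => (t, x)))
  have cf : ∀ t, Continuous (f t) := fun t => continuous_iff_continuousAt.2 fun x => (hf t x).continuousAt
  have cφ : ∀ t, Continuous (φ t) := fun t => continuous_iff_continuousAt.2 fun x => (hφ t x).continuousAt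
  have cφx : ∀ t, Continuous (φx t) := fun t => continuous_iff_continuousAt.2 fun x => (hφx t x).continuousAt
  have hσs : |s * σ| = 1 := by rcases hs with rfl | rfl <;> rcases hσ with rfl | rfl <;> simp
  have habs : |s| = 1 := by rcases hs with rfl | rfl <;> simp
  have hss : s * s = 1 := by rcases hs with rfl | rfl <;> norm_num
  have main : ∀ L, 1 ≤ L → h / 2 * (c * L ^ 2 * I - (M' * N + B * M)) ≤ 2 * (L * I + M) := by
    intro L hL
    have hL0 : 0 < L := by linarith
    have hcw := hb.scale s L hs hL0
    have hsL : s / L ≠ 0 := div_ne_zero (by rintro rfl; simp at habs) hL0.ne'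
    have hinv : |(s / L)⁻¹| = L := by rw [abs_inv, abs_div, habs, abs_of_pos hL0]; simp
    have sc : ∀ g : ℝ → ℝ, ∫ x, g (s / L * (x - x1)) = L * ∫ x, g x := by
      intro g
      rw [integral_sub_right_eq_self (fun x => g (s / L * x)) x1, Measure.integral_comp_mul_left, hinv,
        smul_eq_mul]
    have isc : ∀ g : ℝ → ℝ, Integrable g → Integrable fun x => g (s / L * (x - x1)) := by
      intro g hg
      exact (hg.comp_mul_left' hsL).comp_sub_right x1
    let V : ℝ → ℝ := fun t => ∫ x, b (s / L * (x - x1)) * u t x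
    let V' : ℝ → ℝ := fun t => ∫ x, b' (s / L * (x - x1)) * (s / L) * (f t x + φ t x)
    have hV : ∀ t, HasDerivAt V (V' t) t := by
      intro t
      have := law hcw (fun _ => x1) contDiff_const u ut (fun t x => f t x + φ t x)
        (fun t x => fx t x + φx t x) (fun _ _ => 0) hut cu cut t
        (fun x => (hf t x).add (hφ t x)) ((cfx t).add (cφx t)) continuous_const
        (fun x => by rw [eu, add_zero])
      simpa using this
    have hVb : ∀ t, |V t| ≤ L * I + M := by
      intro t
      calc |V t| ≤ ∫ x, |b (s / L * (x - x1)) * u t x| := abs_integral_le_integral_abs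
        _ ≤ ∫ x, (b (s / L * (x - x1)) + u t x ^ 2) := by
          refine integral_mono (hcw.compact x1 _ (cu' t)).abs ((isc b ib).add (iu t)) fun x => ?_
          simp only
          rw [abs_mul, abs_of_nonneg (hb0 _)]
          have h3 := hb1 (s / L * (x - x1))
          have h4 := hb0 (s / L * (x - x1))
          have h5 := abs_nonneg (u t x)
          rw [← sq_abs (u t x)]
          nlinarith [sq_nonneg (|u t x| - 1)]
        _ = L * I + ∫ x, u t x ^ 2 := by rw [integral_add (isc b ib) (iu t), sc b]
        _ ≤ L * I + M := by have := hM t; linarith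
    have hV'b : ∀ t, |t - t0| < h → s * σ * V' t ≤ -(c * L ^ 2 * I) + (M' * N + B * M) := by
      intro t ht
      obtain ⟨g1, g2⟩ := hball (show dist t t0 < h from ht)
      have split : V' t = (∫ x, b' (s / L * (x - x1)) * (s / L) * f t x)
          - ∫ x, b (s / L * (x - x1)) * φx t x := by
        have h3 := hcw.ibp x1 (φ t) (φx t) (hφ t) (cφx t)
        rw [h3, sub_neg_eq_add, ← integral_add (hcw.compact' x1 _ (cf t)) (hcw.compact' x1 _ (cφ t))]
        simp only [V', mul_add]
      have p1 : |∫ x, b' (s / L * (x - x1)) * (s / L) * f t x| ≤ M' * N + B * M := by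
        calc _ ≤ ∫ x, |b' (s / L * (x - x1)) * (s / L) * f t x| := abs_integral_le_integral_abs
          _ ≤ ∫ x, (M' / L * |b' (s / L * (x - x1))| + B * u t x ^ 2) := by
            refine integral_mono (hcw.compact' x1 _ (cf t)).abs
              (((isc _ ib'.abs).const_mul _).add ((iu t).const_mul _)) fun x => ?_
            simp only
            rw [abs_mul, abs_mul, abs_div, habs, abs_of_pos hL0]
            have h3 := hM' t x
            have h4 := hB (s / L * (x - x1))
            have h6 := abs_nonneg (b' (s / L * (x - x1)))
            have h5 : 1 / L ≤ 1 := by rw [div_le_one hL0]; exact hL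
            have h7 : 0 < 1 / L := by positivity
            calc |b' (s / L * (x - x1))| * (1 / L) * |f t x|
                ≤ |b' (s / L * (x - x1))| * (1 / L) * (M' + u t x ^ 2) := by gcongr
              _ = M' / L * |b' (s / L * (x - x1))| + |b' (s / L * (x - x1))| * (1 / L) * u t x ^ 2 := by ring
              _ ≤ M' / L * |b' (s / L * (x - x1))| + B * 1 * u t x ^ 2 := by gcongr
              _ = _ := by ring
          _ = M' * N + B * ∫ x, u t x ^ 2 := by
            rw [integral_add ((isc _ ib'.abs).const_mul _) ((iu t).const_mul _), integral_const_mul,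
              integral_const_mul, sc (fun x => |b' x|)]
            field_simp
            rfl
          _ ≤ _ := by have := hM t; gcongr
      have p2 : c * L ^ 2 * I ≤ s * σ * ∫ x, b (s / L * (x - x1)) * φx t x := by
        rw [← integral_const_mul (s * σ)]
        calc c * L ^ 2 * I = ∫ x, c * L * b (s / L * (x - x1)) := by
              rw [integral_const_mul, sc b]; ring
          _ ≤ _ := by
            refine integral_mono ((isc b ib).const_mul _) ((hcw.compact x1 _ (cφx t)).const_mul _)
              fun x => ?_
            simp only
            by_cases hz : b (s / L * (x - x1)) = 0
            · rw [hz]; simp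
            · have h3 := hb2 _ hz
              have h4 : L ≤ s * (x - x1) := by
                have : s / L * (x - x1) = s * (x - x1) / L := by ring
                rw [this, le_div_iff₀ hL0] at h3
                linarith
              have h5 := growphi σ s δ c (n t) (φ t) (φx t) (hφ t) (hφx t) hσ hs (hn t) hc x1 g1.le g2
                (s * (x - x1)) (by linarith)
              have h6 : x1 + s * (s * (x - x1)) = x := by linear_combination (x - x1) * hss
              rw [h6] at h5
              have h7 : c * L ≤ s * σ * φx t x := le_trans (by gcongr) h5
              have h8 := hb0 (s / L * (x - x1))
              nlinarith
      rw [split, mul_sub]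
      have p3 : s * σ * ∫ x, b' (s / L * (x - x1)) * (s / L) * f t x ≤ M' * N + B * M := by
        refine (le_abs_self _).trans ?_
        rw [abs_mul, hσs, one_mul]; exact p1
      linarith
    have hlt : t0 < t0 + h / 2 := by linarith
    obtain ⟨ξ, hξ, hξ2⟩ := exists_hasDerivAt_eq_slope V V' hlt
      (fun t _ => (hV t).continuousAt.continuousWithinAt) (fun t _ => hV t)
    have q1 := hV'b ξ (by rw [abs_lt]; constructor <;> linarith [hξ.1, hξ.2])
    have q2 : h / 2 * V' ξ = V (t0 + h / 2) - V t0 := by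
      have hh2 : h / 2 ≠ 0 := by positivity
      rw [hξ2, add_sub_cancel_left, mul_div_cancel₀ _ hh2]
    have q3 := hVb t0
    have q4 := hVb (t0 + h / 2)
    have q5 : |s * σ * (V (t0 + h / 2) - V t0)| ≤ 2 * (L * I + M) := by
      rw [abs_mul, hσs, one_mul]
      exact (abs_sub _ _).trans (by linarith)
    have q6 := neg_le_of_abs_le q5
    rw [← q2] at q6
    nlinarith
  set K := 2 * I + 2 * M + h / 2 * (M' * N + B * M) with hK
  have hK0 : 0 < K := by positivity
  set α := h / 2 * c * I with hα
  have hα0 : 0 < α := by positivity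
  have m := main (1 + K / α) (by have : 0 ≤ K / α := by positivity
                                 linarith)
  set L := 1 + K / α with hL
  have hL1 : 1 ≤ L := by have : 0 ≤ K / α := by positivity
                         linarith
  have hαL : α * L = α + K := by rw [hL]; field_simp
  have : α * L ^ 2 = (α + K) * L := by rw [← hαL]; ring
  have h3 : 0 ≤ h / 2 * (M' * N + B * M) := by positivity
  nlinarith [mul_nonneg hM0 (sub_nonneg.2 hL1), mul_nonneg h3 (sub_nonneg.2 hL1)]

end VB

namespace VB
open Set Filter Topology

lemma form (a b d κ : ℝ) (ha : 0 < a) (hd : 0 < d) (h : κ ^ 2 * b ^ 2 < 4 * a * d) :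
    ∃ c, 0 < c ∧ ∀ X Z Y : ℝ, |Y| ≤ κ → c * (X ^ 2 + Z ^ 2) ≤ a * X ^ 2 - b * Y * X * Z + d * Z ^ 2 := by
  set c := (4 * a * d - κ ^ 2 * b ^ 2) / (4 * (a + d)) with hc
  have hc0 : 0 < c := div_pos (by linarith) (by positivity)
  have hce : c * (4 * (a + d)) = 4 * a * d - κ ^ 2 * b ^ 2 := by rw [hc]; field_simp
  refine ⟨c, hc0, fun X Z Y hY => ?_⟩
  have hac : 0 < a - c := by
    by_contra hcon
    push Not at hcon
    nlinarith [sq_nonneg (κ * b), mul_pos ha ha]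
  have hY2 : Y ^ 2 ≤ κ ^ 2 := by
    rw [← sq_abs Y]; exact pow_le_pow_left₀ (abs_nonneg _) hY 2
  have h1 : 0 ≤ (a - c) * (d - c) - b ^ 2 * Y ^ 2 / 4 := by
    nlinarith [sq_nonneg b, mul_nonneg (sq_nonneg b) (sub_nonneg.2 hY2), sq_nonneg c]
  have h2 : 0 ≤ (a - c) * ((a - c) * X ^ 2 - b * Y * X * Z + (d - c) * Z ^ 2) := by
    have : (a - c) * ((a - c) * X ^ 2 - b * Y * X * Z + (d - c) * Z ^ 2)
      = ((a - c) * X - b * Y * Z / 2) ^ 2 + ((a - c) * (d - c) - b ^ 2 * Y ^ 2 / 4) * Z ^ 2 := by ring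
    rw [this]
    exact add_nonneg (sq_nonneg _) (mul_nonneg h1 (sq_nonneg _))
  have h3 := nonneg_of_mul_nonneg_right h2 hac
  linarith

lemma coer (k : ℝ) (hk : 0 < k) : ∃ c, 0 < c ∧ ∀ θ Y ν ν1 ν2 ω ω1 ω2 : ℝ, θ = 1 / (2 * (1 + k)) →
    |Y| ≤ k / sqrt (1 + k) →
    c * ((ν - ν2) ^ 2 + (ω - ω2) ^ 2)
      + (-(1 - θ) * (ω1 ^ 2 + ω * ω2) - (k + 1 / 2) * (ν1 ^ 2 + ν * ν2) + Y * (2 * ν1 * ω1 + ν * ω2 + ν2 * ω))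
    ≤ 1 / 2 * (ω - ω2) ^ 2 + k / 2 * (ν - ν2) ^ 2 - 1 / 2 * ν1 ^ 2 + 1 / 2 * ν ^ 2 - Y * (ν - ν2) * (ω - ω2)
      - θ * ((ω - ω2) ^ 2 - (ω - ω2) * ω + (k * (ν - ν2) + ν) * ν2) := by
  have hs : (k / sqrt (1 + k)) ^ 2 = k ^ 2 / (1 + k) := by
    rw [div_pow, sq_sqrt (by positivity)]
  have hθ1 : (1:ℝ) - 1 / (2 * (1 + k)) = (1 + 2 * k) / (2 * (1 + k)) := by field_simp; ring
  have hθ2 : (1:ℝ) / 2 - 1 / (2 * (1 + k)) = k / (2 * (1 + k)) := by field_simp; ring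
  obtain ⟨c1, hc1, H1⟩ := form ((k + 1) / 2) 1 (1 / 2) (k / sqrt (1 + k)) (by positivity) (by norm_num)
    (by rw [hs, one_pow, mul_one, div_lt_iff₀ (by positivity)]; nlinarith)
  obtain ⟨c2, hc2, H2⟩ := form k 2 (1 - 1 / (2 * (1 + k))) (k / sqrt (1 + k)) hk
    (by rw [hθ1]; positivity)
    (by rw [hs, hθ1, div_mul_eq_mul_div, ← mul_div_assoc, div_lt_div_iff₀ (by positivity) (by positivity)]
        nlinarith [mul_pos hk hk, mul_pos (mul_pos hk hk) hk])
  obtain ⟨c3, hc3, H3⟩ := form (k / 2 + 1 / (2 * (1 + k)) * k) 1 (1 / 2 - 1 / (2 * (1 + k)))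
    (k / sqrt (1 + k)) (by positivity) (by rw [hθ2]; positivity)
    (by
      rw [hs, hθ2]
      have : 4 * (k / 2 + 1 / (2 * (1 + k)) * k) * (k / (2 * (1 + k))) = k ^ 2 * (k + 2) / (1 + k) ^ 2 := by
        field_simp; ring
      rw [this, one_pow, mul_one, div_lt_div_iff₀ (by positivity) (by positivity)]
      nlinarith [mul_pos hk hk, mul_pos (mul_pos hk hk) hk])
  have hm : 0 < min c1 c3 := lt_min hc1 hc3
  refine ⟨min c1 c3 / 2, by positivity, ?_⟩
  intro θ Y ν ν1 ν2 ω ω1 ω2 hθ hY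
  have g1 := H1 ν ω Y hY
  have g2 := H2 ν1 ω1 Y hY
  have g3 := H3 ν2 ω2 Y hY
  rw [← hθ] at g2 g3
  have hθk : θ * (1 + k) = 1 / 2 := by rw [hθ]; field_simp
  have m1 : min c1 c3 * (ν ^ 2 + ω ^ 2) ≤ c1 * (ν ^ 2 + ω ^ 2) :=
    mul_le_mul_of_nonneg_right (min_le_left _ _) (by positivity)
  have m3 : min c1 c3 * (ν2 ^ 2 + ω2 ^ 2) ≤ c3 * (ν2 ^ 2 + ω2 ^ 2) :=
    mul_le_mul_of_nonneg_right (min_le_right _ _) (by positivity)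
  have m2 : 0 ≤ c2 * (ν1 ^ 2 + ω1 ^ 2) := by positivity
  have m4 : min c1 c3 / 2 * ((ν - ν2) ^ 2 + (ω - ω2) ^ 2)
      ≤ min c1 c3 * (ν ^ 2 + ω ^ 2) + min c1 c3 * (ν2 ^ 2 + ω2 ^ 2) := by
    nlinarith [mul_nonneg hm.le (sq_nonneg (ν + ν2)), mul_nonneg hm.le (sq_nonneg (ω + ω2))]
  have e : 1 / 2 * (ω - ω2) ^ 2 + k / 2 * (ν - ν2) ^ 2 - 1 / 2 * ν1 ^ 2 + 1 / 2 * ν ^ 2 - Y * (ν - ν2) * (ω - ω2)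
      - θ * ((ω - ω2) ^ 2 - (ω - ω2) * ω + (k * (ν - ν2) + ν) * ν2)
      = ((k + 1) / 2 * ν ^ 2 - 1 * Y * ν * ω + 1 / 2 * ω ^ 2)
      + (k * ν1 ^ 2 - 2 * Y * ν1 * ω1 + (1 - θ) * ω1 ^ 2)
      + ((k / 2 + θ * k) * ν2 ^ 2 - 1 * Y * ν2 * ω2 + (1 / 2 - θ) * ω2 ^ 2)
      + (-(1 - θ) * (ω1 ^ 2 + ω * ω2) - (k + 1 / 2) * (ν1 ^ 2 + ν * ν2)
        + Y * (2 * ν1 * ω1 + ν * ω2 + ν2 * ω)) := by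
    linear_combination (-ν * ν2) * hθk
  rw [e]
  linarith

lemma young (ε x z : ℝ) (hε : 0 < ε) : |x * z| ≤ ε * x ^ 2 + 1 / ε * z ^ 2 := by
  have h : ε * x ^ 2 + 1 / ε * z ^ 2 - 2 * |x * z| = 1 / ε * (ε * |x| - |z|) ^ 2 := by
    rw [abs_mul, ← sq_abs x, ← sq_abs z]; field_simp; ring
  have h1 : 0 ≤ 1 / ε * (ε * |x| - |z|) ^ 2 := by positivity
  have := abs_nonneg (x * z)
  linarith

set_option maxHeartbeats 1000000 in
lemma errs (k θ ε n u ν ν1 ω φ φ1 f g Q τ : ℝ) (hε : 0 < ε) (hθ0 : 0 < θ) (hθ : θ ≤ 1)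
    (bn : |n| ≤ ε) (bν : |ν| ≤ ε) (bf : |f - k * n| ≤ ε * |n|) (bg : |g - k / 2 * n ^ 2| ≤ ε * n ^ 2)
    (bQ : |Q - φ ^ 2 / 2| ≤ ε * φ ^ 2) :
    1 / 2 * u ^ 2 + k / 2 * n ^ 2 - 1 / 2 * ν1 ^ 2 + 1 / 2 * ν ^ 2
      - θ * (u ^ 2 - u * ω + (k * n + ν) * (ν - n))
      - 10 * ε * (n ^ 2 + u ^ 2 + φ ^ 2 + φ1 ^ 2 + ν ^ 2 + ν1 ^ 2)
      - 4 / ε * ((φ - ν) ^ 2 + (φ1 - ν1) ^ 2 + τ ^ 2) ≤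
    (u ^ 2 / 2 + n * u ^ 2 + g - φ1 ^ 2 / 2 + Q)
      - θ * ((u ^ 2 / 2 + f + φ) * (ν - n) + u * ((1 + n) * u - (ω + τ))) := by
  have a1 : |n * u ^ 2| ≤ ε * u ^ 2 := by
    rw [abs_mul, abs_of_nonneg (sq_nonneg u)]; exact mul_le_mul_of_nonneg_right bn (sq_nonneg u)
  have a2 : |ν * u ^ 2| ≤ ε * u ^ 2 := by
    rw [abs_mul, abs_of_nonneg (sq_nonneg u)]; exact mul_le_mul_of_nonneg_right bν (sq_nonneg u)
  have a3 : |(f - k * n) * (ν - n)| ≤ ε * (2 * n ^ 2 + ν ^ 2) := by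
    rw [abs_mul]
    calc |f - k * n| * |ν - n| ≤ (ε * |n|) * |ν - n| := by gcongr
      _ ≤ (ε * |n|) * (|ν| + |n|) := by gcongr; exact abs_sub _ _
      _ ≤ ε * (2 * n ^ 2 + ν ^ 2) := by
        rw [mul_assoc]
        refine mul_le_mul_of_nonneg_left ?_ hε.le
        rw [← sq_abs n, ← sq_abs ν]
        nlinarith [sq_nonneg (|n| - |ν|), sq_nonneg (|n|), sq_nonneg |ν|]
  have b1 := young ε (φ1 + ν1) (φ1 - ν1) hε
  have b2 := young ε (φ + ν) (φ - ν) hε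
  have b3 := young ε (ν - n) (φ - ν) hε
  have b4 := young ε u τ hε
  rw [abs_le] at *
  have t1 : ∀ X Z : ℝ, X ≤ Z → 0 ≤ Z → θ * X ≤ Z := fun X Z h1 h2 => by nlinarith
  have d1 := t1 (ν * u ^ 2) _ a2.2 (by positivity)
  have d2 := t1 (-(n * u ^ 2)) (ε * u ^ 2) (by linarith) (by positivity)
  have d3 := t1 ((f - k * n) * (ν - n)) _ a3.2 (by positivity)
  have d4 := t1 ((ν - n) * (φ - ν)) _ b3.2 (by positivity)
  have d5 := t1 (n * u ^ 2) _ a1.2 (by positivity)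
  have d6 := t1 (-(u * τ)) (ε * u ^ 2 + 1 / ε * τ ^ 2) (by linarith) (by positivity)
  have s1 : ε * (φ1 + ν1) ^ 2 ≤ 2 * (ε * (φ1 ^ 2 + ν1 ^ 2)) := by
    linarith [mul_nonneg hε.le (sq_nonneg (φ1 - ν1))]
  have s2 : ε * (φ + ν) ^ 2 ≤ 2 * (ε * (φ ^ 2 + ν ^ 2)) := by
    linarith [mul_nonneg hε.le (sq_nonneg (φ - ν))]
  have s3 : ε * (ν - n) ^ 2 ≤ 2 * (ε * (n ^ 2 + ν ^ 2)) := by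
    linarith [mul_nonneg hε.le (sq_nonneg (n + ν))]
  have r1 : 0 ≤ 1 / ε * (φ - ν) ^ 2 := by positivity
  have r2 : 0 ≤ 1 / ε * (φ1 - ν1) ^ 2 := by positivity
  have r3 : 0 ≤ 1 / ε * τ ^ 2 := by positivity
  have p1 : 0 ≤ ε * n ^ 2 := by positivity
  have p2 : 0 ≤ ε * u ^ 2 := by positivity
  have p3 : 0 ≤ ε * φ ^ 2 := by positivity
  have p4 : 0 ≤ ε * φ1 ^ 2 := by positivity
  have p5 : 0 ≤ ε * ν ^ 2 := by positivity
  have p6 : 0 ≤ ε * ν1 ^ 2 := by positivity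
  have e4 : 4 / ε * ((φ - ν) ^ 2 + (φ1 - ν1) ^ 2 + τ ^ 2) = 4 * (1 / ε * (φ - ν) ^ 2)
    + 4 * (1 / ε * (φ1 - ν1) ^ 2) + 4 * (1 / ε * τ ^ 2) := by ring
  rw [e4]
  linarith [bg.1, bQ.1, a1.1, b1.1, b1.2, b2.1]

end VB

namespace VB
open Set Filter Topology

lemma y2 (a x z : ℝ) (ha : 0 ≤ a) : a * (x * z) ≤ a * ((x ^ 2 + z ^ 2) / 2) ∧
    -(a * ((x ^ 2 + z ^ 2) / 2)) ≤ a * (x * z) := by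
  constructor
  · exact mul_le_mul_of_nonneg_left (by nlinarith [sq_nonneg (x - z)]) ha
  · rw [← mul_neg]
    exact mul_le_mul_of_nonneg_left (by nlinarith [sq_nonneg (x + z)]) ha

lemma y3 (a Y x z : ℝ) (ha : |Y| ≤ a) : Y * (x * z) ≤ a * ((x ^ 2 + z ^ 2) / 2) ∧
    -(a * ((x ^ 2 + z ^ 2) / 2)) ≤ Y * (x * z) := by
  have h1 : |Y * (x * z)| ≤ a * ((x ^ 2 + z ^ 2) / 2) := by
    rw [abs_mul]
    refine mul_le_mul ha ?_ (abs_nonneg _) ((abs_nonneg _).trans ha)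
    rw [abs_le]; constructor <;> nlinarith [sq_nonneg (x - z), sq_nonneg (x + z)]
  rw [abs_le] at h1
  exact ⟨h1.2, h1.1⟩

lemma bdF1 (k ε Y n u φ φ1 g Q : ℝ) (hk : 0 < k) (hε : 0 < ε) (hε1 : ε ≤ 1) (hY : |Y| ≤ k)
    (bn : |n| ≤ ε) (bg : |g - k / 2 * n ^ 2| ≤ ε * n ^ 2)
    (bQ : |Q - φ ^ 2 / 2| ≤ ε * φ ^ 2) :
    |(u ^ 2 / 2 + n * u ^ 2 + g - φ1 ^ 2 / 2 + Q) - Y * (n * u)|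
      ≤ (2 * k + 4) * (n ^ 2 + u ^ 2 + φ ^ 2 + φ1 ^ 2) := by
  have a1 : |n * u ^ 2| ≤ 1 * u ^ 2 := by
    rw [abs_mul, abs_of_nonneg (sq_nonneg u)]
    exact mul_le_mul_of_nonneg_right (bn.trans hε1) (sq_nonneg u)
  have b1 := y3 k Y n u hY
  have b2 : ε * n ^ 2 ≤ 1 * n ^ 2 := mul_le_mul_of_nonneg_right hε1 (sq_nonneg _)
  have b3 : ε * φ ^ 2 ≤ 1 * φ ^ 2 := mul_le_mul_of_nonneg_right hε1 (sq_nonneg _)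
  rw [abs_le] at *
  have p1 : 0 ≤ k * n ^ 2 := by positivity
  have p2 : 0 ≤ k * u ^ 2 := by positivity
  have p3 : 0 ≤ k * φ ^ 2 := by positivity
  have p4 : 0 ≤ k * φ1 ^ 2 := by positivity
  have q1 := sq_nonneg n
  have q2 := sq_nonneg u
  have q3 := sq_nonneg φ
  have q4 := sq_nonneg φ1
  constructor <;> linarith [bg.1, bg.2, bQ.1, bQ.2, a1.1, a1.2, b1.1, b1.2]

lemma bdF2 (k ε Y n u φ ν1 f : ℝ) (hk : 0 < k) (hε : 0 < ε) (hε1 : ε ≤ 1) (hY : |Y| ≤ k)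
    (bν : |ν1| ≤ ε) (bf : |f - k * n| ≤ ε * |n|) :
    |(u ^ 2 / 2 + f + φ) * ν1 - Y * (u * ν1)|
      ≤ (2 * k + 4) * (n ^ 2 + u ^ 2 + φ ^ 2 + ν1 ^ 2) := by
  have a1 : |ν1 * u ^ 2| ≤ 1 * u ^ 2 := by
    rw [abs_mul, abs_of_nonneg (sq_nonneg u)]
    exact mul_le_mul_of_nonneg_right (bν.trans hε1) (sq_nonneg u)
  have b1 := y3 k Y u ν1 hY
  have b2 : |(f - k * n) * ν1| ≤ (n ^ 2 + ν1 ^ 2) / 2 := by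
    rw [abs_mul]
    have h1 : |f - k * n| ≤ |n| := bf.trans (by nlinarith [abs_nonneg n])
    calc |f - k * n| * |ν1| ≤ |n| * |ν1| := by gcongr
      _ ≤ _ := by rw [← sq_abs n, ← sq_abs ν1]; nlinarith [sq_nonneg (|n| - |ν1|)]
  have b3 := y2 k n ν1 hk.le
  have b4 := y2 1 φ ν1 zero_le_one
  rw [abs_le] at *
  have p1 : 0 ≤ k * n ^ 2 := by positivity
  have p2 : 0 ≤ k * u ^ 2 := by positivity
  have p3 : 0 ≤ k * φ ^ 2 := by positivity
  have p4 : 0 ≤ k * ν1 ^ 2 := by positivity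
  have q1 := sq_nonneg n
  have q2 := sq_nonneg u
  have q3 := sq_nonneg φ
  have q4 := sq_nonneg ν1
  constructor <;> linarith [a1.1, a1.2, b1.1, b1.2, b2.1, b2.2, b3.1, b3.2, b4.1, b4.2]

lemma bdB (k θ Y ν ν1 ω ω1 : ℝ) (hk : 0 < k) (hθ0 : 0 < θ) (hθ : θ ≤ 1) (hY : |Y| ≤ k) :
    |-(1 - θ) * (ω * ω1) - (k + 1 / 2) * (ν * ν1) + Y * (ν * ω1 + ν1 * ω)|
      ≤ (2 * k + 4) * (ν ^ 2 + ν1 ^ 2 + ω ^ 2 + ω1 ^ 2) := by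
  have b1 := y3 k Y ν ω1 hY
  have b2 := y3 k Y ν1 ω hY
  have b3 := y2 k ν ν1 hk.le
  have b4 := y2 1 ν ν1 zero_le_one
  have b5 := y3 1 (1 - θ) ω ω1 (by rw [abs_le]; constructor <;> linarith)
  rw [abs_le] at *
  have p1 : 0 ≤ k * ν ^ 2 := by positivity
  have p2 : 0 ≤ k * ν1 ^ 2 := by positivity
  have p3 : 0 ≤ k * ω ^ 2 := by positivity
  have p4 : 0 ≤ k * ω1 ^ 2 := by positivity
  have q1 := sq_nonneg ν
  have q2 := sq_nonneg ν1
  have q3 := sq_nonneg ω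
  have q4 := sq_nonneg ω1
  constructor <;> linarith [b5.1, b5.2, b1.1, b1.2, b2.1, b2.2, b3.1, b3.2, b4.1, b4.2]

end VB

namespace VB
open Set Filter Topology

structure Dat (k ε Mn Mu : ℝ) (n u φ nt nx ut ux φx f fx g : ℝ → ℝ → ℝ) : Prop where
  hnt : ∀ t x, HasDerivAt (fun s => n s x) (nt t x) t
  hut : ∀ t x, HasDerivAt (fun s => u s x) (ut t x) t
  hnx : ∀ t x, HasDerivAt (n t) (nx t x) x
  hux : ∀ t x, HasDerivAt (u t) (ux t x) x
  hφ : ∀ t x, HasDerivAt (φ t) (φx t x) x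
  hφx : ∀ t x, HasDerivAt (φx t) (exp (φ t x) - 1 - n t x) x
  hf : ∀ t x, HasDerivAt (f t) (fx t x) x
  hg : ∀ t x, HasDerivAt (g t) (n t x * fx t x) x
  cn : Continuous (Function.uncurry n)
  cu : Continuous (Function.uncurry u)
  cnt : Continuous (Function.uncurry nt)
  cut : Continuous (Function.uncurry ut)
  cnx : ∀ t, Continuous (nx t)
  cux : ∀ t, Continuous (ux t)
  cfx : ∀ t, Continuous (fx t)
  en : ∀ t x, nt t x = -(nx t x * u t x + (1 + n t x) * ux t x)
  eu : ∀ t x, ut t x = -(u t x * ux t x + fx t x + φx t x)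
  ε0 : 0 < ε
  ε1 : ε ≤ 1 / 10
  bn : ∀ t x, |n t x| ≤ ε
  bf : ∀ t x, |f t x - k * n t x| ≤ ε * |n t x|
  bg : ∀ t x, |g t x - k / 2 * n t x ^ 2| ≤ ε * n t x ^ 2
  bφ : ∀ t x, |φ t x| ≤ 2 * ε
  bφx : ∃ B, ∀ t x, |φx t x| ≤ B
  inn : ∀ t, Integrable (fun x => n t x ^ 2)
  iu : ∀ t, Integrable (fun x => u t x ^ 2)
  hMn : ∀ t, ∫ x, n t x ^ 2 ≤ Mn ^ 2
  hMu : ∀ t, ∫ x, u t x ^ 2 ≤ Mu ^ 2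
  Mn0 : 0 ≤ Mn
  Mu0 : 0 ≤ Mu
  k0 : 0 < k

def Qf (x : ℝ) : ℝ := exp x - 1 - x

lemma Qf_deriv (x : ℝ) : HasDerivAt Qf (exp x - 1) x :=
  ((Real.hasDerivAt_exp x).sub_const 1).sub (hasDerivAt_id x)

lemma Qf_bd (x : ℝ) (h : |x| ≤ 1) : |Qf x| ≤ x ^ 2 := Real.abs_exp_sub_one_sub_id_le h

lemma Qf_bd2 (ε x : ℝ) (hε : ε ≤ 1 / 10) (h : |x| ≤ 2 * ε) : |Qf x - x ^ 2 / 2| ≤ ε * x ^ 2 := by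
  have h1 := Real.exp_bound (x := x) (by linarith) (n := 3) (by norm_num)
  simp only [Finset.sum_range_succ, Finset.sum_range_zero] at h1
  norm_num [Nat.factorial] at h1
  have h2 : Qf x - x ^ 2 / 2 = exp x - (1 + x + x ^ 2 / 2) := by unfold Qf; ring
  rw [h2]
  refine h1.trans ?_
  have h3 : |x| ^ 3 = |x| * x ^ 2 := by rw [← sq_abs x]; ring
  rw [h3]
  nlinarith [sq_nonneg x, abs_nonneg x, mul_nonneg (sub_nonneg.2 h) (sq_nonneg x),
    mul_nonneg (abs_nonneg x) (sq_nonneg x)]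

section
variable {k ε Mn Mu : ℝ} {n u φ nt nx ut ux φx f fx g : ℝ → ℝ → ℝ}

lemma sec {h : ℝ → ℝ → ℝ} (c : Continuous (Function.uncurry h)) (t : ℝ) : Continuous (h t) :=
  c.comp (by fun_prop : Continuous (fun x : ℝ => (t, x)))

def mm (n u : ℝ → ℝ → ℝ) (t x : ℝ) : ℝ := (1 + n t x) * u t x

lemma Dat.cn1 (D : Dat k ε Mn Mu n u φ nt nx ut ux φx f fx g) (t : ℝ) : Continuous (n t) := sec D.cn t
lemma Dat.cu1 (D : Dat k ε Mn Mu n u φ nt nx ut ux φx f fx g) (t : ℝ) : Continuous (u t) := sec D.cu t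

lemma Dat.cm (D : Dat k ε Mn Mu n u φ nt nx ut ux φx f fx g) :
    Continuous (Function.uncurry (mm n u)) := by
  have h1 := D.cn
  have h2 := D.cu
  have : Function.uncurry (mm n u) = fun p => (1 + Function.uncurry n p) * Function.uncurry u p := by
    funext p; rfl
  rw [this]; fun_prop

lemma Dat.hm (D : Dat k ε Mn Mu n u φ nt nx ut ux φx f fx g) (t x : ℝ) :
    HasDerivAt (mm n u t) (nx t x * u t x + (1 + n t x) * ux t x) x :=
  ((D.hnx t x).const_add 1).mul (D.hux t x)

lemma Dat.m2 (D : Dat k ε Mn Mu n u φ nt nx ut ux φx f fx g) (t x : ℝ) :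
    mm n u t x ^ 2 ≤ 4 * u t x ^ 2 := by
  have h1 := abs_le.1 (D.bn t x)
  have h2 := D.ε1
  unfold mm
  rw [mul_pow]
  refine mul_le_mul_of_nonneg_right ?_ (sq_nonneg _)
  nlinarith

lemma Dat.im (D : Dat k ε Mn Mu n u φ nt nx ut ux φx f fx g) (t : ℝ) :
    Integrable (fun x => mm n u t x ^ 2) := by
  have := sec D.cm t
  refine Integrable.mono' ((D.iu t).const_mul 4) (by fun_prop) (Eventually.of_forall fun x => ?_)
  rw [Real.norm_eq_abs, abs_of_nonneg (sq_nonneg _)]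
  exact D.m2 t x

lemma Dat.hMm (D : Dat k ε Mn Mu n u φ nt nx ut ux φx f fx g) (t : ℝ) :
    ∫ x, mm n u t x ^ 2 ≤ 4 * Mu ^ 2 := by
  calc _ ≤ ∫ x, 4 * u t x ^ 2 := integral_mono (D.im t) ((D.iu t).const_mul 4) (D.m2 t)
    _ ≤ _ := by rw [integral_const_mul]; have := D.hMu t; linarith

lemma Dat.vt (D : Dat k ε Mn Mu n u φ nt nx ut ux φx f fx g) (t x : ℝ) :
    HasDerivAt (fun t => Dop (n t) x) (mm n u t x - Sop (mm n u t) x) t :=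
  Dop_t n nt (mm n u) (fun t x => nx t x * u t x + (1 + n t x) * ux t x) D.cn1 D.hnt D.cnt D.cm
    D.hm D.en D.inn D.im (max (Mn ^ 2) (4 * Mu ^ 2)) (fun t => (D.hMn t).trans (le_max_left _ _))
    (fun t => (D.hMm t).trans (le_max_right _ _)) t x

lemma Dat.potn (D : Dat k ε Mn Mu n u φ nt nx ut ux φx f fx g) (t : ℝ) :
    Pot (n t) (Sop (n t)) (Dop (n t)) := Pot_Sop _ _ (D.hnx t) (D.cnx t) (D.inn t)
lemma Dat.potu (D : Dat k ε Mn Mu n u φ nt nx ut ux φx f fx g) (t : ℝ) :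
    Pot (u t) (Sop (u t)) (Dop (u t)) := Pot_Sop _ _ (D.hux t) (D.cux t) (D.iu t)
lemma Dat.potm (D : Dat k ε Mn Mu n u φ nt nx ut ux φx f fx g) (t : ℝ) :
    Pot (mm n u t) (Sop (mm n u t)) (Dop (mm n u t)) := by
  have := D.cnx t; have := D.cux t; have := D.cn1 t; have := D.cu1 t
  exact Pot_Sop _ _ (D.hm t) (by fun_prop) (D.im t)
lemma Dat.potφ (D : Dat k ε Mn Mu n u φ nt nx ut ux φx f fx g) (t : ℝ) :
    Pot (fun x => n t x - Qf (φ t x)) (φ t) (φx t) where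
  d0 := D.hφ t
  d1 x := (D.hφx t x).congr_deriv (by unfold Qf; ring)
  bd := by
    obtain ⟨B, hB⟩ := D.bφx
    exact ⟨max (2 * ε) B, fun x => ⟨(D.bφ t x).trans (le_max_left _ _), (hB t x).trans (le_max_right _ _)⟩⟩

def F1 (n u φ φx g : ℝ → ℝ → ℝ) (t x : ℝ) : ℝ :=
  u t x ^ 2 / 2 + n t x * u t x ^ 2 + g t x - φx t x ^ 2 / 2 + Qf (φ t x)
def F2 (n u φ f : ℝ → ℝ → ℝ) (t x : ℝ) : ℝ :=
  (u t x ^ 2 / 2 + f t x + φ t x) * Dop (n t) x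
def S2 (n u φ f : ℝ → ℝ → ℝ) (t x : ℝ) : ℝ :=
  (u t x ^ 2 / 2 + f t x + φ t x) * (Sop (n t) x - n t x)
    + u t x * (mm n u t x - Sop (mm n u t) x)

lemma Dat.cf (D : Dat k ε Mn Mu n u φ nt nx ut ux φx f fx g) (t : ℝ) : Continuous (f t) :=
  continuous_iff_continuousAt.2 fun x => (D.hf t x).continuousAt
lemma Dat.cg (D : Dat k ε Mn Mu n u φ nt nx ut ux φx f fx g) (t : ℝ) : Continuous (g t) :=
  continuous_iff_continuousAt.2 fun x => (D.hg t x).continuousAt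

lemma Dat.cS2 (D : Dat k ε Mn Mu n u φ nt nx ut ux φx f fx g) (t : ℝ) : Continuous (S2 n u φ f t) := by
  have := D.cf t; have := D.cu1 t; have := D.cn1 t; have := (D.potφ t).c0; have := (D.potn t).c0
  have := (D.potm t).c0; have := sec D.cm t
  unfold S2; fun_prop
lemma Dat.cF2 (D : Dat k ε Mn Mu n u φ nt nx ut ux φx f fx g) (t : ℝ) : Continuous (F2 n u φ f t) := by
  have := D.cf t; have := D.cu1 t; have := D.cn1 t; have := (D.potφ t).c0; have := (D.potn t).c1
  unfold F2; fun_prop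
lemma Dat.cF1 (D : Dat k ε Mn Mu n u φ nt nx ut ux φx f fx g) (t : ℝ) : Continuous (F1 n u φ φx g t) := by
  have := D.cg t; have := D.cu1 t; have := D.cn1 t; have := (D.potφ t).c0; have := (D.potφ t).c1
  unfold F1 Qf; fun_prop

lemma Dat.law1 (D : Dat k ε Mn Mu n u φ nt nx ut ux φx f fx g) {P P' : ℝ → ℝ} {r : ℝ} (h : CW P P' r)
    (y : ℝ → ℝ) (hy : ContDiff ℝ 1 y) (t : ℝ) :
    HasDerivAt (fun t => ∫ x, P (x - y t) * (n t x * u t x))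
      (∫ x, P' (x - y t) * (F1 n u φ φx g t x - deriv y t * (n t x * u t x))) t := by
  have c1 := D.cn; have c2 := D.cu; have c3 := D.cnt; have c4 := D.cut
  have d1 := D.cnx t; have d2 := D.cux t; have d3 := D.cn1 t; have d4 := D.cu1 t; have d5 := D.cfx t
  have d6 := (D.potφ t).c1
  have := law h y hy (fun t x => n t x * u t x) (fun t x => nt t x * u t x + n t x * ut t x)
    (F1 n u φ φx g) (fun t x => u t x * ux t x + nx t x * u t x ^ 2 + 2 * n t x * u t x * ux t x
      + n t x * fx t x + n t x * φx t x) (fun _ _ => 0)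
    (fun t x => (D.hnt t x).mul (D.hut t x))
    (show Continuous fun p => Function.uncurry n p * Function.uncurry u p by fun_prop)
    (show Continuous fun p => Function.uncurry nt p * Function.uncurry u p
      + Function.uncurry n p * Function.uncurry ut p by fun_prop) t
    (fun x => by
      have e1 := ((D.hux t x).fun_pow 2).div_const 2
      have e2 := (D.hnx t x).mul ((D.hux t x).fun_pow 2)
      have e3 := ((D.hφx t x).fun_pow 2).div_const 2
      have e4 : HasDerivAt (fun x => Qf (φ t x)) ((exp (φ t x) - 1) * φx t x) x :=
        (Qf_deriv (φ t x)).comp x (D.hφ t x)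
      exact ((((e1.add e2).add (D.hg t x)).sub e3).add e4).congr_deriv (by push_cast; ring))
    (by fun_prop) continuous_const (fun x => by rw [D.en, D.eu]; ring)
  simpa using this

lemma Dat.law2 (D : Dat k ε Mn Mu n u φ nt nx ut ux φx f fx g) {P P' : ℝ → ℝ} {r : ℝ} (h : CW P P' r)
    (y : ℝ → ℝ) (hy : ContDiff ℝ 1 y) (t : ℝ) :
    HasDerivAt (fun t => ∫ x, P (x - y t) * (u t x * Dop (n t) x))
      (∫ x, (P' (x - y t) * (F2 n u φ f t x - deriv y t * (u t x * Dop (n t) x))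
        + P (x - y t) * S2 n u φ f t x)) t := by
  have c1 := D.cn; have c2 := D.cu; have c3 := D.cnt; have c4 := D.cut; have c5 := D.cm
  have d1 := D.cnx t; have d2 := D.cux t; have d3 := D.cn1 t; have d4 := D.cu1 t; have d5 := D.cfx t
  have d6 := (D.potφ t).c1; have d7 := (D.potφ t).c0; have d8 := (D.potn t).c0; have d9 := (D.potn t).c1
  have d10 := D.cf t
  have c6 := Dop_cont n c1 D.inn _ D.hMn
  have c7 := Sop_cont (mm n u) c5 D.im _ D.hMm
  exact law h y hy (fun t x => u t x * Dop (n t) x)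
    (fun t x => ut t x * Dop (n t) x + u t x * (mm n u t x - Sop (mm n u t) x))
    (F2 n u φ f) (fun t x => (u t x * ux t x + fx t x + φx t x) * Dop (n t) x
      + (u t x ^ 2 / 2 + f t x + φ t x) * (Sop (n t) x - n t x)) (S2 n u φ f)
    (fun t x => (D.hut t x).mul (D.vt t x))
    (show Continuous fun p : ℝ × ℝ => Function.uncurry u p * Dop (n p.1) p.2 by fun_prop)
    (show Continuous fun p : ℝ × ℝ => Function.uncurry ut p * Dop (n p.1) p.2
      + Function.uncurry u p * (Function.uncurry (mm n u) p - Sop (mm n u p.1) p.2) by fun_prop) t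
    (fun x => by
      have e1 := ((D.hux t x).fun_pow 2).div_const 2
      exact (((e1.add (D.hf t x)).add (D.hφ t x)).mul ((D.potn t).d1 x)).congr_deriv (by
        simp only [Pi.add_apply]; push_cast; ring))
    (by fun_prop) (D.cS2 t) (fun x => by rw [D.eu]; unfold S2; ring)

end
end VB

namespace VB
open Set Filter Topology

lemma gi {f : ℝ → ℝ} (hf : Integrable f) (A y : ℝ) : Integrable (fun x => gw A (x - y) * f x) := by
  have hc := gw_cont A
  refine Integrable.mono' hf.abs
    ((show Continuous fun x => gw A (x - y) by fun_prop).aestronglyMeasurable.mul hf.1)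
    (Eventually.of_forall fun x => ?_)
  rw [Real.norm_eq_abs, abs_mul, abs_of_pos (gw_pos _ _)]
  exact mul_le_of_le_one_left (abs_nonneg _) (gw_le_one _ _)

lemma int4 {a b c d : ℝ → ℝ} (ha : Integrable a) (hb : Integrable b) (hc : Integrable c) (hd : Integrable d) :
    Integrable (fun x => a x + b x + c x + d x) ∧
    ∫ x, (a x + b x + c x + d x) = (∫ x, a x) + (∫ x, b x) + (∫ x, c x) + (∫ x, d x) := by
  have h1 : Integrable (fun x => a x + b x) := ha.add hb
  have h2 : Integrable (fun x => a x + b x + c x) := h1.add hc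
  refine ⟨h2.add hd, ?_⟩
  rw [integral_add h2 hd, integral_add h1 hc, integral_add ha hb]

section
variable {k ε Mn Mu : ℝ} {n u φ nt nx ut ux φx f fx g : ℝ → ℝ → ℝ}

def qq (n u φ φx : ℝ → ℝ → ℝ) (t x : ℝ) : ℝ :=
  n t x ^ 2 + u t x ^ 2 + φ t x ^ 2 + φx t x ^ 2
    + (Sop (n t) x ^ 2 + Dop (n t) x ^ 2 + Sop (u t) x ^ 2 + Dop (u t) x ^ 2)

def ee (n u φ φx : ℝ → ℝ → ℝ) (t x : ℝ) : ℝ :=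
  (φ t x - Sop (n t) x) ^ 2 + (φx t x - Dop (n t) x) ^ 2 + (Sop (mm n u t) x - Sop (u t) x) ^ 2

def JJ (n u : ℝ → ℝ → ℝ) (A y t : ℝ) : ℝ := ∫ x, gw A (x - y) * (n t x ^ 2 + u t x ^ 2)

set_option maxHeartbeats 1000000 in
lemma Dat.qe (D : Dat k ε Mn Mu n u φ nt nx ut ux φx f fx g) (A y t : ℝ) (hA : 4 ≤ A) :
    Integrable (fun x => gw A (x - y) * qq n u φ φx t x) ∧
    Integrable (fun x => gw A (x - y) * ee n u φ φx t x) ∧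
    ∫ x, gw A (x - y) * qq n u φ φx t x ≤ 20 * JJ n u A y t ∧
    ∫ x, gw A (x - y) * ee n u φ φx t x ≤ 100 * ε ^ 2 * JJ n u A y t := by
  have hA0 : 0 < A := by linarith
  have ε0 := D.ε0
  have ε1 := D.ε1
  have ε2 : ε ^ 2 ≤ 1 / 100 := by nlinarith
  have i1 := gi (D.inn t) A y
  have i2 := gi (D.iu t) A y
  have pn := D.potn t
  have pu := D.potu t
  have pφ := D.potφ t
  have pρ := pφ.sub pn
  have pτ := (D.potm t).sub pu
  have cn := D.cn1 t
  have cu := D.cu1 t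
  have cm := sec D.cm t
  have cφ := pφ.c0
  have j1 := pn.ell cn A y hA i1
  have j2 := pu.ell cu A y hA i2
  have b3 : ∀ x, gw A (x - y) * (mm n u t x - u t x) ^ 2 ≤ ε ^ 2 * (gw A (x - y) * u t x ^ 2) := by
    intro x
    have h1 : (mm n u t x - u t x) ^ 2 ≤ ε ^ 2 * u t x ^ 2 := by
      have : mm n u t x - u t x = n t x * u t x := by unfold mm; ring
      rw [this, mul_pow, ← sq_abs (n t x)]
      gcongr
      exact D.bn t x
    calc _ ≤ gw A (x - y) * (ε ^ 2 * u t x ^ 2) := mul_le_mul_of_nonneg_left h1 (gw_pos _ _).le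
      _ = _ := by ring
  have cg := gw_cont A
  have i3 : Integrable (fun x => gw A (x - y) * (mm n u t x - u t x) ^ 2) := by
    refine Integrable.mono' (i2.const_mul (ε ^ 2)) (by fun_prop) (Eventually.of_forall fun x => ?_)
    rw [Real.norm_eq_abs, abs_of_nonneg (mul_nonneg (gw_pos _ _).le (sq_nonneg _))]
    exact b3 x
  have j3 := pτ.ell (by fun_prop) A y hA i3
  have l3 : ∫ x, gw A (x - y) * (mm n u t x - u t x) ^ 2 ≤ ε ^ 2 * ∫ x, gw A (x - y) * u t x ^ 2 := by
    rw [← integral_const_mul]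
    exact integral_mono i3 (i2.const_mul _) b3
  have i5 := pn.i0 A y hA0
  have i6 := pn.i1 A y hA0
  have i7 := pρ.i0 A y hA0
  have i8 := pρ.i1 A y hA0
  have i9 := pu.i0 A y hA0
  have i10 := pu.i1 A y hA0
  have i11 := pτ.i0 A y hA0
  have i12 := pτ.i1 A y hA0
  have iφ := pφ.i0 A y hA0
  have iφx := pφ.i1 A y hA0
  have b4 : ∀ x, gw A (x - y) * ((n t x - Qf (φ t x)) - n t x) ^ 2
      ≤ 8 * ε ^ 2 * (gw A (x - y) * (φ t x - Sop (n t) x) ^ 2) + 8 * ε ^ 2 * (gw A (x - y) * Sop (n t) x ^ 2) := by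
    intro x
    have h0 := D.bφ t x
    have h1 := Qf_bd (φ t x) (by linarith)
    have h2 : ((n t x - Qf (φ t x)) - n t x) ^ 2 ≤ (2 * ε) ^ 2 * φ t x ^ 2 := by
      have : (n t x - Qf (φ t x)) - n t x = - Qf (φ t x) := by ring
      rw [this, neg_sq, ← sq_abs (Qf _)]
      calc |Qf (φ t x)| ^ 2 ≤ (φ t x ^ 2) ^ 2 := by gcongr
        _ = |φ t x| ^ 2 * φ t x ^ 2 := by rw [sq_abs]; ring
        _ ≤ _ := by gcongr
    have h3 : (2 * ε) ^ 2 * φ t x ^ 2 ≤ 8 * ε ^ 2 * (φ t x - Sop (n t) x) ^ 2 + 8 * ε ^ 2 * Sop (n t) x ^ 2 := by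
      linarith [mul_nonneg (sq_nonneg (2 * ε)) (sq_nonneg (φ t x - Sop (n t) x - Sop (n t) x))]
    calc _ ≤ gw A (x - y) * (8 * ε ^ 2 * (φ t x - Sop (n t) x) ^ 2 + 8 * ε ^ 2 * Sop (n t) x ^ 2) :=
          mul_le_mul_of_nonneg_left (h2.trans h3) (gw_pos _ _).le
      _ = _ := by ring
  have cQ : Continuous fun x => (n t x - Qf (φ t x)) - n t x := by unfold Qf; fun_prop
  have i4 : Integrable (fun x => gw A (x - y) * ((n t x - Qf (φ t x)) - n t x) ^ 2) := by
    refine Integrable.mono' ((i7.const_mul (8 * ε ^ 2)).add (i5.const_mul (8 * ε ^ 2)))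
      (by fun_prop) (Eventually.of_forall fun x => ?_)
    rw [Real.norm_eq_abs, abs_of_nonneg (mul_nonneg (gw_pos _ _).le (sq_nonneg _))]
    exact b4 x
  have j4 := pρ.ell cQ A y hA i4
  have l4 : ∫ x, gw A (x - y) * ((n t x - Qf (φ t x)) - n t x) ^ 2
      ≤ 8 * ε ^ 2 * (∫ x, gw A (x - y) * (φ t x - Sop (n t) x) ^ 2)
        + 8 * ε ^ 2 * ∫ x, gw A (x - y) * Sop (n t) x ^ 2 := by
    rw [← integral_const_mul, ← integral_const_mul, ← integral_add (i7.const_mul _) (i5.const_mul _)]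
    exact integral_mono i4 ((i7.const_mul _).add (i5.const_mul _)) b4
  have hJ : JJ n u A y t = (∫ x, gw A (x - y) * n t x ^ 2) + ∫ x, gw A (x - y) * u t x ^ 2 := by
    unfold JJ
    rw [← integral_add i1 i2]
    simp only [mul_add]
  have nonn : ∀ h : ℝ → ℝ, 0 ≤ ∫ x, gw A (x - y) * h x ^ 2 := fun h =>
    integral_nonneg fun x => mul_nonneg (gw_pos _ _).le (sq_nonneg _)
  have z1 := nonn (n t)
  have z2 := nonn (u t)
  have z5 := nonn (Sop (n t))
  have z6 := nonn (Dop (n t))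
  have z7 := nonn (fun x => φ t x - Sop (n t) x)
  have z8 := nonn (fun x => φx t x - Dop (n t) x)
  have z11 := nonn (fun x => Sop (mm n u t) x - Sop (u t) x)
  have z12 := nonn (fun x => Dop (mm n u t) x - Dop (u t) x)
  set In := ∫ x, gw A (x - y) * n t x ^ 2
  set Iu := ∫ x, gw A (x - y) * u t x ^ 2
  set Iρ := ∫ x, gw A (x - y) * (φ t x - Sop (n t) x) ^ 2
  set Iρ1 := ∫ x, gw A (x - y) * (φx t x - Dop (n t) x) ^ 2
  set Iτ := ∫ x, gw A (x - y) * (Sop (mm n u t) x - Sop (u t) x) ^ 2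
  set Iν := ∫ x, gw A (x - y) * Sop (n t) x ^ 2
  set Iν1 := ∫ x, gw A (x - y) * Dop (n t) x ^ 2
  have hρ : Iρ + Iρ1 ≤ 40 * ε ^ 2 * In := by
    have h1 : ε ^ 2 * Iρ ≤ 1 / 100 * Iρ := mul_le_mul_of_nonneg_right ε2 z7
    have h2 : ε ^ 2 * Iν ≤ ε ^ 2 * (2 * In) := mul_le_mul_of_nonneg_left (by linarith) (sq_nonneg _)
    linarith
  have hρ' : Iρ + Iρ1 ≤ 40 * (1 / 100 * In) := by
    have h1 : ε ^ 2 * In ≤ 1 / 100 * In := mul_le_mul_of_nonneg_right ε2 z1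
    linarith
  have fe : (fun x => gw A (x - y) * ee n u φ φx t x) = fun x =>
      gw A (x - y) * (φ t x - Sop (n t) x) ^ 2 + gw A (x - y) * (φx t x - Dop (n t) x) ^ 2
      + gw A (x - y) * (Sop (mm n u t) x - Sop (u t) x) ^ 2 + 0 := by
    funext x; unfold ee; ring
  obtain ⟨ie, le⟩ := int4 (d := fun _ => (0:ℝ)) i7 i8 i11 (integrable_zero ℝ ℝ volume)
  obtain ⟨iq1, lq1⟩ := int4 i1 i2 iφ iφx
  obtain ⟨iq2, lq2⟩ := int4 i5 i6 i9 i10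
  have fq : (fun x => gw A (x - y) * qq n u φ φx t x) = fun x =>
      (gw A (x - y) * n t x ^ 2 + gw A (x - y) * u t x ^ 2 + gw A (x - y) * φ t x ^ 2
        + gw A (x - y) * φx t x ^ 2) + (gw A (x - y) * Sop (n t) x ^ 2 + gw A (x - y) * Dop (n t) x ^ 2
        + gw A (x - y) * Sop (u t) x ^ 2 + gw A (x - y) * Dop (u t) x ^ 2) := by
    funext x; unfold qq; ring
  have two : ∀ a b : ℝ → ℝ, Integrable (fun x => gw A (x - y) * a x ^ 2) →
      Integrable (fun x => gw A (x - y) * (a x - b x) ^ 2) → Integrable (fun x => gw A (x - y) * b x ^ 2) →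
      ∫ x, gw A (x - y) * a x ^ 2 ≤ 2 * (∫ x, gw A (x - y) * (a x - b x) ^ 2)
        + 2 * ∫ x, gw A (x - y) * b x ^ 2 := by
    intro a b ha hab hb
    rw [← integral_const_mul, ← integral_const_mul, ← integral_add (hab.const_mul _) (hb.const_mul _)]
    refine integral_mono ha ((hab.const_mul _).add (hb.const_mul _)) fun x => ?_
    simp only [Pi.add_apply]
    linarith [mul_nonneg (gw_pos A (x - y)).le (sq_nonneg (a x - b x - b x))]
  have t1 := two (φ t) (Sop (n t)) iφ i7 i5
  have t2 := two (φx t) (Dop (n t)) iφx i8 i6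
  refine ⟨?_, ?_, ?_, ?_⟩
  · rw [fq]; exact iq1.add iq2
  · rw [fe]; exact ie
  · rw [fq, integral_add iq1 iq2, lq1, lq2, hJ]
    linarith
  · rw [fe, hJ, le]
    simp only [integral_zero]
    have h1 : 0 ≤ ε ^ 2 * In := by positivity
    have h2 : 0 ≤ ε ^ 2 * Iu := by positivity
    linarith

end
end VB

namespace VB
open Set Filter Topology

lemma negprod (a b α β : ℝ) (ha : |a| ≤ α) (hb : |b| ≤ β) : -(α * β) ≤ a * b ∧ a * b ≤ α * β := by
  have : |a * b| ≤ α * β := by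
    rw [abs_mul]; exact mul_le_mul ha hb (abs_nonneg _) ((abs_nonneg _).trans ha)
  exact abs_le.1 this

lemma collect (c0 ε θ K A R C1 gA gR G G' dP X1 X2 S Bx B s q e : ℝ)
    (hG0 : 0 ≤ G) (hG : G ≤ gA) (hGc : gA - A / R ≤ G)
    (hdP : |dP| ≤ C1 * A / R * gR) (hG' : |G'| ≤ 2 / A * gA + C1 / R * gR)
    (hX1 : |X1| ≤ K * q) (hX2 : |X2| ≤ K * q) (hB : |B| ≤ K * q) (hθ0 : 0 < θ) (hθ : θ ≤ 1)
    (hc0 : 0 < c0) (hε : 0 < ε) (hs : 0 ≤ s) (hq : 0 ≤ q) (he : 0 ≤ e)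
    (main : c0 * s + Bx - 10 * ε * q - 4 / ε * e ≤ X1 - θ * S) :
    c0 * (gA * s) - c0 * (A / R) * s - (10 * ε + 4 * K / A) * (gA * q) - 4 / ε * (gA * e)
      - K * C1 * (A + 2) / R * (gR * q)
    ≤ (G + dP) * X1 - θ * (G' * X2 + G * S) - (G * Bx + G' * B) := by
  have h1 := (negprod _ _ _ _ hdP hX1).1
  have h2' := (negprod _ _ _ _ hG' hX2).2
  have hn : 0 ≤ (2 / A * gA + C1 / R * gR) * (K * q) :=
    mul_nonneg ((abs_nonneg _).trans hG') ((abs_nonneg _).trans hB)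
  have h2 : θ * (G' * X2) ≤ (2 / A * gA + C1 / R * gR) * (K * q) := by
    calc θ * (G' * X2) ≤ θ * ((2 / A * gA + C1 / R * gR) * (K * q)) := by gcongr
      _ ≤ _ := mul_le_of_le_one_left hn hθ
  have h3 := (negprod _ _ _ _ hG' hB).2
  have h4 := mul_le_mul_of_nonneg_left main hG0
  have h5 : c0 * s * (gA - A / R) ≤ c0 * s * G := mul_le_mul_of_nonneg_left hGc (by positivity)
  have h6 : ε * q * G ≤ ε * q * gA := mul_le_mul_of_nonneg_left hG (by positivity)
  have h7 : 4 / ε * e * G ≤ 4 / ε * e * gA := mul_le_mul_of_nonneg_left hG (by positivity)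
  have e1 : K * C1 * (A + 2) / R * (gR * q) + 4 * K / A * (gA * q)
    = C1 * A / R * gR * (K * q) + 2 * ((2 / A * gA + C1 / R * gR) * (K * q)) := by ring
  linarith

section
variable {k ε Mn Mu : ℝ} {n u φ nt nx ut ux φx f fx g : ℝ → ℝ → ℝ}

def BB (k θ Y : ℝ) (n u : ℝ → ℝ → ℝ) (t x : ℝ) : ℝ :=
  -(1 - θ) * (Sop (u t) x * Dop (u t) x) - (k + 1 / 2) * (Sop (n t) x * Dop (n t) x)
    + Y * (Sop (n t) x * Dop (u t) x + Dop (n t) x * Sop (u t) x)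

def BBx (k θ Y : ℝ) (n u : ℝ → ℝ → ℝ) (t x : ℝ) : ℝ :=
  -(1 - θ) * (Dop (u t) x ^ 2 + Sop (u t) x * (Sop (u t) x - u t x))
    - (k + 1 / 2) * (Dop (n t) x ^ 2 + Sop (n t) x * (Sop (n t) x - n t x))
    + Y * (2 * Dop (n t) x * Dop (u t) x + Sop (n t) x * (Sop (u t) x - u t x)
      + (Sop (n t) x - n t x) * Sop (u t) x)

lemma Dat.hB (D : Dat k ε Mn Mu n u φ nt nx ut ux φx f fx g) (θ Y t x : ℝ) :
    HasDerivAt (BB k θ Y n u t) (BBx k θ Y n u t x) x := by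
  have pn := D.potn t
  have pu := D.potu t
  have e1 := ((pu.d0 x).mul (pu.d1 x)).const_mul (-(1 - θ))
  have e2 := ((pn.d0 x).mul (pn.d1 x)).const_mul (k + 1 / 2)
  have e3 := (((pn.d0 x).mul (pu.d1 x)).add ((pn.d1 x).mul (pu.d0 x))).const_mul Y
  exact ((e1.sub e2).add e3).congr_deriv (by unfold BBx; ring)

lemma Dat.pw (D : Dat k ε Mn Mu n u φ nt nx ut ux φx f fx g) (c0 θ Y t x : ℝ)
    (hθ : θ = 1 / (2 * (1 + k))) (hY : |Y| ≤ k / sqrt (1 + k))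
    (Hc : ∀ θ Y ν ν1 ν2 ω ω1 ω2 : ℝ, θ = 1 / (2 * (1 + k)) →
    |Y| ≤ k / sqrt (1 + k) →
    c0 * ((ν - ν2) ^ 2 + (ω - ω2) ^ 2)
      + (-(1 - θ) * (ω1 ^ 2 + ω * ω2) - (k + 1 / 2) * (ν1 ^ 2 + ν * ν2) + Y * (2 * ν1 * ω1 + ν * ω2 + ν2 * ω))
    ≤ 1 / 2 * (ω - ω2) ^ 2 + k / 2 * (ν - ν2) ^ 2 - 1 / 2 * ν1 ^ 2 + 1 / 2 * ν ^ 2 - Y * (ν - ν2) * (ω - ω2)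
      - θ * ((ω - ω2) ^ 2 - (ω - ω2) * ω + (k * (ν - ν2) + ν) * ν2)) :
    c0 * (n t x ^ 2 + u t x ^ 2) + BBx k θ Y n u t x - 10 * ε * qq n u φ φx t x
      - 4 / ε * ee n u φ φx t x
      ≤ (F1 n u φ φx g t x - Y * (n t x * u t x)) - θ * S2 n u φ f t x := by
  have hk := D.k0
  have hε := D.ε0
  have hθ0 : 0 < θ := by rw [hθ]; positivity
  have hθ1 : θ ≤ 1 := by rw [hθ, div_le_one (by positivity)]; linarith
  have h1 := Hc θ Y (Sop (n t) x) (Dop (n t) x) (Sop (n t) x - n t x) (Sop (u t) x) (Dop (u t) x)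
    (Sop (u t) x - u t x) hθ hY
  simp only [sub_sub_cancel] at h1
  have h2 := errs k θ ε (n t x) (u t x) (Sop (n t) x) (Dop (n t) x) (Sop (u t) x) (φ t x) (φx t x)
    (f t x) (g t x) (Qf (φ t x)) (Sop (mm n u t) x - Sop (u t) x) hε hθ0 hθ1 (D.bn t x)
    (Sop_bd _ _ (D.bn t) x) (D.bf t x) (D.bg t x) (Qf_bd2 ε _ D.ε1 (D.bφ t x))
  rw [add_sub_cancel] at h2
  have h3 : 10 * ε * (n t x ^ 2 + u t x ^ 2 + φ t x ^ 2 + φx t x ^ 2 + Sop (n t) x ^ 2 + Dop (n t) x ^ 2)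
      ≤ 10 * ε * qq n u φ φx t x := by
    refine mul_le_mul_of_nonneg_left ?_ (by positivity)
    unfold qq
    linarith [sq_nonneg (Sop (u t) x), sq_nonneg (Dop (u t) x)]
  have h4 : BBx k θ Y n u t x = -(1 - θ) * (Dop (u t) x ^ 2 + Sop (u t) x * (Sop (u t) x - u t x))
    - (k + 1 / 2) * (Dop (n t) x ^ 2 + Sop (n t) x * (Sop (n t) x - n t x))
    + Y * (2 * Dop (n t) x * Dop (u t) x + Sop (n t) x * (Sop (u t) x - u t x)
      + (Sop (n t) x - n t x) * Sop (u t) x) := rfl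
  have h5 : F1 n u φ φx g t x - θ * S2 n u φ f t x =
    u t x ^ 2 / 2 + n t x * u t x ^ 2 + g t x - φx t x ^ 2 / 2 + Qf (φ t x) -
        θ * ((u t x ^ 2 / 2 + f t x + φ t x) * (Sop (n t) x - n t x) +
          u t x * ((1 + n t x) * u t x - Sop (mm n u t) x)) := rfl
  have h6 : ee n u φ φx t x = (φ t x - Sop (n t) x) ^ 2 + (φx t x - Dop (n t) x) ^ 2
    + (Sop (mm n u t) x - Sop (u t) x) ^ 2 := rfl
  rw [← h5, ← h6] at h2
  rw [h4]
  linarith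

lemma Dat.virial (D : Dat k ε Mn Mu n u φ nt nx ut ux φx f fx g) (c0 θ Y t c A R : ℝ) (h0 : 0 < c0)
    (hθ : θ = 1 / (2 * (1 + k))) (hY : |Y| ≤ k / sqrt (1 + k))
    (Hc : ∀ θ Y ν ν1 ν2 ω ω1 ω2 : ℝ, θ = 1 / (2 * (1 + k)) →
    |Y| ≤ k / sqrt (1 + k) →
    c0 * ((ν - ν2) ^ 2 + (ω - ω2) ^ 2)
      + (-(1 - θ) * (ω1 ^ 2 + ω * ω2) - (k + 1 / 2) * (ν1 ^ 2 + ν * ν2) + Y * (2 * ν1 * ω1 + ν * ω2 + ν2 * ω))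
    ≤ 1 / 2 * (ω - ω2) ^ 2 + k / 2 * (ν - ν2) ^ 2 - 1 / 2 * ν1 ^ 2 + 1 / 2 * ν ^ 2 - Y * (ν - ν2) * (ω - ω2)
      - θ * ((ω - ω2) ^ 2 - (ω - ω2) * ω + (k * (ν - ν2) + ν) * ν2))
    {χ χ' : ℝ → ℝ} {C1 : ℝ} (h : Cut χ χ' C1) (hA : 4 ≤ A) (hR : 4 ≤ R)
    (P' G G' : ℝ → ℝ) (hP' : P' = fun x => gw A x * χ (x / R) + Ph A x * (χ' (x / R) / R))
    (hG : G = fun x => gw A x * χ (x / R))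
    (hG' : G' = fun x => gw' A x * χ (x / R) + gw A x * (χ' (x / R) / R)) :
    (c0 - 600 * ε - 80 * (2 * k + 4) / A) * JJ n u A c t
      - (c0 * A + 20 * (2 * k + 4) * C1 * (A + 2)) / R * (Mn ^ 2 + Mu ^ 2)
    ≤ (∫ x, P' (x - c) * (F1 n u φ φx g t x - Y * (n t x * u t x)))
      - θ * ∫ x, (G' (x - c) * (F2 n u φ f t x - Y * (u t x * Dop (n t) x))
        + G (x - c) * S2 n u φ f t x) := by
  have hk := D.k0
  have hε := D.ε0
  have hε1 : ε ≤ 1 := by linarith [D.ε1]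
  have hθ0 : 0 < θ := by rw [hθ]; positivity
  have hθ1 : θ ≤ 1 := by rw [hθ, div_le_one (by positivity)]; linarith
  have hA0 : 0 < A := by linarith
  have hR0 : 0 < R := by linarith
  have hC1 := h.Cpos
  have hYk : |Y| ≤ k := hY.trans (div_le_self hk.le (by
    rw [show (1:ℝ) = sqrt 1 by simp]; exact sqrt_le_sqrt (by simp; linarith)))
  have cwP : CW (fun x => Ph A x * χ (x / R)) P' (2 * R) := hP' ▸ h.cwP A R hA0.ne' hR0
  have cwG : CW G G' (2 * R) := by rw [hG, hG']; exact h.cwG A R hR0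
  set K := 2 * k + 4 with hK
  have hK0 : 0 < K := by positivity
  have cF1 := D.cF1 t
  have cF2 := D.cF2 t
  have cS2 := D.cS2 t
  have cn := D.cn1 t
  have cu := D.cu1 t
  have n0 := (D.potn t).c0
  have n1 := (D.potn t).c1
  have u0 := (D.potu t).c0
  have u1 := (D.potu t).c1
  have cBx : Continuous (BBx k θ Y n u t) := by unfold BBx; fun_prop
  have cB : Continuous (BB k θ Y n u t) := by unfold BB; fun_prop
  have cX1 : Continuous fun x => F1 n u φ φx g t x - Y * (n t x * u t x) := by fun_prop
  have cX2 : Continuous fun x => F2 n u φ f t x - Y * (u t x * Dop (n t) x) := by fun_prop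
  have ibp := cwG.ibp c _ _ (D.hB θ Y t) cBx
  have I1 := cwP.compact' c _ cX1
  have I2 : Integrable fun x => (G' (x - c) * (F2 n u φ f t x - Y * (u t x * Dop (n t) x))
        + G (x - c) * S2 n u φ f t x) := (cwG.compact' c _ cX2).add (cwG.compact c _ cS2)
  have I3 : Integrable fun x => G (x - c) * BBx k θ Y n u t x + G' (x - c) * BB k θ Y n u t x :=
    (cwG.compact c _ cBx).add (cwG.compact' c _ cB)
  have z3 : ∫ x, (G (x - c) * BBx k θ Y n u t x + G' (x - c) * BB k θ Y n u t x) = 0 := by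
    rw [integral_add (cwG.compact c _ cBx) (cwG.compact' c _ cB), ibp]; ring
  have I12 : Integrable fun x => P' (x - c) * (F1 n u φ φx g t x - Y * (n t x * u t x))
      - θ * (G' (x - c) * (F2 n u φ f t x - Y * (u t x * Dop (n t) x)) + G (x - c) * S2 n u φ f t x) :=
    I1.sub (I2.const_mul θ)
  have rhs : (∫ x, P' (x - c) * (F1 n u φ φx g t x - Y * (n t x * u t x)))
      - θ * ∫ x, (G' (x - c) * (F2 n u φ f t x - Y * (u t x * Dop (n t) x))
        + G (x - c) * S2 n u φ f t x)
      = ∫ x, (P' (x - c) * (F1 n u φ φx g t x - Y * (n t x * u t x))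
      - θ * (G' (x - c) * (F2 n u φ f t x - Y * (u t x * Dop (n t) x)) + G (x - c) * S2 n u φ f t x)
      - (G (x - c) * BBx k θ Y n u t x + G' (x - c) * BB k θ Y n u t x)) := by
    rw [integral_sub I12 I3, z3, integral_sub I1 (I2.const_mul θ), integral_const_mul, sub_zero]
  obtain ⟨iqA, ieA, lqA, leA⟩ := D.qe A c t hA
  obtain ⟨iqR, -, lqR, -⟩ := D.qe R c t hR
  have is : Integrable fun x => n t x ^ 2 + u t x ^ 2 := (D.inn t).add (D.iu t)
  have isA := gi is A c
  have isR := gi is R c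
  have hS : ∫ x, (n t x ^ 2 + u t x ^ 2) ≤ Mn ^ 2 + Mu ^ 2 := by
    rw [integral_add (D.inn t) (D.iu t)]; exact add_le_add (D.hMn t) (D.hMu t)
  have hJR : JJ n u R c t ≤ Mn ^ 2 + Mu ^ 2 := by
    refine le_trans (integral_mono isR is fun x => ?_) hS
    exact mul_le_of_le_one_left (by positivity) (gw_le_one _ _)
  have L1 : Integrable fun x => c0 * (gw A (x - c) * (n t x ^ 2 + u t x ^ 2))
      - c0 * (A / R) * (n t x ^ 2 + u t x ^ 2) := (isA.const_mul _).sub (is.const_mul _)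
  have L2 : Integrable fun x => c0 * (gw A (x - c) * (n t x ^ 2 + u t x ^ 2))
      - c0 * (A / R) * (n t x ^ 2 + u t x ^ 2)
      - (10 * ε + 4 * K / A) * (gw A (x - c) * qq n u φ φx t x) := L1.sub (iqA.const_mul _)
  have L3 : Integrable fun x => c0 * (gw A (x - c) * (n t x ^ 2 + u t x ^ 2))
      - c0 * (A / R) * (n t x ^ 2 + u t x ^ 2)
      - (10 * ε + 4 * K / A) * (gw A (x - c) * qq n u φ φx t x)
      - 4 / ε * (gw A (x - c) * ee n u φ φx t x) := L2.sub (ieA.const_mul _)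
  have L4 : Integrable fun x => c0 * (gw A (x - c) * (n t x ^ 2 + u t x ^ 2))
      - c0 * (A / R) * (n t x ^ 2 + u t x ^ 2)
      - (10 * ε + 4 * K / A) * (gw A (x - c) * qq n u φ φx t x)
      - 4 / ε * (gw A (x - c) * ee n u φ φx t x)
      - K * C1 * (A + 2) / R * (gw R (x - c) * qq n u φ φx t x) := L3.sub (iqR.const_mul _)
  have lhs : (c0 - 600 * ε - 80 * K / A) * JJ n u A c t
      - (c0 * A + 20 * K * C1 * (A + 2)) / R * (Mn ^ 2 + Mu ^ 2) ≤
      ∫ x, (c0 * (gw A (x - c) * (n t x ^ 2 + u t x ^ 2))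
      - c0 * (A / R) * (n t x ^ 2 + u t x ^ 2)
      - (10 * ε + 4 * K / A) * (gw A (x - c) * qq n u φ φx t x)
      - 4 / ε * (gw A (x - c) * ee n u φ φx t x)
      - K * C1 * (A + 2) / R * (gw R (x - c) * qq n u φ φx t x)) := by
    rw [integral_sub L3 (iqR.const_mul _), integral_sub L2 (ieA.const_mul _),
      integral_sub L1 (iqA.const_mul _), integral_sub (isA.const_mul _) (is.const_mul _),
      integral_const_mul, integral_const_mul, integral_const_mul, integral_const_mul, integral_const_mul]
    have m1 : c0 * (A / R) * ∫ x, (n t x ^ 2 + u t x ^ 2) ≤ c0 * (A / R) * (Mn ^ 2 + Mu ^ 2) := by gcongr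
    have m2 : (10 * ε + 4 * K / A) * ∫ x, gw A (x - c) * qq n u φ φx t x
        ≤ (10 * ε + 4 * K / A) * (20 * JJ n u A c t) := by gcongr
    have m3 : 4 / ε * ∫ x, gw A (x - c) * ee n u φ φx t x ≤ 4 / ε * (100 * ε ^ 2 * JJ n u A c t) := by gcongr
    have m4 : K * C1 * (A + 2) / R * ∫ x, gw R (x - c) * qq n u φ φx t x
        ≤ K * C1 * (A + 2) / R * (20 * (Mn ^ 2 + Mu ^ 2)) :=
      mul_le_mul_of_nonneg_left (lqR.trans (by linarith)) (by positivity)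
    have m5 : 4 / ε * (100 * ε ^ 2 * JJ n u A c t) = 400 * ε * JJ n u A c t := by
      have m5a : 4 / ε * (100 * ε ^ 2 * JJ n u A c t) = 400 * (ε ^ 2 / ε) * JJ n u A c t := by ring
      have hε0 : ε ≠ 0 := D.ε0.ne'
      rw [m5a, show ε ^ 2 / ε = ε by field_simp]
    rw [m5] at m3
    change _ ≤ c0 * JJ n u A c t - _ - _ - _ - _
    have m6 : (c0 - 600 * ε - 80 * K / A) * JJ n u A c t
      - (c0 * A + 20 * K * C1 * (A + 2)) / R * (Mn ^ 2 + Mu ^ 2)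
      = c0 * JJ n u A c t - c0 * (A / R) * (Mn ^ 2 + Mu ^ 2) - (10 * ε + 4 * K / A) * (20 * JJ n u A c t)
        - 400 * ε * JJ n u A c t - K * C1 * (A + 2) / R * (20 * (Mn ^ 2 + Mu ^ 2)) := by ring
    rw [m6]
    linarith
  rw [rhs]
  refine lhs.trans (integral_mono L4 (I12.sub I3) fun x => ?_)
  simp only
  have eP : P' (x - c) = G (x - c) + Ph A (x - c) * (χ' ((x - c) / R) / R) := by rw [hP', hG]
  have hχ0 := h.nn ((x - c) / R)
  have hχ1 := h.le ((x - c) / R)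
  have hg0 := gw_pos A (x - c)
  have hgR := gw_pos R (x - c)
  have hbR := h.bdR R (x - c) hR0
  have qnn : ∀ a b : ℝ, a ≤ b → K * a ≤ K * b := fun a b hab => mul_le_mul_of_nonneg_left hab hK0.le
  have hqd : qq n u φ φx t x = n t x ^ 2 + u t x ^ 2 + φ t x ^ 2 + φx t x ^ 2
    + (Sop (n t) x ^ 2 + Dop (n t) x ^ 2 + Sop (u t) x ^ 2 + Dop (u t) x ^ 2) := rfl
  have s1 := sq_nonneg (n t x)
  have s2 := sq_nonneg (u t x)
  have s3 := sq_nonneg (φ t x)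
  have s4 := sq_nonneg (φx t x)
  have s5 := sq_nonneg (Sop (n t) x)
  have s6 := sq_nonneg (Dop (n t) x)
  have s7 := sq_nonneg (Sop (u t) x)
  have s8 := sq_nonneg (Dop (u t) x)
  rw [eP]
  refine collect c0 ε θ K A R C1 (gw A (x - c)) (gw R (x - c)) (G (x - c)) (G' (x - c))
    (Ph A (x - c) * (χ' ((x - c) / R) / R)) _ _ _ _ _ (n t x ^ 2 + u t x ^ 2) (qq n u φ φx t x)
    (ee n u φ φx t x) ?_ ?_ ?_ ?_ ?_ ?_ ?_ ?_ hθ0 hθ1 h0 hε (by positivity) (by unfold qq; positivity)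
    (by unfold ee; positivity) (D.pw c0 θ Y t x hθ hY Hc)
  · rw [hG]; exact mul_nonneg hg0.le hχ0
  · rw [hG]; exact mul_le_of_le_one_right hg0.le hχ1
  · rw [hG]
    by_cases hx : |x - c| ≤ R
    · have : χ ((x - c) / R) = 1 := h.one _ (by rw [abs_div, abs_of_pos hR0, div_le_one hR0]; exact hx)
      simp only [this, mul_one]
      have : 0 ≤ A / R := by positivity
      linarith
    · have h1 := gw_far A R (x - c) hA0 hR0 (not_le.1 hx).le
      have h2 := mul_nonneg hg0.le hχ0
      simp only
      linarith
  · rw [abs_mul]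
    calc _ ≤ A * (C1 / R * gw R (x - c)) :=
        mul_le_mul (Ph_bd A _ hA0.le) hbR (abs_nonneg _) hA0.le
      _ = _ := by ring
  · rw [hG']
    refine (abs_add_le _ _).trans (add_le_add ?_ ?_)
    · rw [abs_mul, abs_of_nonneg hχ0]
      exact (mul_le_of_le_one_right (abs_nonneg _) hχ1).trans (gw'_bd A _ hA0)
    · rw [abs_mul, abs_of_pos hg0]
      exact (mul_le_of_le_one_left (abs_nonneg _) (gw_le_one _ _)).trans hbR
  · exact (bdF1 k ε Y _ _ (φ t x) (φx t x) (g t x) (Qf (φ t x)) hk hε hε1 hYk (D.bn t x) (D.bg t x)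
      (Qf_bd2 ε _ D.ε1 (D.bφ t x))).trans (qnn _ _ (by rw [hqd]; linarith))
  · exact (bdF2 k ε Y (n t x) (u t x) (φ t x) (Dop (n t) x) (f t x) hk hε hε1 hYk
      (Dop_bd _ _ (D.bn t) x) (D.bf t x)).trans (qnn _ _ (by rw [hqd]; linarith))
  · exact (bdB k θ Y (Sop (n t) x) (Dop (n t) x) (Sop (u t) x) (Dop (u t) x) hk hθ0 hθ1 hYk).trans
      (qnn _ _ (by rw [hqd]; linarith))

end
end VB

namespace VB
open Set Filter Topology

lemma opt (X α β : ℝ) (hα : 0 ≤ α) (hβ : 0 ≤ β) (h : ∀ s, 0 < s → X ≤ s / 2 * α ^ 2 + 1 / (2 * s) * β ^ 2) :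
    X ≤ α * β := by
  have key : ∀ η, 0 < η → X ≤ α * β + η * ((α + β) / 2) := by
    intro η hη
    have hs := h ((β + η) / (α + η)) (by positivity)
    have e1 : (β + η) / (α + η) / 2 * α ^ 2 ≤ (β + η) * α / 2 := by
      rw [show (β + η) / (α + η) / 2 * α ^ 2 = ((β + η) * α / 2) * (α / (α + η)) by ring]
      have : α / (α + η) ≤ 1 := by rw [div_le_one (by positivity)]; linarith
      exact mul_le_of_le_one_right (by positivity) this
    have e2 : 1 / (2 * ((β + η) / (α + η))) * β ^ 2 ≤ (α + η) * β / 2 := by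
      rw [show 1 / (2 * ((β + η) / (α + η))) * β ^ 2 = ((α + η) * β / 2) * (β / (β + η)) by
        field_simp]
      have : β / (β + η) ≤ 1 := by rw [div_le_one (by positivity)]; linarith
      exact mul_le_of_le_one_right (by positivity) this
    linarith
  refine le_of_forall_pos_le_add fun ε hε => ?_
  have hp : 0 < α + β + 1 := by positivity
  have := key (ε / (α + β + 1)) (by positivity)
  refine this.trans ?_
  have h1 : ε / (α + β + 1) * ((α + β) / 2) ≤ ε := by
    rw [div_mul_eq_mul_div, div_le_iff₀ hp]
    nlinarith
  linarith

lemma csb (W v a b : ℝ → ℝ) (K α β : ℝ) (hK : 0 ≤ K) (hα : 0 ≤ α) (hβ : 0 ≤ β)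
    (hW : ∀ x, |W x| ≤ K * v x) (hv : ∀ x, 0 ≤ v x)
    (ia : Integrable (fun x => v x * a x ^ 2)) (ib : Integrable (fun x => v x * b x ^ 2))
    (ha : ∫ x, v x * a x ^ 2 ≤ α ^ 2) (hb : ∫ x, v x * b x ^ 2 ≤ β ^ 2) :
    |∫ x, W x * (a x * b x)| ≤ K * (α * β) := by
  have h : ∀ s, 0 < s → |∫ x, W x * (a x * b x)| ≤ K * (s / 2 * α ^ 2 + 1 / (2 * s) * β ^ 2) := by
    intro s hs
    have i1 : Integrable (fun x => K * (s / 2 * (v x * a x ^ 2) + 1 / (2 * s) * (v x * b x ^ 2))) :=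
      ((ia.const_mul _).add (ib.const_mul _)).const_mul K
    have := norm_integral_le_of_norm_le (f := fun x => W x * (a x * b x)) i1
      (Eventually.of_forall fun x => by
        rw [Real.norm_eq_abs, abs_mul]
        have h1 : |a x * b x| ≤ s / 2 * a x ^ 2 + 1 / (2 * s) * b x ^ 2 := by
          have e : s / 2 * a x ^ 2 + 1 / (2 * s) * b x ^ 2 = (s ^ 2 * a x ^ 2 + b x ^ 2) / (2 * s) := by
            field_simp
          rw [e, le_div_iff₀ (by positivity), abs_mul]
          nlinarith [sq_nonneg (s * |a x| - |b x|), sq_abs (a x), sq_abs (b x)]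
        calc |W x| * |a x * b x| ≤ (K * v x) * (s / 2 * a x ^ 2 + 1 / (2 * s) * b x ^ 2) :=
              mul_le_mul (hW x) h1 (abs_nonneg _) (mul_nonneg hK (hv x))
          _ = _ := by ring)
    rw [Real.norm_eq_abs, integral_const_mul, integral_add (ia.const_mul _) (ib.const_mul _),
      integral_const_mul, integral_const_mul] at this
    refine this.trans ?_
    gcongr
  rcases hK.eq_or_lt with h0 | h0
  · subst h0
    have := h 1 one_pos
    simpa using this
  · have := opt (|∫ x, W x * (a x * b x)| / K) α β hα hβ fun s hs => by
      rw [div_le_iff₀ h0]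
      linarith [h s hs]
    rw [div_le_iff₀ h0] at this
    linarith

section
variable {k ε Mn Mu : ℝ} {n u φ nt nx ut ux φx f fx g : ℝ → ℝ → ℝ}

def VV (n u : ℝ → ℝ → ℝ) (y : ℝ → ℝ) (χ : ℝ → ℝ) (θ A R t : ℝ) : ℝ :=
  (∫ x, (Ph A (x - y t) * χ ((x - y t) / R)) * (n t x * u t x))
    - θ * ∫ x, (gw A (x - y t) * χ ((x - y t) / R)) * (u t x * Dop (n t) x)

def HH (n u : ℝ → ℝ → ℝ) (y : ℝ → ℝ) (χ : ℝ → ℝ) (A R t : ℝ) : ℝ :=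
  ∫ x, (gw A (x - y t) * χ ((x - y t) / R)) * (n t x ^ 2 + u t x ^ 2)

lemma Dat.VV_bd (D : Dat k ε Mn Mu n u φ nt nx ut ux φx f fx g) {χ χ' : ℝ → ℝ} {C1 : ℝ} (h : Cut χ χ' C1)
    (y : ℝ → ℝ) (θ A R t : ℝ) (hA : 4 ≤ A) (h0 : 0 ≤ θ) (h1 : θ ≤ 1) :
    |VV n u y χ θ A R t| ≤ 2 * A * (Mn * Mu) := by
  have hA0 : 0 < A := by linarith
  have m0 := D.Mn0
  have m1 := D.Mu0
  have e1 := csb (fun x => Ph A (x - y t) * χ ((x - y t) / R)) (fun _ => 1) (n t) (u t) A Mn Mu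
    hA0.le m0 m1 (fun x => by
      rw [abs_mul, abs_of_nonneg (h.nn _)]
      exact mul_le_mul (Ph_bd A _ hA0.le) (h.le _) (h.nn _) hA0.le) (fun _ => zero_le_one)
    (by simpa using D.inn t) (by simpa using D.iu t) (by simpa using D.hMn t) (by simpa using D.hMu t)
  have gn : ∀ (F : ℝ → ℝ), Integrable (fun x => F x ^ 2) →
      ∫ x, gw A (x - y t) * F x ^ 2 ≤ ∫ x, F x ^ 2 := fun F hF =>
    integral_mono (gi hF A _) hF fun x => by
      simp only
      exact mul_le_of_le_one_left (sq_nonneg _) (gw_le_one _ _)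
  have el := (D.potn t).ell (D.cn1 t) A (y t) hA (gi (D.inn t) A _)
  have p0 : 0 ≤ ∫ x, gw A (x - y t) * Sop (n t) x ^ 2 :=
    integral_nonneg fun x => mul_nonneg (gw_pos _ _).le (sq_nonneg _)
  have e2 := csb (fun x => gw A (x - y t) * χ ((x - y t) / R)) (fun x => gw A (x - y t)) (u t) (Dop (n t)) 1 Mu
    (2 * Mn) zero_le_one m1 (by positivity) (fun x => by
      rw [abs_mul, abs_of_nonneg (h.nn _), abs_of_pos (gw_pos _ _), one_mul]
      exact mul_le_of_le_one_right (gw_pos _ _).le (h.le _)) (fun _ => (gw_pos _ _).le)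
    (gi (D.iu t) A _) ((D.potn t).i1 A _ hA0) ((gn _ (D.iu t)).trans (D.hMu t))
    (by nlinarith [gn _ (D.inn t), D.hMn t, sq_nonneg Mn])
  unfold VV
  refine (abs_sub _ _).trans ?_
  rw [abs_mul, abs_of_nonneg h0]
  have e3 : θ * |∫ x, (gw A (x - y t) * χ ((x - y t) / R)) * (u t x * Dop (n t) x)| ≤ 1 * (1 * (Mu * (2 * Mn))) :=
    mul_le_mul h1 e2 (abs_nonneg _) zero_le_one
  nlinarith [mul_nonneg m0 m1]

lemma Dat.HH_cont (D : Dat k ε Mn Mu n u φ nt nx ut ux φx f fx g) {χ χ' : ℝ → ℝ} {C1 : ℝ} (h : Cut χ χ' C1)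
    (y : ℝ → ℝ) (hy : ContDiff ℝ 1 y) (A R : ℝ) (hR : 0 < R) : Continuous (HH n u y χ A R) := by
  have c1 := D.cn; have c2 := D.cu; have c3 := D.cnt; have c4 := D.cut
  refine continuous_iff_continuousAt.2 fun t => ?_
  have cρt : Continuous (Function.uncurry fun t x => 2 * n t x * nt t x + 2 * u t x * ut t x) := by
    change Continuous fun p => 2 * Function.uncurry n p * Function.uncurry nt p
      + 2 * Function.uncurry u p * Function.uncurry ut p
    fun_prop
  have := law (h.cwG A R hR) y hy (fun t x => n t x ^ 2 + u t x ^ 2)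
    (fun t x => 2 * n t x * nt t x + 2 * u t x * ut t x) (fun _ _ => 0) (fun _ _ => 0)
    (fun t x => 2 * n t x * nt t x + 2 * u t x * ut t x)
    (fun t x => by
      refine (((D.hnt t x).fun_pow 2).add ((D.hut t x).fun_pow 2)).congr_deriv ?_
      push_cast; ring)
    (by
      change Continuous fun p => Function.uncurry n p ^ 2 + Function.uncurry u p ^ 2
      fun_prop)
    cρt t (fun x => hasDerivAt_const _ _) continuous_const (sec cρt t) (fun x => by ring)
  exact this.continuousAt

lemma Dat.step (D : Dat k ε Mn Mu n u φ nt nx ut ux φx f fx g) (c0 θ : ℝ) (h0 : 0 < c0)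
    (hθ : θ = 1 / (2 * (1 + k))) (y : ℝ → ℝ) (hy : ContDiff ℝ 1 y) (hY : ∀ t, |deriv y t| ≤ k / sqrt (1 + k))
    (Hc : ∀ θ Y ν ν1 ν2 ω ω1 ω2 : ℝ, θ = 1 / (2 * (1 + k)) →
    |Y| ≤ k / sqrt (1 + k) →
    c0 * ((ν - ν2) ^ 2 + (ω - ω2) ^ 2)
      + (-(1 - θ) * (ω1 ^ 2 + ω * ω2) - (k + 1 / 2) * (ν1 ^ 2 + ν * ν2) + Y * (2 * ν1 * ω1 + ν * ω2 + ν2 * ω))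
    ≤ 1 / 2 * (ω - ω2) ^ 2 + k / 2 * (ν - ν2) ^ 2 - 1 / 2 * ν1 ^ 2 + 1 / 2 * ν ^ 2 - Y * (ν - ν2) * (ω - ω2)
      - θ * ((ω - ω2) ^ 2 - (ω - ω2) * ω + (k * (ν - ν2) + ν) * ν2))
    {χ χ' : ℝ → ℝ} {C1 : ℝ} (h : Cut χ χ' C1) (A : ℝ) (hA : 4 ≤ A)
    (hε : 600 * ε ≤ c0 / 4) (hA' : 80 * (2 * k + 4) / A ≤ c0 / 4) (T R0 : ℝ) (hT : 0 ≤ T) (hR0 : 0 < R0) :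
    ∫ t in (-T)..T, HH n u y χ A R0 t ≤ 8 / c0 * A * Mu * Mn := by
  have hk := D.k0
  have hA0 : 0 < A := by linarith
  have hθ0 : 0 ≤ θ := by rw [hθ]; positivity
  have hθ1 : θ ≤ 1 := by rw [hθ, div_le_one (by positivity)]; linarith
  have hc := D.HH_cont h y hy A R0 hR0
  obtain ⟨K, hK⟩ : ∃ K, K = (c0 * A + 20 * (2 * k + 4) * C1 * (A + 2)) * (Mn ^ 2 + Mu ^ 2) := ⟨_, rfl⟩
  have hJ : ∀ t, HH n u y χ A R0 t ≤ JJ n u A (y t) t := fun t => by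
    have i0 : Integrable (fun x => n t x ^ 2 + u t x ^ 2) := (D.inn t).add (D.iu t)
    have c1 := D.cn1 t; have c2 := D.cu1 t
    refine integral_mono ((h.cwG A R0 hR0).compact (y t) _ (by fun_prop)) (gi i0 A (y t)) fun x => ?_
    simp only
    refine mul_le_mul_of_nonneg_right ?_ (by positivity)
    exact mul_le_of_le_one_right (gw_pos _ _).le (h.le _)
  have hJ0 : ∀ t, 0 ≤ JJ n u A (y t) t := fun t =>
    integral_nonneg fun x => mul_nonneg (gw_pos _ _).le (by positivity)
  have main : ∀ R, 4 ≤ R → c0 / 2 * (∫ t in (-T)..T, HH n u y χ A R0 t) - 2 * T * (K / R) ≤ 4 * A * (Mn * Mu) := by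
    intro R hR
    have hR' : 0 < R := by linarith
    have hd : ∀ t, HasDerivAt (VV n u y χ θ A R) _ t := fun t =>
      (D.law1 (h.cwP A R hA0.ne' hR') y hy t).sub ((D.law2 (h.cwG A R hR') y hy t).const_mul θ)
    have hle : ∀ t, c0 / 2 * HH n u y χ A R0 t - K / R ≤ deriv (VV n u y χ θ A R) t := fun t => by
      rw [(hd t).deriv]
      refine le_trans ?_ (D.virial c0 θ (deriv y t) t (y t) A R h0 hθ (hY t) Hc h hA hR _ _ _ rfl rfl rfl)
      rw [hK]
      have q1 : c0 / 2 * HH n u y χ A R0 t ≤ (c0 - 600 * ε - 80 * (2 * k + 4) / A) * JJ n u A (y t) t := by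
        refine (mul_le_mul_of_nonneg_left (hJ t) (by positivity)).trans ?_
        exact mul_le_mul_of_nonneg_right (by linarith) (hJ0 t)
      rw [mul_div_right_comm]
      linarith
    have hdiff : ∀ t, HasDerivAt (VV n u y χ θ A R) (deriv (VV n u y χ θ A R) t) t := fun t =>
      (hd t).differentiableAt.hasDerivAt
    have int := intervalIntegral.integral_le_sub_of_hasDeriv_right_of_le (a := -T) (b := T)
      (g := VV n u y χ θ A R) (g' := fun t => deriv (VV n u y χ θ A R) t)
      (φ := fun t => c0 / 2 * HH n u y χ A R0 t - K / R) (by linarith)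
      (fun t _ => (hdiff t).continuousAt.continuousWithinAt)
      (fun t _ => (hdiff t).hasDerivWithinAt)
      (Continuous.integrableOn_Icc (by fun_prop)) (fun t _ => hle t)
    have b1 := abs_le.1 (D.VV_bd h y θ A R T hA hθ0 hθ1)
    have b2 := abs_le.1 (D.VV_bd h y θ A R (-T) hA hθ0 hθ1)
    rw [intervalIntegral.integral_sub (Continuous.intervalIntegrable (by fun_prop) _ _) (by simp),
      intervalIntegral.integral_const_mul, intervalIntegral.integral_const, smul_eq_mul] at int
    nlinarith
  have lim : Tendsto (fun R : ℝ => c0 / 2 * (∫ t in (-T)..T, HH n u y χ A R0 t) - 2 * T * (K / R)) atTop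
      (𝓝 (c0 / 2 * (∫ t in (-T)..T, HH n u y χ A R0 t) - 2 * T * 0)) :=
    tendsto_const_nhds.sub ((tendsto_const_nhds.div_atTop tendsto_id).const_mul _)
  have fin := le_of_tendsto lim (eventually_atTop.2 ⟨4, main⟩)
  rw [show 8 / c0 * A * Mu * Mn = (4 * A * (Mn * Mu)) / (c0 / 2) by field_simp; ring, le_div_iff₀ (by positivity)]
  linarith

lemma Dat.final (D : Dat k ε Mn Mu n u φ nt nx ut ux φx f fx g) (y : ℝ → ℝ) (hy : ContDiff ℝ 1 y)
    {χ χ' : ℝ → ℝ} {C1 : ℝ} (h : Cut χ χ' C1) (A : ℝ) (hA : 4 ≤ A) (B : ℝ)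
    (H : ∀ T R0, 0 ≤ T → 0 < R0 → ∫ t in (-T)..T, HH n u y χ A R0 t ≤ B) :
    (∫⁻ t : ℝ, ∫⁻ x : ℝ, ENNReal.ofReal (Real.exp (-2 * |x - y t| / A) * (n t x ^ 2 + u t x ^ 2)))
      ≤ ENNReal.ofReal B := by
  have hA0 : 0 < A := by linarith
  let N1 : ℕ → ℝ := fun N => (N : ℝ) + 1
  have N1p : ∀ N, 0 < N1 N := fun N => by positivity
  let I : ℕ → ℝ → ℝ≥0∞ := fun N => indicator (Icc (-N1 N) (N1 N)) fun t => ENNReal.ofReal (HH n u y χ A (N1 N) t)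
  have hH0 : ∀ N t, 0 ≤ HH n u y χ A (N1 N) t := fun N t =>
    integral_nonneg fun x => mul_nonneg (mul_nonneg (gw_pos _ _).le (h.nn _)) (by positivity)
  have step1 : ∀ t, ∫⁻ x : ℝ, ENNReal.ofReal (Real.exp (-2 * |x - y t| / A) * (n t x ^ 2 + u t x ^ 2))
      ≤ liminf (fun N => I N t) atTop := by
    intro t
    have c1 := D.cn1 t; have c2 := D.cu1 t
    have hx := h.cont
    have hgw := gw_cont A
    let F : ℕ → ℝ → ℝ≥0∞ := fun N x =>
      ENNReal.ofReal ((gw A (x - y t) * χ ((x - y t) / N1 N)) * (n t x ^ 2 + u t x ^ 2))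
    have e0 : ∀ N, ENNReal.ofReal (HH n u y χ A (N1 N) t) = ∫⁻ x, F N x := fun N =>
      ofReal_integral_eq_lintegral_ofReal ((h.cwG A (N1 N) (N1p N)).compact (y t) _ (by fun_prop))
        (Eventually.of_forall fun x => mul_nonneg (mul_nonneg (gw_pos _ _).le (h.nn _)) (by positivity))
    have e1 : ∀ᶠ N in atTop, I N t = ∫⁻ x, F N x := by
      obtain ⟨N0, hN0⟩ := exists_nat_ge |t|
      filter_upwards [eventually_ge_atTop N0] with N hN
      have : |t| ≤ N1 N := by
        have : (N0:ℝ) ≤ N := by exact_mod_cast hN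
        simp only [N1]; linarith
      rw [← e0]
      have hm : t ∈ Icc (-N1 N) (N1 N) := abs_le.1 this
      simp only [I]
      rw [indicator_of_mem hm]
    rw [liminf_congr e1]
    refine le_trans (lintegral_mono fun x => ?_)
      (lintegral_liminf_le fun N => (ENNReal.continuous_ofReal.comp (by fun_prop)).measurable)
    have e2 : ∀ᶠ N in atTop, F N x = ENNReal.ofReal (gw A (x - y t) * (n t x ^ 2 + u t x ^ 2)) := by
      obtain ⟨N0, hN0⟩ := exists_nat_ge |x - y t|
      filter_upwards [eventually_ge_atTop N0] with N hN
      have h2 : |(x - y t) / N1 N| ≤ 1 := by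
        have : (N0:ℝ) ≤ N := by exact_mod_cast hN
        rw [abs_div, abs_of_pos (N1p N), div_le_one (N1p N)]
        simp only [N1]; linarith
      simp only [F]
      rw [h.one _ h2, mul_one]
    have e3 : liminf (fun N => F N x) atTop = ENNReal.ofReal (gw A (x - y t) * (n t x ^ 2 + u t x ^ 2)) := by
      rw [liminf_congr e2, liminf_const]
    rw [e3]
    refine ENNReal.ofReal_le_ofReal (mul_le_mul_of_nonneg_right ?_ (by positivity))
    rcases exp_le_gw A (x - y t) with h | h
    · exact h
    · linarith
  have mI : ∀ N, Measurable (I N) := fun N =>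
    (ENNReal.continuous_ofReal.comp (D.HH_cont h y hy A (N1 N) (N1p N))).measurable.indicator measurableSet_Icc
  refine (lintegral_mono step1).trans ((lintegral_liminf_le mI).trans ?_)
  refine liminf_le_of_frequently_le' (Frequently.of_forall fun N => ?_)
  simp only [I]
  rw [lintegral_indicator measurableSet_Icc]
  rw [← ofReal_integral_eq_lintegral_ofReal (D.HH_cont h y hy A (N1 N) (N1p N)).integrableOn_Icc
    (Eventually.of_forall fun t => hH0 N t)]
  refine ENNReal.ofReal_le_ofReal ?_
  rw [integral_Icc_eq_integral_Ioc, ← intervalIntegral.integral_of_le (by have := N1p N; linarith)]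
  exact H _ _ (N1p N).le (N1p N)

end
end VB

namespace VB
open Set Filter Topology

lemma partials (F : ℝ → ℝ → ℝ) (hF : ContDiff ℝ 1 (Function.uncurry F)) :
    ∃ Ft Fx : ℝ → ℝ → ℝ, (∀ t x, HasDerivAt (fun s => F s x) (Ft t x) t) ∧
      (∀ t x, HasDerivAt (F t) (Fx t x) x) ∧ Continuous (Function.uncurry Ft) ∧
      Continuous (Function.uncurry Fx) := by
  have hc := hF.continuous_fderiv (by norm_num)
  have hd : ∀ p, HasFDerivAt (Function.uncurry F) (fderiv ℝ (Function.uncurry F) p) p := fun p =>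
    (hF.differentiable (by norm_num) p).hasFDerivAt
  refine ⟨fun t x => fderiv ℝ (Function.uncurry F) (t, x) (1, 0),
    fun t x => fderiv ℝ (Function.uncurry F) (t, x) (0, 1), fun t x => ?_, fun t x => ?_, ?_, ?_⟩
  · have h1 : HasDerivAt (fun s : ℝ => (s, x)) ((1:ℝ), (0:ℝ)) t := (hasDerivAt_id t).prodMk (hasDerivAt_const t x)
    exact (hd (t, x)).comp_hasDerivAt t h1
  · have h1 : HasDerivAt (fun s : ℝ => (t, s)) ((0:ℝ), (1:ℝ)) x := (hasDerivAt_const x t).prodMk (hasDerivAt_id x)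
    exact (hd (t, x)).comp_hasDerivAt x h1
  · exact hc.clm_apply continuous_const
  · exact hc.clm_apply continuous_const

lemma l2get (f : ℝ → ℝ) (hf : Continuous f) (M : ℝ) (h : eLpNorm f 2 volume ≤ ENNReal.ofReal M) :
    Integrable (fun x => f x ^ 2) ∧ ∫ x, f x ^ 2 ≤ (max M 0) ^ 2 := by
  have hm : MemLp f 2 volume := ⟨hf.aestronglyMeasurable, h.trans_lt ENNReal.ofReal_lt_top⟩
  have hi := hm.integrable_sq
  refine ⟨hi, ?_⟩
  have e := eLpNorm_nnreal_pow_eq_lintegral (f := f) (p := 2) (μ := volume) (by norm_num)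
  have e2 : ENNReal.ofReal (∫ x, f x ^ 2) = ∫⁻ x, ENNReal.ofReal (f x ^ 2) :=
    ofReal_integral_eq_lintegral_ofReal hi (Eventually.of_forall fun x => sq_nonneg _)
  have e3 : ∀ x, ENNReal.ofReal (f x ^ 2) = ‖f x‖ₑ ^ (2:ℝ) := fun x => by
    rw [← sq_abs, ENNReal.ofReal_pow (abs_nonneg _), ← Real.enorm_eq_ofReal_abs]
    norm_cast
  have e4 : ENNReal.ofReal (∫ x, f x ^ 2) = eLpNorm f 2 volume ^ (2:ℝ) := by
    rw [e2]; simp_rw [e3]; exact e.symm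
  have e5 : ENNReal.ofReal (∫ x, f x ^ 2) ≤ ENNReal.ofReal ((max M 0) ^ 2) := by
    rw [e4, ENNReal.ofReal_pow (le_max_right _ _)]
    have : ENNReal.ofReal M ≤ ENNReal.ofReal (max M 0) := ENNReal.ofReal_le_ofReal (le_max_left _ _)
    have h2 := ENNReal.rpow_le_rpow (h.trans this) (by norm_num : (0:ℝ) ≤ 2)
    refine h2.trans_eq ?_
    norm_cast
  exact (ENNReal.ofReal_le_ofReal_iff (by positivity)).1 e5

lemma linfget (f : ℝ → ℝ) (hf : Continuous f) (M : ℝ) (hM : 0 ≤ M) (h : eLpNorm f ⊤ volume ≤ ENNReal.ofReal M) (x : ℝ) :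
    |f x| ≤ M := by
  have h1 : ∀ᵐ x, max |f x| M = M := by
    have := ae_le_eLpNormEssSup (f := f) (μ := volume)
    rw [eLpNorm_exponent_top] at h
    filter_upwards [this] with x hx
    have h2 := hx.trans h
    rw [Real.enorm_eq_ofReal_abs, ENNReal.ofReal_le_ofReal_iff hM] at h2
    exact max_eq_right h2
  have h2 : (fun x => max |f x| M) = fun _ => M :=
    (Continuous.ae_eq_iff_eq volume (by fun_prop) continuous_const).1 h1
  have : max |f x| M = M := congrFun h2 x
  exact (le_max_left _ _).trans this.le

lemma wcont {p : ℝ → ℝ} (hp : IsPressure p) : ContinuousOn (fun s => deriv p (1 + s) / (1 + s)) (Ioi (-1)) := by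
  have h1 : ContinuousOn (deriv p) (Ioi 0) := hp.smooth.continuousOn_deriv_of_isOpen isOpen_Ioi (by simp)
  have h2 : ContinuousOn (fun s : ℝ => deriv p (1 + s)) (Ioi (-1)) :=
    h1.comp (by fun_prop) fun s hs => by simp only [mem_Ioi] at *; linarith
  exact h2.div (by fun_prop) fun s hs => by simp only [mem_Ioi] at hs; linarith

def Gn (w : ℝ → ℝ) (a : ℝ) : ℝ := a * w a - ∫ s in (0:ℝ)..a, w s

lemma Gn_deriv {p w : ℝ → ℝ} (hw : IsWFor p w) (a : ℝ) (ha : -1 < a) :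
    HasDerivAt (Gn w) (a * (deriv p (1 + a) / (1 + a))) a := by
  have hc : ContinuousOn w (Ioi (-1)) := fun s hs => (hw.2 s hs).continuousAt.continuousWithinAt
  have h1 : HasDerivAt (fun a => ∫ s in (0:ℝ)..a, w s) (w a) a := by
    refine intervalIntegral.integral_hasDerivAt_right ?_ (hc.stronglyMeasurableAtFilter isOpen_Ioi a ha)
      (hw.2 a ha).continuousAt
    refine (hc.mono ?_).intervalIntegrable
    intro s hs
    have : min 0 a ≤ s := hs.1
    have h2 : -1 < min 0 a := lt_min (by norm_num) ha
    exact h2.trans_le this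
  refine (((hasDerivAt_id a).mul (hw.2 a ha)).sub h1).congr_deriv ?_
  simp only [id]; ring

lemma smallw {p w : ℝ → ℝ} (hp : IsPressure p) (hw : IsWFor p w) (ε : ℝ) (hε : 0 < ε) :
    ∃ δ, 0 < δ ∧ δ ≤ ε ∧ δ ≤ 1 / 10 ∧ (∀ a, |a| ≤ δ → |w a - deriv p 1 * a| ≤ ε * |a|) ∧
      ∀ a, |a| ≤ δ → |Gn w a - deriv p 1 / 2 * a ^ 2| ≤ ε * a ^ 2 := by
  have hc := ((wcont hp).continuousAt (Ioi_mem_nhds (by norm_num : (-1:ℝ) < 0)))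
  obtain ⟨d, hd, h⟩ := Metric.continuousAt_iff.1 hc ε hε
  refine ⟨min (d / 2) (min ε (1 / 10)), by positivity, (min_le_right _ _).trans (min_le_left _ _),
    (min_le_right _ _).trans (min_le_right _ _), ?_⟩
  have hb : ∀ a, |a| ≤ min (d / 2) (min ε (1 / 10)) → |deriv p (1 + a) / (1 + a) - deriv p 1| ≤ ε ∧ -1 < a := by
    intro a ha
    have h1 : |a| ≤ d / 2 := ha.trans (min_le_left _ _)
    have h2 : |a| ≤ 1 / 10 := ha.trans ((min_le_right _ _).trans (min_le_right _ _))
    have h3 := h (x := a) (by rw [Real.dist_eq, sub_zero]; linarith)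
    rw [Real.dist_eq] at h3
    simp only [add_zero, div_one] at h3
    exact ⟨h3.le, by linarith [(abs_le.1 h2).1]⟩
  constructor
  · intro a ha
    have := (convex_Icc (-|a|) |a|).norm_image_sub_le_of_norm_hasDerivWithin_le
      (f := fun a => w a - deriv p 1 * a) (f' := fun a => deriv p (1 + a) / (1 + a) - deriv p 1) (C := ε)
      (x := 0) (y := a)
      (fun s hs => ((hw.2 s (hb s ((abs_le.2 hs).trans ha)).2).sub
        (by simpa using (hasDerivAt_id s).const_mul (deriv p 1))).hasDerivWithinAt)
      (fun s hs => (hb s ((abs_le.2 hs).trans ha)).1)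
      ⟨by simp, by simp⟩ ⟨neg_abs_le a, le_abs_self a⟩
    simpa [hw.1] using this
  · intro a ha
    have := (convex_Icc (-|a|) |a|).norm_image_sub_le_of_norm_hasDerivWithin_le
      (f := fun a => Gn w a - deriv p 1 / 2 * a ^ 2)
      (f' := fun a => a * (deriv p (1 + a) / (1 + a) - deriv p 1)) (C := ε * |a|)
      (x := 0) (y := a)
      (fun s hs => (((Gn_deriv hw s (hb s ((abs_le.2 hs).trans ha)).2).sub
        (((hasDerivAt_id s).fun_pow 2).const_mul (deriv p 1 / 2))).congr_deriv
          (by simp only [id]; push_cast; ring)).hasDerivWithinAt)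
      (fun s hs => by
        rw [Real.norm_eq_abs, abs_mul, mul_comm]
        exact mul_le_mul (hb s ((abs_le.2 hs).trans ha)).1 (abs_le.2 hs) (abs_nonneg _) hε.le)
      ⟨by simp, by simp⟩ ⟨neg_abs_le a, le_abs_self a⟩
    have e : Gn w 0 = 0 := by simp [Gn]
    simp only [e, Real.norm_eq_abs] at this
    norm_num at this
    refine this.trans_eq ?_
    rw [mul_assoc, abs_mul_abs_self]; ring

lemma mkDat {p w : ℝ → ℝ} (hw : IsWFor p w) (hp : IsPressure p) (ε δ Mn Mu : ℝ) (hε : 0 < ε) (hε1 : ε ≤ 1 / 10)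
    (hδ : 0 < δ) (hδε : δ ≤ ε) (hδ1 : δ ≤ 1 / 10)
    (h1 : ∀ a, |a| ≤ δ → |w a - deriv p 1 * a| ≤ ε * |a|)
    (h2 : ∀ a, |a| ≤ δ → |Gn w a - deriv p 1 / 2 * a ^ 2| ≤ ε * a ^ 2)
    (n u φ : ℝ → ℝ → ℝ) (S : IsEPwSolution w n u φ)
    (bn : ∀ t, eLpNorm (n t) ⊤ volume ≤ ENNReal.ofReal δ)
    (bu2 : ∀ t : ℝ, eLpNorm (u t) 2 volume ≤ ENNReal.ofReal Mu)
    (bn2 : ∀ t : ℝ, eLpNorm (n t) 2 volume ≤ ENNReal.ofReal Mn) :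
    ∃ nt nx ut ux φx f fx g,
      Dat (deriv p 1) ε (max Mn 0) (max Mu 0) n u φ nt nx ut ux φx f fx g := by
  obtain ⟨nt, nx, hnt, hnx, cnt, cnx⟩ := partials n S.reg_n
  obtain ⟨ut, ux, hut, hux, cut, cux⟩ := partials u S.reg_u
  have cn := S.reg_n.continuous
  have cu := S.reg_u.continuous
  have hk : 0 < deriv p 1 := hp.deriv_pos 1 one_pos
  have bn' : ∀ t x, |n t x| ≤ δ := fun t => linfget _ (sec cn t) δ hδ.le (bn t)
  have n1 : ∀ t x, -1 < n t x := fun t x => by linarith [S.dens_pos t x]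
  have hφ : ∀ t x, HasDerivAt (φ t) (deriv (φ t) x) x := fun t x =>
    ((S.reg_phi_space t).differentiable (by norm_num) x).hasDerivAt
  have hφx : ∀ t x, HasDerivAt (deriv (φ t)) (exp (φ t x) - 1 - n t x) x := fun t x => by
    have c : ContDiff ℝ 1 (deriv (φ t)) := by
      have := S.reg_phi_space t
      rw [show (2 : WithTop ℕ∞) = 1 + 1 by norm_num, contDiff_succ_iff_deriv] at this
      exact this.2.2
    refine ((c.differentiable (by norm_num) x).hasDerivAt).congr_deriv ?_
    have := S.eq_phi t x
    unfold qfun at this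
    linarith
  obtain ⟨fx, hfx⟩ : ∃ fx : ℝ → ℝ → ℝ, fx = fun t x => deriv p (1 + n t x) / (1 + n t x) * nx t x := ⟨_, rfl⟩
  have hf : ∀ t x, HasDerivAt (fun x => w (n t x)) (fx t x) x := fun t x => by
    rw [hfx]; exact (hw.2 _ (n1 t x)).comp x (hnx t x)
  have cfxx : Continuous (Function.uncurry fx) := by
    have := (wcont hp).comp_continuous cn (fun q => n1 q.1 q.2)
    rw [hfx]
    exact this.mul cnx
  have hg : ∀ t x, HasDerivAt (fun x => Gn w (n t x)) (n t x * fx t x) x := fun t x => by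
    refine ((Gn_deriv hw _ (n1 t x)).comp x (hnx t x)).congr_deriv ?_
    rw [hfx]; ring
  have en : ∀ t x, nt t x = -(nx t x * u t x + (1 + n t x) * ux t x) := fun t x => by
    have := S.eq_n t x
    rw [(hnt t x).deriv] at this
    rw [this]
    congr 1
    exact (((hnx t x).const_add 1).mul (hux t x)).deriv
  have hff : ∀ t x, HasDerivAt (fun z => u t z ^ 2 / 2 + w (n t z)) (u t x * ux t x + fx t x) x := fun t x =>
    (((((hux t x).fun_pow 2).div_const 2)).add (hf t x)).congr_deriv (by push_cast; ring)
  have eu : ∀ t x, ut t x = -(u t x * ux t x + fx t x + deriv (φ t) x) := fun t x => by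
    have := S.eq_u t x
    rw [(hut t x).deriv] at this
    rw [this]
    congr 1
    exact ((hff t x).add (hφ t x)).deriv
  have L2u := fun t => l2get _ (sec cu t) Mu (bu2 t)
  have L2n := fun t => l2get _ (sec cn t) Mn (bn2 t)
  have cx : ∀ x, Continuous fun t => deriv (φ t) x := fun x => by
    have e : (fun t => deriv (φ t) x) = fun t => -ut t x - u t x * ux t x - fx t x := by
      funext t; linarith [eu t x]
    have s : ∀ {h : ℝ → ℝ → ℝ}, Continuous (Function.uncurry h) → Continuous fun t => h t x := fun c =>
      c.comp (by fun_prop : Continuous (fun t : ℝ => (t, x)))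
    have a1 := s cut; have a2 := s cu; have a3 := s cux; have a4 := s cfxx
    rw [e]; fun_prop
  have bw : ∀ t x, |w (n t x)| ≤ deriv p 1 + 1 := fun t x => by
    have a1 := abs_le.1 (h1 _ (bn' t x))
    have a2 := bn' t x
    have a3 := abs_le.1 (le_refl |n t x|)
    have a4 : |n t x| ≤ 1 := by linarith
    have a5 := abs_nonneg (n t x)
    have a6 : ε * |n t x| ≤ 1 := by nlinarith
    rw [abs_le]
    constructor <;> nlinarith [a1.1, a1.2, a3.1, a3.2]
  have side : ∀ σ : ℝ, σ = 1 ∨ σ = -1 → ∀ t x, σ * (exp (φ t x) - 1) ≤ δ := fun σ hσ =>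
    phi_side σ δ ((max Mu 0) ^ 2) (deriv p 1 + 1) hσ n u ut (fun t z => u t z ^ 2 / 2 + w (n t z))
      (fun t x => u t x * ux t x + fx t x) φ (fun t => deriv (φ t)) hut cu cut hff
      (fun t => by
        have a2 := sec cu t; have a3 := sec cux t; have a4 := sec cfxx t
        fun_prop)
      hφ hφx (fun x => (S.reg_phi_time x).continuous) cx eu bn' (fun t => (L2u t).1) (fun t => (L2u t).2)
      (fun t x => by
        have := abs_le.1 (bw t x)
        rw [abs_le]
        constructor <;> nlinarith [sq_nonneg (u t x), this.1, this.2])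
      (by linarith)
  have bE : ∀ t x, |exp (φ t x) - 1| ≤ δ := fun t x =>
    abs_le.2 ⟨by linarith [side (-1) (Or.inr rfl) t x], by linarith [side 1 (Or.inl rfl) t x]⟩
  have bφ : ∀ t x, |φ t x| ≤ 2 * δ := fun t x => by
    have a1 := abs_le.1 (bE t x)
    have a2 := add_one_le_exp (φ t x)
    have a3 := add_one_le_exp (-φ t x)
    have a4 : exp (-φ t x) * exp (φ t x) = 1 := by rw [← exp_add]; simp
    have a5 := exp_pos (-φ t x)
    rw [abs_le]
    constructor
    · have : exp (-φ t x) ≤ 1 + 2 * δ := by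
        have : exp (-φ t x) * (1 - δ) ≤ 1 := by nlinarith [a1.1]
        by_contra hh
        push Not at hh
        nlinarith
      linarith
    · linarith [a1.2]
  refine ⟨nt, nx, ut, ux, fun t => deriv (φ t), fun t x => w (n t x), fx, fun t x => Gn w (n t x), ?_⟩
  refine ⟨hnt, hut, hnx, hux, hφ, hφx, hf, hg, cn, cu, cnt, cut, sec cnx, sec cux, sec cfxx, en, eu, hε, hε1,
    fun t x => (bn' t x).trans hδε, fun t x => h1 _ (bn' t x), fun t x => h2 _ (bn' t x),
    fun t x => (bφ t x).trans (by linarith), ⟨6 * δ, fun t x => ?_⟩, fun t => (L2n t).1, fun t => (L2u t).1,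
    fun t => (L2n t).2, fun t => (L2u t).2, le_max_right _ _, le_max_right _ _, hk⟩
  obtain ⟨ξ, hξ, e⟩ := exists_hasDerivAt_eq_slope (φ t) (deriv (φ t)) (by linarith : x < x + 1)
    (fun z _ => (hφ t z).continuousAt.continuousWithinAt) (fun z _ => hφ t z)
  have b1 : |deriv (φ t) x - deriv (φ t) ξ| ≤ 2 * δ * |x - ξ| := by
    have := convex_univ.norm_image_sub_le_of_norm_hasDerivWithin_le
      (f := deriv (φ t)) (f' := fun z => exp (φ t z) - 1 - n t z) (C := 2 * δ) (x := ξ) (y := x)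
      (fun z _ => (hφx t z).hasDerivWithinAt)
      (fun z _ => by
        rw [Real.norm_eq_abs]
        refine (abs_sub _ _).trans ?_
        linarith [bE t z, bn' t z]) (mem_univ _) (mem_univ _)
    simpa using this
  have b2 : |x - ξ| ≤ 1 := abs_le.2 ⟨by linarith [hξ.2], by linarith [hξ.1]⟩
  have b3 : |deriv (φ t) ξ| ≤ 4 * δ := by
    rw [e, add_sub_cancel_left, div_one]
    refine (abs_sub _ _).trans ?_
    linarith [bφ t x, bφ t (x + 1)]
  have b4 : deriv (φ t) x = (deriv (φ t) x - deriv (φ t) ξ) + deriv (φ t) ξ := by ring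
  rw [b4]
  refine (abs_add_le _ _).trans ?_
  nlinarith

lemma main {p w : ℝ → ℝ} (hp : IsPressure p) (hw : IsWFor p w) :
    ∃ δ : ℝ, 0 < δ ∧ ∃ A₀ : ℝ, 0 < A₀ ∧ ∃ C : ℝ, 0 < C ∧
      ∀ (n u φ : ℝ → ℝ → ℝ) (y : ℝ → ℝ),
        IsEPwSolution w n u φ →
        (⨆ t : ℝ, (eLpNorm (n t) 2 volume + eLpNorm (n t) ⊤ volume)) ≤ ENNReal.ofReal δ →
        ContDiff ℝ 1 y →
        (∃ c : ℝ, c < deriv p 1 / Real.sqrt (1 + deriv p 1) ∧ ∀ t : ℝ, |deriv y t| ≤ c) →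
        ∀ A : ℝ, A₀ ≤ A →
        ∀ Mu Mn : ℝ,
          (∀ t : ℝ, eLpNorm (u t) 2 volume ≤ ENNReal.ofReal Mu) →
          (∀ t : ℝ, eLpNorm (n t) 2 volume ≤ ENNReal.ofReal Mn) →
          (∫⁻ t : ℝ, ∫⁻ x : ℝ, ENNReal.ofReal
              (Real.exp (-2 * |x - y t| / A) * (n t x ^ 2 + u t x ^ 2)))
            ≤ ENNReal.ofReal (C * A * Mu * Mn) := by
  have hk : 0 < deriv p 1 := hp.deriv_pos 1 one_pos
  obtain ⟨c0, h0, Hc⟩ := coer (deriv p 1) hk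
  obtain ⟨ε, hε, hε1, hε2⟩ : ∃ ε : ℝ, 0 < ε ∧ ε ≤ 1 / 10 ∧ 600 * ε ≤ c0 / 4 :=
    ⟨min (1 / 10) (c0 / 2400), by positivity, min_le_left _ _, by
      have := min_le_right (1 / 10) (c0 / 2400); linarith⟩
  obtain ⟨δ, hδ, hδε, hδ1, h1, h2⟩ := smallw hp hw ε hε
  refine ⟨δ, hδ, max 4 (320 * (2 * deriv p 1 + 4) / c0), by positivity, 8 / c0, by positivity, ?_⟩
  intro n u φ y S hs hy ⟨c, hc, hyc⟩ A hA Mu Mn bu2 bn2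
  have hA4 : 4 ≤ A := (le_max_left _ _).trans hA
  have hA0 : 0 < A := by linarith
  have hA' : 80 * (2 * deriv p 1 + 4) / A ≤ c0 / 4 := by
    have := (le_max_right _ _).trans hA
    rw [div_le_iff₀ h0] at this
    rw [div_le_iff₀ hA0]
    linarith
  have bn : ∀ t, eLpNorm (n t) ⊤ volume ≤ ENNReal.ofReal δ := fun t =>
    le_add_self.trans ((le_iSup (fun t => eLpNorm (n t) 2 volume + eLpNorm (n t) ⊤ volume) t).trans hs)
  obtain ⟨nt, nx, ut, ux, φx, f, fx, g, D⟩ := mkDat hw hp ε δ Mn Mu hε hε1 hδ hδε hδ1 h1 h2 n u φ S bn bu2 bn2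
  obtain ⟨χ, χ', C1, h⟩ := exists_cut
  have := D.final y hy h A hA4 (8 / c0 * A * max Mu 0 * max Mn 0) fun T R0 hT hR0 =>
    D.step c0 _ h0 rfl y hy (fun t => (hyc t).trans hc.le) Hc h A hA4 hε2 hA' T R0 hT hR0
  refine this.trans ?_
  by_cases a : 0 ≤ Mu
  · by_cases b : 0 ≤ Mn
    · rw [max_eq_left a, max_eq_left b]
    · rw [max_eq_right (not_le.1 b).le]; simp
  · rw [max_eq_right (not_le.1 a).le]; simp

end VB

theorem virial_bound_slow
    (p w : ℝ → ℝ) (hp : IsPressure p) (hw : IsWFor p w)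
    (k : ℝ) (hk : k = deriv p 1) :
    ∃ δ : ℝ, 0 < δ ∧ ∃ A₀ : ℝ, 0 < A₀ ∧ ∃ C : ℝ, 0 < C ∧
      ∀ (n u φ : ℝ → ℝ → ℝ) (y : ℝ → ℝ),
        IsEPwSolution w n u φ →
        ConservesEnergy w n u φ →
        (⨆ t : ℝ, eLpNorm (u t) 2 volume) < ⊤ →
        (⨆ t : ℝ, (eLpNorm (n t) 2 volume + eLpNorm (n t) ⊤ volume)) ≤ ENNReal.ofReal δ →
        ContDiff ℝ 1 y →
        (∃ c : ℝ, c < k / Real.sqrt (1 + k) ∧ ∀ t : ℝ, |deriv y t| ≤ c) →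
        ∀ A : ℝ, A₀ ≤ A →
        ∀ Mu Mn : ℝ,
          (∀ t : ℝ, eLpNorm (u t) 2 volume ≤ ENNReal.ofReal Mu) →
          (∀ t : ℝ, eLpNorm (n t) 2 volume ≤ ENNReal.ofReal Mn) →
          (∫⁻ t : ℝ, ∫⁻ x : ℝ, ENNReal.ofReal
              (Real.exp (-2 * |x - y t| / A) * (n t x ^ 2 + u t x ^ 2)))
            ≤ ENNReal.ofReal (C * A * Mu * Mn) := by
  subst hk
  obtain ⟨δ, hδ, A₀, hA, C, hC, H⟩ := VB.main hp hw
  exact ⟨δ, hδ, A₀, hA, C, hC, fun n u φ y S _ _ hs hy hc A hAA Mu Mn b1 b2 =>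
    H n u φ y S hs hy hc A hAA Mu Mn b1 b2⟩
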